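/- Let Δ be a complete simplicial fan in ℝ^d (d ≥ 1). Then the ring A(Δ) of conewise polynomial functions on Δ is a free module over the ring A of polynomial functions on ℝ^d, and for every integer k ≥ 0 the real dimension of the degree-k component Ā(Δ)_k of Ā(Δ) = A(Δ)/m·A(Δ) equals the coefficient of t^k in Σ_{σ ∈ Δ} (t−1)^{d − dim σ}, the sum running over all cones of Δ including the zero cone. -/

import Mathlib

open Classical Polynomial

section ConeDefs

variable {V : Type*} [AddCommGroup V] [Module ℝ V]

/-- The polyhedral cone generated by a finite set of vectors: all nonnegative
linear combinations. -/
def coneHull (S : Finset V) : Set V :=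
  {x | ∃ c : V → ℝ, (∀ w, 0 ≤ c w) ∧ x = ∑ w ∈ S, c w • w}

/-- A polyhedral cone: the set of nonnegative combinations of finitely many
vectors. -/
def IsCone (σ : Set V) : Prop := ∃ S : Finset V, σ = coneHull S

/-- A pointed polyhedral cone: a polyhedral cone containing no line. -/
def IsPointedCone (σ : Set V) : Prop :=
  IsCone σ ∧ ∀ x ∈ σ, -x ∈ σ → x = 0

/-- Faces of a cone: the cone itself and the intersections with supporting
hyperplanes. -/
def IsConeFace (σ τ : Set V) : Prop :=
  τ = σ ∨ ∃ l : V →ₗ[ℝ] ℝ, (∀ y ∈ σ, l y ≤ 0) ∧ τ = {x | x ∈ σ ∧ l x = 0}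

end ConeDefs
section FanDefs

variable {V : Type*} [AddCommGroup V] [Module ℝ V]

/-- A fan: a finite collection of pointed polyhedral cones that is closed under
taking faces and in which the intersection of any two cones is a face of each. -/
def IsFan (Δ : Finset (Set V)) : Prop :=
  (∀ σ ∈ Δ, IsPointedCone σ) ∧
  (∀ σ ∈ Δ, ∀ τ : Set V, IsConeFace σ τ → τ ∈ Δ) ∧
  (∀ σ ∈ Δ, ∀ τ ∈ Δ, IsConeFace σ (σ ∩ τ) ∧ IsConeFace τ (σ ∩ τ))

/-- A complete fan: the union of its cones is the whole space. -/
def IsCompleteFan (Δ : Finset (Set V)) : Prop :=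
  IsFan Δ ∧ (⋃ σ ∈ Δ, σ) = Set.univ

/-- A simplicial fan: every cone is generated by linearly independent vectors. -/
def IsSimplicialFan (Δ : Finset (Set V)) : Prop :=
  IsFan Δ ∧ ∀ σ ∈ Δ, ∃ S : Finset V,
    LinearIndependent ℝ (fun x : (S : Set V) => (x : V)) ∧ σ = coneHull S

end FanDefs
section ConewiseDefs

/-- `A(Δ)_k`: the space of conewise polynomial functions on `Δ` that are
homogeneous of degree `k`, as a subspace of all functions `ℝ^d → ℝ`. -/
def conewisePoly (d : ℕ) (Δ : Finset (Set (Fin d → ℝ))) (k : ℕ) :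
    Submodule ℝ ((Fin d → ℝ) → ℝ) where
  carrier := {f | ∀ σ ∈ Δ, ∃ p : MvPolynomial (Fin d) ℝ,
    p.IsHomogeneous k ∧ ∀ x ∈ σ, f x = MvPolynomial.eval x p}
  add_mem' := by
    intro f g hf hg σ hσ
    obtain ⟨p, hp, hfp⟩ := hf σ hσ
    obtain ⟨q, hq, hgq⟩ := hg σ hσ
    refine ⟨p + q, hp.add hq, fun x hx => ?_⟩
    simp [hfp x hx, hgq x hx]
  zero_mem' := by
    intro σ hσ
    exact ⟨0, MvPolynomial.isHomogeneous_zero _ _ _, fun x hx => by simp⟩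
  smul_mem' := by
    intro c f hf σ hσ
    obtain ⟨p, hp, hfp⟩ := hf σ hσ
    refine ⟨MvPolynomial.C c * p, ?_, fun x hx => ?_⟩
    · simpa using (MvPolynomial.isHomogeneous_C (Fin d) c).mul hp
    · simp [hfp x hx]

/-- `(m·A(Δ))_k`: the degree-`k` part of `m·A(Δ)`, where `m ⊂ A` is the ideal of
the ring of global polynomial functions generated by the linear functions.  It
is spanned by the products of a global linear function with a conewise
polynomial function that is homogeneous of degree `k - 1`. -/
def mConewisePoly (d : ℕ) (Δ : Finset (Set (Fin d → ℝ))) :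
    ℕ → Submodule ℝ ((Fin d → ℝ) → ℝ)
  | 0 => ⊥
  | k + 1 => Submodule.span ℝ
      {h | ∃ (l : (Fin d → ℝ) →ₗ[ℝ] ℝ) (f : (Fin d → ℝ) → ℝ),
        f ∈ conewisePoly d Δ k ∧ h = fun x => l x * f x}

end ConewiseDefs

/-!
Encode the maximal cones by the set `K` of their generator sets; conewise polynomial functions
become families of polynomials indexed by `K` that agree on common faces.

*Freeness.* Fix a generic direction `v`. If the maximal cones can be ordered so that crossing any
wall against `v` leads to an earlier cone, then the squarefree monomials attached to the faces
`positiveGens v S`, one for each `S ∈ K`, form a basis which is triangular for this order. Such an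
order may fail to exist for `K`, but it exists after finitely many stellar subdivisions of edges:
these can be chosen so that no cone crosses a hyperplane spanned by a wall of `K`. Sweeping by these
hyperplanes takes care of the walls lying in them, and the walls created inside the cones of `K` are
ordered by the history of the subdivision. Recombining the values
`f_w`, `f_u` on the two halves of a subdivided cone into
`(β x_u f_w - α x_w f_u) / (β x_u - α x_w)` retracts the families on an edge subdivision onto those
on `K`. So `A(Δ)` is a direct summand of a free module, hence projective, and a finitely generated
graded projective module is free.

*Hilbert function.* The degree `k` part of `A(Δ)` has a basis of monomials of degree `k` supported
on cones of `K`. The intervals `[positiveGens v S, S]` partition the faces, so counting these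
monomials gives `dim Ā(Δ)_k = #{S ∈ K | #(positiveGens v S) = k}`. Summing `(t - 1) ^ (d - dim σ)`
over the intervals gives `∑ S ∈ K, t ^ (d - #(positiveGens v S))`, which is the same count for `-v`.
-/

section Bases

variable {V : Type*} [AddCommGroup V] [Module ℝ V] {S T : Finset V} {w z : V}

/-- A finite set of vectors which is a basis. The maximal cones of a complete simplicial fan are
encoded by such sets of generators. -/
structure IsBasisFinset (S : Finset V) : Prop where
  indep : LinearIndepOn ℝ id (S : Set V)
  span_eq_top : Submodule.span ℝ (S : Set V) = ⊤

/-- The coordinate form of `w` with respect to a linearly independent set `S ∋ w`. If `S` does not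
span, it is prolonged by an arbitrary extension of `S` to a basis; if `S` is linearly dependent or
`w ∉ S`, it is `0`. -/
noncomputable def coord (S : Finset V) (w : V) : V →ₗ[ℝ] ℝ :=
  if h : LinearIndepOn ℝ id (S : Set V) ∧ w ∈ S then
    (Module.Basis.extend h.1).coord ⟨w, h.1.subset_extend _ h.2⟩ else 0

lemma coord_of_notMem (hw : w ∉ S) : coord S w = 0 := dif_neg fun h => hw h.2

lemma coord_apply [DecidableEq V] (hS : LinearIndepOn ℝ id (S : Set V)) (hz : z ∈ S) (w : V) :
    coord S w z = if z = w then 1 else 0 := by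
  by_cases hw : w ∈ S
  swap
  · rw [coord_of_notMem hw, LinearMap.zero_apply, if_neg (ne_of_mem_of_not_mem hz hw)]
  have hzb : Module.Basis.extend hS ⟨z, hS.subset_extend (Set.subset_univ _) hz⟩ = z :=
    Module.Basis.extend_apply_self hS _
  rw [coord, dif_pos ⟨hS, hw⟩]
  conv_lhs => rw [← hzb, Module.Basis.coord_apply, Module.Basis.repr_self, Finsupp.single_apply]
  simp only [Subtype.mk.injEq]

lemma coord_self (hS : LinearIndepOn ℝ id (S : Set V)) (hw : w ∈ S) : coord S w w = 1 := by
  rw [coord_apply hS hw, if_pos rfl]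

lemma coord_of_ne (hS : LinearIndepOn ℝ id (S : Set V)) (hz : z ∈ S) (h : z ≠ w) :
    coord S w z = 0 := by
  rw [coord_apply hS hz, if_neg h]

lemma coord_sum_smul [DecidableEq V] (hS : LinearIndepOn ℝ id (S : Set V)) (hT : T ⊆ S)
    (c : V → ℝ) (w : V) : coord S w (∑ z ∈ T, c z • z) = if w ∈ T then c w else 0 := by
  rw [map_sum, ← Finset.sum_ite_eq' T w c]
  refine Finset.sum_congr rfl fun z hz => ?_
  rw [map_smul, coord_apply hS (hT hz)]
  split_ifs <;> simp

namespace IsBasisFinset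

lemma sum_coord_smul (hS : IsBasisFinset S) (x : V) : ∑ w ∈ S, coord S w x • w = x := by
  obtain ⟨c, -, rfl⟩ := Submodule.mem_span_finset.1
    (hS.span_eq_top ▸ Submodule.mem_top : x ∈ Submodule.span ℝ (S : Set V))
  refine Finset.sum_congr rfl fun w hw => ?_
  rw [coord_sum_smul hS.indep subset_rfl, if_pos hw]

lemma linearMap_ext {W : Type*} [AddCommGroup W] [Module ℝ W] (hS : IsBasisFinset S)
    {l l' : V →ₗ[ℝ] W} (h : ∀ w ∈ S, l w = l' w) : l = l' :=
  LinearMap.ext_on hS.span_eq_top h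

lemma card_eq_finrank (hS : IsBasisFinset S) : S.card = Module.finrank ℝ V := by
  rw [← finrank_span_finset_eq_card hS.indep, hS.span_eq_top, finrank_top]

lemma eq_of_subset (hS : IsBasisFinset S) (hT : IsBasisFinset T) (h : S ⊆ T) : S = T :=
  Finset.eq_of_subset_of_card_le h (by rw [hS.card_eq_finrank, hT.card_eq_finrank])

lemma mem_coneHull_iff (hS : IsBasisFinset S) {x : V} :
    x ∈ coneHull S ↔ ∀ w ∈ S, 0 ≤ coord S w x := by
  refine ⟨?_, fun h => ⟨fun w => if w ∈ S then coord S w x else 0, fun w => ?_, ?_⟩⟩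
  · rintro ⟨c, hc, rfl⟩ w hw
    rw [coord_sum_smul hS.indep subset_rfl, if_pos hw]
    exact hc w
  · dsimp only
    split_ifs with hw
    exacts [h w hw, le_rfl]
  · rw [← hS.sum_coord_smul x]
    exact Finset.sum_congr rfl fun w hw => by simp [hS.sum_coord_smul x, hw]

lemma exchange [DecidableEq V] (hS : IsBasisFinset S) {r : V} (hz : z ∈ S)
    (h : coord S z r ≠ 0) : IsBasisFinset (insert r (S.erase z)) := by
  have hSz : insert z (S.erase z : Set V) = S := by
    rw [← Finset.coe_insert, Finset.insert_erase hz]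
  have hr : r ∉ Submodule.span ℝ (S.erase z : Set V) := fun hr => h <| by
    obtain ⟨c, -, rfl⟩ := Submodule.mem_span_finset.1 hr
    simp [coord_sum_smul hS.indep (S.erase_subset z)]
  have hz' : z ∈ Submodule.span ℝ (insert r (S.erase z : Set V)) :=
    mem_span_insert_exchange (by rw [hSz, hS.span_eq_top]; trivial) hr
  constructor
  · rw [Finset.coe_insert]
    exact (hS.indep.mono (by simp)).insert (by simpa using hr)
  · rw [eq_top_iff, ← hS.span_eq_top, ← hSz, Finset.coe_insert, Submodule.span_le]
    exact Set.insert_subset hz' fun x hx => Submodule.subset_span (Set.mem_insert_of_mem _ hx)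

lemma coord_exchange [DecidableEq V] (hS : IsBasisFinset S) {r y : V} (hz : z ∈ S) (hr : r ∉ S)
    (h : coord S z r ≠ 0) (hy : y ≠ r) :
    coord S y = coord (insert r (S.erase z)) y + coord S y r • coord (insert r (S.erase z)) r := by
  have hS' := hS.exchange hz h
  have hrS' := Finset.mem_insert_self r (S.erase z)
  refine hS'.linearMap_ext fun t ht => ?_
  by_cases hyS : y ∈ S
  · rcases Finset.mem_insert.1 ht with rfl | ht'
    · by_cases hyz : y = z
      · simp [coord_self hS'.indep ht, coord_of_notMem (S := insert t (S.erase z)) (w := y)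
          (by simp [hyz, hyz ▸ hy])]
      · rw [LinearMap.add_apply, LinearMap.smul_apply, coord_self hS'.indep ht,
          coord_of_ne hS'.indep ht hy.symm]
        simp
    · have htr : t ≠ r := by rintro rfl; exact hr (Finset.mem_of_mem_erase ht')
      rw [LinearMap.add_apply, LinearMap.smul_apply, coord_of_ne hS'.indep ht htr, smul_zero,
        add_zero, coord_apply hS.indep (Finset.mem_of_mem_erase ht')]
      by_cases hyz : y = z
      · rw [coord_of_notMem (by simp [hyz, hyz ▸ hy]), if_neg (hyz ▸ Finset.ne_of_mem_erase ht')]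
        rfl
      · rw [coord_apply hS'.indep ht]
  · rw [coord_of_notMem hyS, coord_of_notMem (by simp [hyS, hy])]
    simp

end IsBasisFinset

end Bases

section SquarefreeMonomials

variable {σ : Type*}

/-- The exponent vector of the squarefree monomial `∏ w ∈ R, X w`. -/
noncomputable def squarefreeExp (R : Finset σ) : σ →₀ ℕ := Finsupp.indicator R fun _ _ => 1

lemma squarefreeExp_apply [DecidableEq σ] (R : Finset σ) (w : σ) :
    squarefreeExp R w = if w ∈ R then 1 else 0 := by
  simp [squarefreeExp, Finsupp.indicator_apply]

lemma support_squarefreeExp (R : Finset σ) : (squarefreeExp R).support = R := by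
  ext w
  simp [squarefreeExp_apply]

lemma squarefreeExp_le_iff {R : Finset σ} {m : σ →₀ ℕ} : squarefreeExp R ≤ m ↔ R ⊆ m.support := by
  refine ⟨fun h => support_squarefreeExp R ▸ Finsupp.support_mono h, fun h w => ?_⟩
  rw [squarefreeExp_apply]
  split_ifs with hw
  exacts [Nat.one_le_iff_ne_zero.2 (Finsupp.mem_support_iff.1 (h hw)), Nat.zero_le _]

lemma degree_squarefreeExp (R : Finset σ) : (squarefreeExp R).degree = R.card := by
  rw [Finsupp.degree_apply, support_squarefreeExp, Finset.card_eq_sum_ones]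
  exact Finset.sum_congr rfl fun w hw => by rw [squarefreeExp_apply, if_pos hw]

lemma monomial_squarefreeExp_dvd {k : Type*} [CommRing k] {R : Finset σ} {p : MvPolynomial σ k}
    (h : ∀ m, ¬ R ⊆ m.support → p.coeff m = 0) :
    MvPolynomial.monomial (squarefreeExp R) 1 ∣ p := by
  rw [MvPolynomial.monomial_one_dvd_iff_modMonomial_eq_zero]
  ext m
  rw [MvPolynomial.coeff_zero]
  by_cases hm : squarefreeExp R ≤ m
  · rw [MvPolynomial.coeff_modMonomial_of_le _ hm]
  · rw [MvPolynomial.coeff_modMonomial_of_not_le _ hm, h m (squarefreeExp_le_iff.not.1 hm)]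

end SquarefreeMonomials

section RestrictVars

variable {σ k : Type*} [CommRing k]

/-- The endomorphism of a polynomial ring which sets all variables outside `G` to `0`. -/
noncomputable def restrictVars (k : Type*) [CommRing k] (G : Finset σ) :
    MvPolynomial σ k →ₐ[k] MvPolynomial σ k :=
  MvPolynomial.aeval fun w => if w ∈ G then MvPolynomial.X w else 0

lemma restrictVars_monomial [DecidableEq σ] (G : Finset σ) (m : σ →₀ ℕ) (a : k) :
    restrictVars k G (MvPolynomial.monomial m a) =
      if m.support ⊆ G then MvPolynomial.monomial m a else 0 := by
  rw [restrictVars, MvPolynomial.aeval_monomial, Finsupp.prod]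
  split_ifs with h
  · rw [MvPolynomial.monomial_eq, Finsupp.prod, MvPolynomial.algebraMap_eq]
    congr 1
    exact Finset.prod_congr rfl fun w hw => by rw [if_pos (h hw)]
  · obtain ⟨w, hw, hwG⟩ := Finset.not_subset.1 h
    rw [Finset.prod_eq_zero hw, mul_zero]
    rw [if_neg hwG, zero_pow (Finsupp.mem_support_iff.1 hw)]

lemma coeff_restrictVars [DecidableEq σ] (G : Finset σ) (m : σ →₀ ℕ) (p : MvPolynomial σ k) :
    (restrictVars k G p).coeff m = if m.support ⊆ G then p.coeff m else 0 := by
  induction p using MvPolynomial.induction_on' with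
  | monomial n a =>
    rw [restrictVars_monomial]
    by_cases hnm : n = m
    · subst hnm
      split_ifs <;> simp
    · split_ifs <;> simp [MvPolynomial.coeff_monomial, hnm]
  | add p q hp hq =>
    rw [map_add, MvPolynomial.coeff_add, hp, hq, MvPolynomial.coeff_add]
    split_ifs <;> simp

end RestrictVars

section LinearForms

variable {ι : Type*} [Fintype ι]

/-- A linear form on `ℝ^ι` as a polynomial. -/
noncomputable def linearForm : ((ι → ℝ) →ₗ[ℝ] ℝ) →ₗ[ℝ] MvPolynomial ι ℝ where
  toFun l := ∑ i, l (Pi.single i 1) • MvPolynomial.X i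
  map_add' l l' := by simp [add_smul, Finset.sum_add_distrib]
  map_smul' a l := by simp [mul_smul, Finset.smul_sum]

lemma linearForm_apply (l : (ι → ℝ) →ₗ[ℝ] ℝ) :
    linearForm l = ∑ i, l (Pi.single i 1) • MvPolynomial.X i := rfl

lemma eval_linearForm (l : (ι → ℝ) →ₗ[ℝ] ℝ) (x : ι → ℝ) :
    MvPolynomial.eval x (linearForm l) = l x := by
  conv_rhs => rw [← Finset.univ_sum_single x, map_sum]
  rw [linearForm_apply, map_sum]
  refine Finset.sum_congr rfl fun i _ => ?_
  rw [MvPolynomial.smul_eval, MvPolynomial.eval_X, mul_comm, ← smul_eq_mul, ← map_smul,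
    ← Pi.single_smul, smul_eq_mul, mul_one]

lemma isHomogeneous_linearForm (l : (ι → ℝ) →ₗ[ℝ] ℝ) : (linearForm l).IsHomogeneous 1 :=
  MvPolynomial.IsHomogeneous.sum _ _ _ fun i _ => by
    rw [MvPolynomial.smul_eq_C_mul]
    exact MvPolynomial.isHomogeneous_C_mul_X _ i

end LinearForms

section GeneratorPullback

variable {ι : Type*} {G G' S : Finset (ι → ℝ)} {p q : MvPolynomial ι ℝ}

/-- Pullback of polynomial functions along `c ↦ ∑ w ∈ G, c w • w`. Two polynomials agree on the
cone generated by `G` (equivalently, on its span) if and only if they have the same pullback. -/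
noncomputable def genPullback (G : Finset (ι → ℝ)) :
    MvPolynomial ι ℝ →ₐ[ℝ] MvPolynomial (ι → ℝ) ℝ :=
  MvPolynomial.aeval fun i => ∑ w ∈ G, MvPolynomial.C (w i) * MvPolynomial.X w

lemma eval_genPullback (G : Finset (ι → ℝ)) (c : (ι → ℝ) → ℝ) (p : MvPolynomial ι ℝ) :
    MvPolynomial.eval c (genPullback G p) = MvPolynomial.eval (∑ w ∈ G, c w • w) p := by
  have : (MvPolynomial.aeval c).comp (genPullback G) =
      (MvPolynomial.aeval (∑ w ∈ G, c w • w) : MvPolynomial ι ℝ →ₐ[ℝ] ℝ) :=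
    MvPolynomial.algHom_ext fun i => by simp [genPullback, mul_comm]
  simpa [MvPolynomial.aeval_eq_eval] using DFunLike.congr_fun this p

lemma genPullback_eq_of_eqOn_coneHull
    (h : ∀ x ∈ coneHull G, MvPolynomial.eval x p = MvPolynomial.eval x q) :
    genPullback G p = genPullback G q :=
  MvPolynomial.funext_set (fun _ => Set.Ici (0 : ℝ)) (fun _ => Set.Ici_infinite 0)
    fun c hc => by
      rw [eval_genPullback, eval_genPullback]
      exact h _ ⟨c, fun w => hc w (Set.mem_univ _), rfl⟩

lemma eval_eq_of_genPullback_eq (h : genPullback G p = genPullback G q) {x : ι → ℝ}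
    (hx : x ∈ Submodule.span ℝ (G : Set (ι → ℝ))) :
    MvPolynomial.eval x p = MvPolynomial.eval x q := by
  obtain ⟨c, -, rfl⟩ := Submodule.mem_span_finset.1 hx
  rw [← eval_genPullback, ← eval_genPullback, h]

lemma coneHull_subset_span {V : Type*} [AddCommGroup V] [Module ℝ V] (S : Finset V) :
    coneHull S ⊆ Submodule.span ℝ (S : Set V) := by
  rintro x ⟨c, -, rfl⟩
  exact Submodule.sum_mem _ fun w hw => Submodule.smul_mem _ _ (Submodule.subset_span hw)

lemma genPullback_eq_of_subset_span (hG : (G : Set (ι → ℝ)) ⊆ Submodule.span ℝ (G' : Set (ι → ℝ)))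
    (h : genPullback G' p = genPullback G' q) : genPullback G p = genPullback G q :=
  genPullback_eq_of_eqOn_coneHull fun _ hx =>
    eval_eq_of_genPullback_eq h (Submodule.span_le.2 hG (coneHull_subset_span G hx))

lemma genPullback_eq_of_subset (hG : G ⊆ G') (h : genPullback G' p = genPullback G' q) :
    genPullback G p = genPullback G q :=
  genPullback_eq_of_subset_span (fun _ hw => Submodule.subset_span (hG hw)) h

lemma restrictVars_genPullback (h : G ⊆ S) (p : MvPolynomial ι ℝ) :
    restrictVars ℝ G (genPullback S p) = genPullback G p := by
  have : (restrictVars ℝ G).comp (genPullback S) = genPullback G := by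
    refine MvPolynomial.algHom_ext fun i => ?_
    simp only [genPullback, restrictVars, AlgHom.comp_apply, MvPolynomial.aeval_X, map_sum,
      map_mul, MvPolynomial.algHom_C, MvPolynomial.algebraMap_eq, mul_ite, mul_zero]
    rw [← Finset.sum_filter, Finset.filter_mem_eq_inter, Finset.inter_eq_right.2 h]
  exact DFunLike.congr_fun this p

lemma coeff_genPullback_of_subset (h : G ⊆ S) (p : MvPolynomial ι ℝ) {m : (ι → ℝ) →₀ ℕ}
    (hm : m.support ⊆ G) : (genPullback G p).coeff m = (genPullback S p).coeff m := by
  rw [← restrictVars_genPullback h, coeff_restrictVars, if_pos hm]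

lemma coeff_genPullback_of_not_subset (p : MvPolynomial ι ℝ) {m : (ι → ℝ) →₀ ℕ}
    (hm : ¬ m.support ⊆ S) : (genPullback S p).coeff m = 0 := by
  rw [← restrictVars_genPullback (subset_refl S), coeff_restrictVars, if_neg hm]

lemma isHomogeneous_genPullback (G : Finset (ι → ℝ)) {k : ℕ} (hp : p.IsHomogeneous k) :
    (genPullback G p).IsHomogeneous k := by
  have h := hp.aeval (fun i => ∑ w ∈ G, MvPolynomial.C (w i) * MvPolynomial.X w) (n := 1)
    fun i => MvPolynomial.IsHomogeneous.sum _ _ _ fun w _ => MvPolynomial.isHomogeneous_C_mul_X _ w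
  rwa [one_mul] at h

lemma homogeneousComponent_genPullback (G : Finset (ι → ℝ)) (p : MvPolynomial ι ℝ) (k : ℕ) :
    MvPolynomial.homogeneousComponent k (genPullback G p) =
      genPullback G (MvPolynomial.homogeneousComponent k p) := by
  conv_lhs => rw [← MvPolynomial.sum_homogeneousComponent p, map_sum, map_sum]
  rw [Finset.sum_congr rfl fun i _ => MvPolynomial.homogeneousComponent_of_mem
    (isHomogeneous_genPullback G (MvPolynomial.homogeneousComponent_isHomogeneous i p)),
    Finset.sum_ite_eq]
  split_ifs with hk
  · rfl
  · rw [MvPolynomial.homogeneousComponent_eq_zero _ _ (by simpa using hk), map_zero]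

end GeneratorPullback

section CoordinateSubstitution

variable {ι : Type*} [Fintype ι] {G S : Finset (ι → ℝ)}

lemma genPullback_linearForm (G : Finset (ι → ℝ)) (l : (ι → ℝ) →ₗ[ℝ] ℝ) :
    genPullback G (linearForm l) = ∑ w ∈ G, l w • MvPolynomial.X w :=
  MvPolynomial.funext fun c => by simp [eval_genPullback, eval_linearForm, mul_comm]

lemma genPullback_linearForm_coord (hS : LinearIndepOn ℝ id (S : Set (ι → ℝ))) (hG : G ⊆ S)
    (z : ι → ℝ) :
    genPullback G (linearForm (coord S z)) = if z ∈ G then MvPolynomial.X z else 0 := by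
  rw [genPullback_linearForm, ← Finset.sum_ite_eq' G z]
  refine Finset.sum_congr rfl fun y hy => ?_
  rw [coord_apply hS (hG hy)]
  split_ifs <;> simp

/-- Substitution of the coordinate forms of `S` for the variables; when `S` is a basis this inverts
`genPullback S`. -/
noncomputable def coordSubst (S : Finset (ι → ℝ)) :
    MvPolynomial (ι → ℝ) ℝ →ₐ[ℝ] MvPolynomial ι ℝ :=
  MvPolynomial.aeval fun w => linearForm (coord S w)

lemma coordSubst_genPullback (hS : IsBasisFinset S) (p : MvPolynomial ι ℝ) :
    coordSubst S (genPullback S p) = p := by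
  have : (coordSubst S).comp (genPullback S) = AlgHom.id ℝ _ := by
    refine MvPolynomial.algHom_ext fun i => MvPolynomial.funext fun x => ?_
    conv_rhs => rw [AlgHom.id_apply, MvPolynomial.eval_X, ← hS.sum_coord_smul x]
    simp [genPullback, coordSubst, eval_linearForm, mul_comm]
  exact DFunLike.congr_fun this p

lemma genPullback_injective (hS : IsBasisFinset S) : Function.Injective (genPullback S) :=
  Function.LeftInverse.injective (coordSubst_genPullback hS)

lemma genPullback_coordSubst (hS : LinearIndepOn ℝ id (S : Set (ι → ℝ))) (hG : G ⊆ S)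
    (q : MvPolynomial (ι → ℝ) ℝ) : genPullback G (coordSubst S q) = restrictVars ℝ G q := by
  have : (genPullback G).comp (coordSubst S) = restrictVars ℝ G :=
    MvPolynomial.algHom_ext fun w => by
      simp [coordSubst, restrictVars, genPullback_linearForm_coord hS hG]
  exact DFunLike.congr_fun this q

lemma isHomogeneous_coordSubst (S : Finset (ι → ℝ)) {q : MvPolynomial (ι → ℝ) ℝ} {k : ℕ}
    (hq : q.IsHomogeneous k) : (coordSubst S q).IsHomogeneous k := by
  have h := hq.aeval (fun w => linearForm (coord S w)) (n := 1)
    fun w => isHomogeneous_linearForm _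
  rwa [one_mul] at h

/-- The monomial with exponent vector `m` in the coordinate forms of `S`. -/
noncomputable def coordMonomial (S : Finset (ι → ℝ)) (m : (ι → ℝ) →₀ ℕ) : MvPolynomial ι ℝ :=
  coordSubst S (MvPolynomial.monomial m 1)

lemma genPullback_coordMonomial (hS : LinearIndepOn ℝ id (S : Set (ι → ℝ))) (hG : G ⊆ S)
    (m : (ι → ℝ) →₀ ℕ) : genPullback G (coordMonomial S m) =
      if m.support ⊆ G then MvPolynomial.monomial m 1 else 0 := by
  rw [coordMonomial, genPullback_coordSubst hS hG, restrictVars_monomial]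

lemma coordMonomial_ne_zero (hS : LinearIndepOn ℝ id (S : Set (ι → ℝ))) {m : (ι → ℝ) →₀ ℕ}
    (hm : m.support ⊆ S) : coordMonomial S m ≠ 0 := fun h => by
  have h' := genPullback_coordMonomial hS subset_rfl m
  rw [h, map_zero, if_pos hm] at h'
  exact one_ne_zero (MvPolynomial.monomial_eq_zero.1 h'.symm)

lemma coordMonomial_squarefreeExp_dvd (hS : IsBasisFinset S) {R : Finset (ι → ℝ)}
    {p : MvPolynomial ι ℝ} (h : ∀ ρ ∈ R, genPullback (S.erase ρ) p = 0) :
    coordMonomial S (squarefreeExp R) ∣ p := by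
  rw [← coordSubst_genPullback hS p]
  refine map_dvd (coordSubst S) (monomial_squarefreeExp_dvd fun m hm => ?_)
  by_cases hmS : m.support ⊆ S
  · obtain ⟨ρ, hρ, hmρ⟩ := Finset.not_subset.1 hm
    rw [← coeff_genPullback_of_subset (S.erase_subset ρ) p (Finset.subset_erase.2 ⟨hmS, hmρ⟩),
      h ρ hρ, MvPolynomial.coeff_zero]
  · exact coeff_genPullback_of_not_subset p hmS

lemma linearForm_coord_dvd (hS : IsBasisFinset S) {ρ : ι → ℝ} {p : MvPolynomial ι ℝ}
    (h : genPullback (S.erase ρ) p = 0) : linearForm (coord S ρ) ∣ p := by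
  have hexp : squarefreeExp {ρ} = Finsupp.single ρ 1 := by
    ext w
    simp [squarefreeExp_apply, Finsupp.single_apply, eq_comm]
  have hmon : coordMonomial S (squarefreeExp {ρ}) = linearForm (coord S ρ) := by
    rw [hexp, coordMonomial, coordSubst, MvPolynomial.aeval_monomial]
    simp
  exact hmon ▸ coordMonomial_squarefreeExp_dvd hS (by simpa using h)

end CoordinateSubstitution

section EdgeSubdivision

variable {V : Type*} [DecidableEq V] {K : Finset (Finset V)} {S S' : Finset V} {u w r z : V}

/-- The stellar subdivision of `K` at a new ray `r` in the edge `{u, w}`: every `S ∈ K` containing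
the edge is replaced by the two sets obtained by exchanging `w`, respectively `u`, for `r`. -/
def edgeSubdivision (K : Finset (Finset V)) (u w r : V) : Finset (Finset V) :=
  {S ∈ K | ¬ (u ∈ S ∧ w ∈ S)} ∪
    (({S ∈ K | u ∈ S ∧ w ∈ S}.image fun S => insert r (S.erase w)) ∪
      {S ∈ K | u ∈ S ∧ w ∈ S}.image fun S => insert r (S.erase u))

/-- The cone of `K` which contains the cone `S'` of `edgeSubdivision K u w r`. -/
def parentCone (u w r : V) (S' : Finset V) : Finset V :=
  if r ∈ S' then insert u (insert w (S'.erase r)) else S'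

lemma mem_edgeSubdivision : S' ∈ edgeSubdivision K u w r ↔
    (S' ∈ K ∧ ¬ (u ∈ S' ∧ w ∈ S')) ∨
    (∃ S ∈ K, (u ∈ S ∧ w ∈ S) ∧ insert r (S.erase w) = S') ∨
    (∃ S ∈ K, (u ∈ S ∧ w ∈ S) ∧ insert r (S.erase u) = S') := by
  simp only [edgeSubdivision, Finset.mem_union, Finset.mem_filter, Finset.mem_image, and_assoc]

lemma edgeSubdivision_comm (K : Finset (Finset V)) (u w r : V) :
    edgeSubdivision K u w r = edgeSubdivision K w u r := by
  ext S
  simp only [mem_edgeSubdivision, and_comm (a := u ∈ _)]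
  exact or_congr_right or_comm

lemma insert_erase_right_mem_edgeSubdivision (hS : S ∈ K) (hu : u ∈ S) (hw : w ∈ S) :
    insert r (S.erase w) ∈ edgeSubdivision K u w r :=
  mem_edgeSubdivision.2 (Or.inr (Or.inl ⟨S, hS, ⟨hu, hw⟩, rfl⟩))

lemma insert_erase_left_mem_edgeSubdivision (hS : S ∈ K) (hu : u ∈ S) (hw : w ∈ S) :
    insert r (S.erase u) ∈ edgeSubdivision K u w r :=
  mem_edgeSubdivision.2 (Or.inr (Or.inr ⟨S, hS, ⟨hu, hw⟩, rfl⟩))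

lemma parentCone_comm (u w r : V) (S' : Finset V) : parentCone u w r S' = parentCone w u r S' := by
  rw [parentCone, parentCone, Finset.insert_comm]

lemma parentCone_of_notMem (h : r ∉ S') : parentCone u w r S' = S' := if_neg h

lemma parentCone_insert_erase_right (hu : u ∈ S) (hw : w ∈ S) (hr : r ∉ S) :
    parentCone u w r (insert r (S.erase w)) = S := by
  rw [parentCone, if_pos (Finset.mem_insert_self _ _),
    Finset.erase_insert fun h => hr (Finset.mem_of_mem_erase h), Finset.insert_erase hw,
    Finset.insert_eq_self.2 hu]

lemma parentCone_insert_erase_left (hu : u ∈ S) (hw : w ∈ S) (hr : r ∉ S) :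
    parentCone u w r (insert r (S.erase u)) = S := by
  rw [parentCone_comm, parentCone_insert_erase_right hw hu hr]

lemma mem_parentCone (hz : z ∈ S') (hzr : z ≠ r) : z ∈ parentCone u w r S' := by
  rw [parentCone]
  split_ifs
  exacts [by simp [hz, hzr], hz]

lemma left_mem_parentCone (hr : r ∈ S') : u ∈ parentCone u w r S' := by
  simp [parentCone, hr]

lemma right_mem_parentCone (hr : r ∈ S') : w ∈ parentCone u w r S' := by
  simp [parentCone, hr]

end EdgeSubdivision

section EdgeSplitting

variable {V : Type*} [AddCommGroup V] [Module ℝ V] {K : Finset (Finset V)} {S S' : Finset V}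
  {u w r z : V} {α β : ℝ}

/-- `r = α • u + β • w` is a new ray in the relative interior of the cone spanned by an edge
`{u, w}` of the collection `K` of generator sets. -/
structure IsEdgeSplitting (K : Finset (Finset V)) (u w r : V) (α β : ℝ) : Prop where
  pos_left : 0 < α
  pos_right : 0 < β
  eq_add : r = α • u + β • w
  ne : u ≠ w
  isBasis : ∀ S ∈ K, IsBasisFinset S
  notMem : ∀ S ∈ K, r ∉ S
  exists_mem : ∃ S ∈ K, u ∈ S ∧ w ∈ S

namespace IsEdgeSplitting

lemma symm (h : IsEdgeSplitting K u w r α β) : IsEdgeSplitting K w u r β α where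
  pos_left := h.pos_right
  pos_right := h.pos_left
  eq_add := by rw [h.eq_add, add_comm]
  ne := h.ne.symm
  isBasis := h.isBasis
  notMem := h.notMem
  exists_mem := h.exists_mem.imp fun _ h => ⟨h.1, h.2.2, h.2.1⟩

lemma ne_left (h : IsEdgeSplitting K u w r α β) : r ≠ u := by
  obtain ⟨S, hS, hu, -⟩ := h.exists_mem
  rintro rfl
  exact h.notMem S hS hu

lemma ne_right (h : IsEdgeSplitting K u w r α β) : r ≠ w := h.symm.ne_left

lemma coord_left (h : IsEdgeSplitting K u w r α β) (hS : S ∈ K) (hu : u ∈ S) (hw : w ∈ S) :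
    coord S u r = α := by
  have hb := (h.isBasis S hS).indep
  rw [h.eq_add, map_add, map_smul, map_smul, coord_self hb hu, coord_of_ne hb hw h.ne.symm]
  simp

lemma coord_of_ne (h : IsEdgeSplitting K u w r α β) (hS : S ∈ K) (hu : u ∈ S) (hw : w ∈ S)
    (hzu : z ≠ u) (hzw : z ≠ w) : coord S z r = 0 := by
  by_cases hz : z ∈ S
  · have hb := (h.isBasis S hS).indep
    rw [h.eq_add, map_add, map_smul, map_smul, _root_.coord_of_ne hb hu hzu.symm,
      _root_.coord_of_ne hb hw hzw.symm]
    simp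
  · rw [coord_of_notMem hz, LinearMap.zero_apply]

variable [DecidableEq V]

lemma parentCone_mem (h : IsEdgeSplitting K u w r α β) (hS' : S' ∈ edgeSubdivision K u w r) :
    parentCone u w r S' ∈ K := by
  rcases mem_edgeSubdivision.1 hS' with ⟨hS, -⟩ | ⟨S, hS, ⟨hu, hw⟩, rfl⟩ | ⟨S, hS, ⟨hu, hw⟩, rfl⟩
  · rwa [parentCone_of_notMem (h.notMem _ hS)]
  · rwa [parentCone_insert_erase_right hu hw (h.notMem S hS)]
  · rwa [parentCone_insert_erase_left hu hw (h.notMem S hS)]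

lemma not_left_and_right_mem (h : IsEdgeSplitting K u w r α β)
    (hS' : S' ∈ edgeSubdivision K u w r) : ¬ (u ∈ S' ∧ w ∈ S') := by
  rcases mem_edgeSubdivision.1 hS' with ⟨-, huw⟩ | ⟨S, -, -, rfl⟩ | ⟨S, -, -, rfl⟩
  · exact huw
  · simp [h.ne_right.symm]
  · simp [h.ne_left.symm]

lemma isBasis_of_mem_edgeSubdivision (h : IsEdgeSplitting K u w r α β)
    (hS' : S' ∈ edgeSubdivision K u w r) : IsBasisFinset S' := by
  rcases mem_edgeSubdivision.1 hS' with ⟨hS, -⟩ | ⟨S, hS, ⟨hu, hw⟩, rfl⟩ | ⟨S, hS, ⟨hu, hw⟩, rfl⟩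
  · exact h.isBasis _ hS
  · exact (h.isBasis S hS).exchange hw (by rw [h.symm.coord_left hS hw hu]; exact h.pos_right.ne')
  · exact (h.isBasis S hS).exchange hu (by rw [h.coord_left hS hu hw]; exact h.pos_left.ne')

lemma coord_parentCone (h : IsEdgeSplitting K u w r α β) (hS' : S' ∈ edgeSubdivision K u w r)
    (hz : z ≠ r) : coord (parentCone u w r S') z =
      coord S' z + coord (parentCone u w r S') z r • coord S' r := by
  rcases mem_edgeSubdivision.1 hS' with ⟨hS, -⟩ | ⟨S, hS, ⟨hu, hw⟩, rfl⟩ | ⟨S, hS, ⟨hu, hw⟩, rfl⟩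
  · rw [parentCone_of_notMem (h.notMem _ hS), coord_of_notMem (h.notMem _ hS), smul_zero, add_zero]
  · rw [parentCone_insert_erase_right hu hw (h.notMem S hS)]
    exact (h.isBasis S hS).coord_exchange hw (h.notMem S hS)
      (by rw [h.symm.coord_left hS hw hu]; exact h.pos_right.ne') hz
  · rw [parentCone_insert_erase_left hu hw (h.notMem S hS)]
    exact (h.isBasis S hS).coord_exchange hu (h.notMem S hS)
      (by rw [h.coord_left hS hu hw]; exact h.pos_left.ne') hz

lemma coord_parentCone_left (h : IsEdgeSplitting K u w r α β)
    (hS' : S' ∈ edgeSubdivision K u w r) :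
    coord (parentCone u w r S') u = coord S' u + α • coord S' r := by
  rw [h.coord_parentCone hS' h.ne_left.symm]
  by_cases hr : r ∈ S'
  · rw [h.coord_left (h.parentCone_mem hS') (left_mem_parentCone hr) (right_mem_parentCone hr)]
  · rw [coord_of_notMem hr, smul_zero, smul_zero]

lemma coord_parentCone_right (h : IsEdgeSplitting K u w r α β)
    (hS' : S' ∈ edgeSubdivision K u w r) :
    coord (parentCone u w r S') w = coord S' w + β • coord S' r := by
  rw [parentCone_comm]
  exact h.symm.coord_parentCone_left (edgeSubdivision_comm K u w r ▸ hS')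

lemma coord_parentCone_of_ne (h : IsEdgeSplitting K u w r α β)
    (hS' : S' ∈ edgeSubdivision K u w r) (hzu : z ≠ u) (hzw : z ≠ w) (hzr : z ≠ r) :
    coord (parentCone u w r S') z = coord S' z := by
  rw [h.coord_parentCone hS' hzr]
  by_cases hr : r ∈ S'
  · rw [h.coord_of_ne (h.parentCone_mem hS') (left_mem_parentCone hr) (right_mem_parentCone hr)
      hzu hzw, zero_smul, add_zero]
  · rw [coord_of_notMem hr, smul_zero, add_zero]

lemma subset_span_parentCone_inter (h : IsEdgeSplitting K u w r α β) (S' T' : Finset V) :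
    ((S' ∩ T' : Finset V) : Set V) ⊆ Submodule.span ℝ
      ((parentCone u w r S' ∩ parentCone u w r T' : Finset V) : Set V) := by
  intro z hz
  obtain ⟨hzS, hzT⟩ := Finset.mem_inter.1 (Finset.mem_coe.1 hz)
  by_cases hzr : z = r
  · rw [hzr] at hzS hzT
    have hu : u ∈ parentCone u w r S' ∩ parentCone u w r T' :=
      Finset.mem_inter.2 ⟨left_mem_parentCone hzS, left_mem_parentCone hzT⟩
    have hw : w ∈ parentCone u w r S' ∩ parentCone u w r T' :=
      Finset.mem_inter.2 ⟨right_mem_parentCone hzS, right_mem_parentCone hzT⟩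
    rw [hzr.trans h.eq_add]
    exact Submodule.add_mem _ (Submodule.smul_mem _ _ (Submodule.subset_span hu))
      (Submodule.smul_mem _ _ (Submodule.subset_span hw))
  · exact Submodule.subset_span
      (Finset.mem_inter.2 ⟨mem_parentCone hzS hzr, mem_parentCone hzT hzr⟩)

lemma inter_subset_span_exchange (h : IsEdgeSplitting K u w r α β) {T : Finset V} (hS : u ∈ S)
    (hT : u ∈ T) : ((S ∩ T : Finset V) : Set V) ⊆ Submodule.span ℝ
      ((insert r (S.erase w) ∩ insert r (T.erase w) : Finset V) : Set V) := by
  intro z hz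
  obtain ⟨hzS, hzT⟩ := Finset.mem_inter.1 (Finset.mem_coe.1 hz)
  by_cases hzw : z = w
  · have hz_eq : z = β⁻¹ • (r - α • u) := by
      rw [h.eq_add, hzw, add_sub_cancel_left, inv_smul_smul₀ h.pos_right.ne']
    rw [hz_eq]
    refine Submodule.smul_mem _ _ (Submodule.sub_mem _ (Submodule.subset_span ?_)
      (Submodule.smul_mem _ _ (Submodule.subset_span ?_)))
    · simp
    · simp [hS, hT, h.ne]
  · exact Submodule.subset_span (by simp [hzS, hzT, hzw])

end IsEdgeSplitting

/-- The linear form which separates the two halves of a cone `S ∋ u, w` subdivided at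
`r = α • u + β • w`: it vanishes at `r` and at all generators other than `u` and `w`. -/
noncomputable def splitForm (u w : V) (α β : ℝ) (S : Finset V) : V →ₗ[ℝ] ℝ :=
  β • coord S u - α • coord S w

lemma IsEdgeSplitting.splitForm_eq [DecidableEq V] (h : IsEdgeSplitting K u w r α β) (hS : S ∈ K)
    (hu : u ∈ S) (hw : w ∈ S) :
    splitForm u w α β S = β • coord (insert r (S.erase w)) u := by
  have hS' := insert_erase_right_mem_edgeSubdivision (r := r) hS hu hw
  have hleft := h.coord_parentCone_left hS'
  have hright := h.coord_parentCone_right hS'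
  rw [parentCone_insert_erase_right hu hw (h.notMem S hS)] at hleft hright
  have hw' : w ∉ insert r (S.erase w) := by simp [h.ne_right.symm]
  rw [coord_of_notMem hw', zero_add] at hright
  rw [splitForm, hleft, hright, smul_add, smul_comm α β, add_sub_cancel_right]

end EdgeSplitting

section CompatibleFamilies

variable {ι : Type*} [Fintype ι] {K : Finset (Finset (ι → ℝ))}

/-- Families of polynomials indexed by the cones of `K` which agree on common faces, extended by
`0` outside `K`; this models conewise polynomial functions. -/
noncomputable def compatibleFamilies (K : Finset (Finset (ι → ℝ))) :
    Submodule (MvPolynomial ι ℝ) (Finset (ι → ℝ) → MvPolynomial ι ℝ) where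
  carrier := {f | (∀ S ∉ K, f S = 0) ∧
    ∀ S ∈ K, ∀ T ∈ K, genPullback (S ∩ T) (f S) = genPullback (S ∩ T) (f T)}
  add_mem' := fun {f g} hf hg => ⟨fun S hS => by simp [hf.1 S hS, hg.1 S hS],
    fun S hS T hT => by simp [hf.2 S hS T hT, hg.2 S hS T hT]⟩
  zero_mem' := by simp
  smul_mem' := fun a f hf => ⟨fun S hS => by simp [hf.1 S hS],
    fun S hS T hT => by simp [hf.2 S hS T hT]⟩

lemma compatibleFamilies_ext {f g : Finset (ι → ℝ) → MvPolynomial ι ℝ}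
    (hf : f ∈ compatibleFamilies K) (hg : g ∈ compatibleFamilies K) (h : ∀ S ∈ K, f S = g S) :
    f = g := by
  funext S
  by_cases hS : S ∈ K
  · exact h S hS
  · rw [hf.1 S hS, hg.1 S hS]

end CompatibleFamilies

section EdgeMerge

variable {ι : Type*} [Fintype ι] {K : Finset (Finset (ι → ℝ))} {S T G : Finset (ι → ℝ)}
  {u w r : ι → ℝ} {α β : ℝ} {f g : Finset (ι → ℝ) → MvPolynomial ι ℝ} {p q : MvPolynomial ι ℝ}

lemma genPullback_linearForm_splitForm (hS : LinearIndepOn ℝ id (S : Set (ι → ℝ))) (hG : G ⊆ S) :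
    genPullback G (linearForm (splitForm u w α β S)) =
      β • (if u ∈ G then MvPolynomial.X u else 0) -
        α • (if w ∈ G then MvPolynomial.X w else 0) := by
  simp only [splitForm, map_sub, map_smul, genPullback_linearForm_coord hS hG]

lemma genPullback_linearForm_splitForm_ne_zero (hS : LinearIndepOn ℝ id (S : Set (ι → ℝ)))
    (hG : G ⊆ S) (hu : u ∈ G) (huw : u ≠ w) (hβ : β ≠ 0) :
    genPullback G (linearForm (splitForm u w α β S)) ≠ 0 := fun h => by
  have h_eval := congrArg (MvPolynomial.eval (Pi.single u 1)) h
  rw [genPullback_linearForm_splitForm hS hG, if_pos hu] at h_eval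
  split_ifs at h_eval <;> simp [huw.symm, hβ] at h_eval

/-- Recombination of the values of a family `f` on the two halves of a subdivided cone `S` into a
single polynomial: `p` is the quotient of `β x_u f_w - α x_w f_u` by the splitting form
`β x_u - α x_w`, where `f_w` and `f_u` are the values of `f` on the halves omitting `w` and `u`. -/
def IsEdgeMerge (u w r : ι → ℝ) (α β : ℝ) (f : Finset (ι → ℝ) → MvPolynomial ι ℝ)
    (S : Finset (ι → ℝ)) (p : MvPolynomial ι ℝ) : Prop :=
  linearForm (splitForm u w α β S) * p =
    linearForm (β • coord S u) * f (insert r (S.erase w)) -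
      linearForm (α • coord S w) * f (insert r (S.erase u))

namespace IsEdgeMerge

lemma symm (h : IsEdgeMerge u w r α β f S p) : IsEdgeMerge w u r β α f S p := by
  simp only [IsEdgeMerge, splitForm, map_sub] at h ⊢
  linear_combination -h

lemma of_eq (hw : f (insert r (S.erase w)) = p) (hu : f (insert r (S.erase u)) = p) :
    IsEdgeMerge u w r α β f S p := by
  rw [IsEdgeMerge, hw, hu, splitForm, map_sub, sub_mul]

lemma add (hf : IsEdgeMerge u w r α β f S p) (hg : IsEdgeMerge u w r α β g S q) :
    IsEdgeMerge u w r α β (f + g) S (p + q) := by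
  rw [IsEdgeMerge] at *
  rw [mul_add, hf, hg, Pi.add_apply, Pi.add_apply]
  ring

lemma smul (a : MvPolynomial ι ℝ) (hf : IsEdgeMerge u w r α β f S p) :
    IsEdgeMerge u w r α β (a • f) S (a • p) := by
  rw [IsEdgeMerge] at *
  rw [mul_smul_comm, hf, Pi.smul_apply, Pi.smul_apply, mul_smul_comm, mul_smul_comm, smul_sub]

lemma genPullback_eq (hp : IsEdgeMerge u w r α β f S p)
    (hS : LinearIndepOn ℝ id (S : Set (ι → ℝ))) (hu : u ∈ S) (huw : u ≠ w) (hβ : β ≠ 0)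
    (hG : G ⊆ S.erase w) :
    genPullback G p = genPullback G (f (insert r (S.erase w))) := by
  refine genPullback_eq_of_subset hG ?_
  have hpull := congrArg (genPullback (S.erase w)) hp
  simp only [map_mul, map_sub, map_smul, splitForm,
    genPullback_linearForm_coord hS (S.erase_subset w), Finset.mem_erase_of_ne_of_mem huw hu,
    Finset.notMem_erase, if_true, if_false, smul_zero, zero_mul, sub_zero] at hpull
  exact mul_left_cancel₀ (smul_ne_zero hβ (MvPolynomial.X_ne_zero u)) hpull

end IsEdgeMerge

namespace IsEdgeSplitting

lemma isEdgeMerge_unique (h : IsEdgeSplitting K u w r α β) (hS : S ∈ K) (hu : u ∈ S)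
    (hp : IsEdgeMerge u w r α β f S p) (hq : IsEdgeMerge u w r α β f S q) : p = q := by
  have hne : linearForm (splitForm u w α β S) ≠ 0 := fun h0 =>
    genPullback_linearForm_splitForm_ne_zero (α := α) (h.isBasis S hS).indep subset_rfl hu h.ne
      h.pos_right.ne' (by rw [h0, map_zero])
  exact mul_left_cancel₀ hne (hp.trans (Eq.symm hq))

lemma exists_isEdgeMerge (h : IsEdgeSplitting K u w r α β)
    (hf : f ∈ compatibleFamilies (edgeSubdivision K u w r)) (hS : S ∈ K) (hu : u ∈ S)
    (hw : w ∈ S) : ∃ p, IsEdgeMerge u w r α β f S p := by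
  have hSw := insert_erase_right_mem_edgeSubdivision (r := r) hS hu hw
  have hSu := insert_erase_left_mem_edgeSubdivision (r := r) hS hu hw
  have hcommon : (insert r (S.erase w)).erase u ⊆ insert r (S.erase w) ∩ insert r (S.erase u) := by
    intro z hz
    simp only [Finset.mem_erase, Finset.mem_insert, Finset.mem_inter] at hz ⊢
    tauto
  obtain ⟨q, hq⟩ := linearForm_coord_dvd (ρ := u)
    (p := f (insert r (S.erase w)) - f (insert r (S.erase u)))
    (h.isBasis_of_mem_edgeSubdivision hSw)
    (by rw [map_sub, sub_eq_zero]; exact genPullback_eq_of_subset hcommon (hf.2 _ hSw _ hSu))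
  have hsplit : linearForm (splitForm u w α β S) =
      β • linearForm (coord (insert r (S.erase w)) u) := by rw [h.splitForm_eq hS hu hw, map_smul]
  have hinv : (β • linearForm (coord (insert r (S.erase w)) u)) * (β⁻¹ • q) =
      f (insert r (S.erase w)) - f (insert r (S.erase u)) := by
    rw [smul_mul_smul_comm, mul_inv_cancel₀ h.pos_right.ne', one_smul, hq]
  refine ⟨f (insert r (S.erase w)) + linearForm (α • coord S w) * (β⁻¹ • q), ?_⟩
  rw [IsEdgeMerge, mul_add, mul_left_comm, hsplit, hinv, ← hsplit, splitForm, map_sub]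
  ring

end IsEdgeSplitting

/-- The family `g` on `K` is obtained from the family `f` on the edge subdivision of `K` by merging
the two values on each subdivided cone. -/
def IsMergedFamily (K : Finset (Finset (ι → ℝ))) (u w r : ι → ℝ) (α β : ℝ)
    (f g : Finset (ι → ℝ) → MvPolynomial ι ℝ) : Prop :=
  ∀ S ∈ K, (u ∈ S ∧ w ∈ S → IsEdgeMerge u w r α β f S (g S)) ∧ (¬ (u ∈ S ∧ w ∈ S) → g S = f S)

namespace IsEdgeSplitting

lemma genPullback_inter_eq_of_not_mem (h : IsEdgeSplitting K u w r α β)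
    (hf : f ∈ compatibleFamilies (edgeSubdivision K u w r)) (hS : S ∈ K) (hT : T ∈ K) (hu : u ∈ S)
    (hw : w ∈ S) (hwT : w ∉ T) (hp : IsEdgeMerge u w r α β f S p) :
    genPullback (S ∩ T) p = genPullback (S ∩ T) (f T) := by
  have hsub : S ∩ T ⊆ S.erase w := fun z hz =>
    Finset.mem_erase.2 ⟨fun hzw => hwT (hzw ▸ Finset.mem_of_mem_inter_right hz),
      Finset.mem_of_mem_inter_left hz⟩
  rw [hp.genPullback_eq (h.isBasis S hS).indep hu h.ne h.pos_right.ne' hsub]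
  exact genPullback_eq_of_subset
    (Finset.subset_inter (hsub.trans (Finset.subset_insert _ _)) Finset.inter_subset_right)
    (hf.2 _ (insert_erase_right_mem_edgeSubdivision hS hu hw) _
      (mem_edgeSubdivision.2 (Or.inl ⟨hT, fun huw => hwT huw.2⟩)))

lemma genPullback_inter_eq_of_not_edge (h : IsEdgeSplitting K u w r α β)
    (hf : f ∈ compatibleFamilies (edgeSubdivision K u w r)) (hS : S ∈ K) (hT : T ∈ K) (hu : u ∈ S)
    (hw : w ∈ S) (huwT : ¬ (u ∈ T ∧ w ∈ T)) (hp : IsEdgeMerge u w r α β f S p) :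
    genPullback (S ∩ T) p = genPullback (S ∩ T) (f T) := by
  by_cases hwT : w ∈ T
  · rw [edgeSubdivision_comm] at hf
    exact h.symm.genPullback_inter_eq_of_not_mem hf hS hT hw hu (fun huT => huwT ⟨huT, hwT⟩) hp.symm
  · exact h.genPullback_inter_eq_of_not_mem hf hS hT hu hw hwT hp

lemma genPullback_inter_eq_of_edge (h : IsEdgeSplitting K u w r α β)
    (hf : f ∈ compatibleFamilies (edgeSubdivision K u w r)) (hS : S ∈ K) (hT : T ∈ K)
    (huwS : u ∈ S ∧ w ∈ S) (huwT : u ∈ T ∧ w ∈ T) (hp : IsEdgeMerge u w r α β f S p)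
    (hq : IsEdgeMerge u w r α β f T q) : genPullback (S ∩ T) p = genPullback (S ∩ T) q := by
  have hfw : genPullback (S ∩ T) (f (insert r (S.erase w))) =
      genPullback (S ∩ T) (f (insert r (T.erase w))) :=
    genPullback_eq_of_subset_span (h.inter_subset_span_exchange huwS.1 huwT.1)
      (hf.2 _ (insert_erase_right_mem_edgeSubdivision hS huwS.1 huwS.2)
        _ (insert_erase_right_mem_edgeSubdivision hT huwT.1 huwT.2))
  have hfu : genPullback (S ∩ T) (f (insert r (S.erase u))) =
      genPullback (S ∩ T) (f (insert r (T.erase u))) :=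
    genPullback_eq_of_subset_span (h.symm.inter_subset_span_exchange huwS.2 huwT.2)
      (hf.2 _ (insert_erase_left_mem_edgeSubdivision hS huwS.1 huwS.2)
        _ (insert_erase_left_mem_edgeSubdivision hT huwT.1 huwT.2))
  have hbS := (h.isBasis S hS).indep
  have hbT := (h.isBasis T hT).indep
  have hpS := congrArg (genPullback (S ∩ T)) hp
  have hqT := congrArg (genPullback (S ∩ T)) hq
  simp only [map_mul, map_sub, map_smul,
    genPullback_linearForm_splitForm hbT Finset.inter_subset_right,
    genPullback_linearForm_coord hbS Finset.inter_subset_left,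
    genPullback_linearForm_coord hbT Finset.inter_subset_right, hfw, hfu] at hpS hqT
  rw [← hqT, ← genPullback_linearForm_splitForm hbS Finset.inter_subset_left] at hpS
  exact mul_left_cancel₀ (genPullback_linearForm_splitForm_ne_zero hbS Finset.inter_subset_left
    (Finset.mem_inter.2 ⟨huwS.1, huwT.1⟩) h.ne h.pos_right.ne') hpS

lemma exists_isMergedFamily (h : IsEdgeSplitting K u w r α β)
    (hf : f ∈ compatibleFamilies (edgeSubdivision K u w r)) :
    ∃ g ∈ compatibleFamilies K, IsMergedFamily K u w r α β f g := by
  choose! p hp using fun S (hS : S ∈ K ∧ u ∈ S ∧ w ∈ S) =>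
    h.exists_isEdgeMerge hf hS.1 hS.2.1 hS.2.2
  refine ⟨fun S => if S ∈ K then if u ∈ S ∧ w ∈ S then p S else f S else 0,
    ⟨fun S hS => if_neg hS, fun S hS T hT => ?_⟩, fun S hS => ⟨fun huw => ?_, fun huw => ?_⟩⟩
  · simp only [if_pos hS, if_pos hT]
    split_ifs with huwS huwT huwT
    · exact h.genPullback_inter_eq_of_edge hf hS hT huwS huwT (hp S ⟨hS, huwS⟩) (hp T ⟨hT, huwT⟩)
    · exact h.genPullback_inter_eq_of_not_edge hf hS hT huwS.1 huwS.2 huwT (hp S ⟨hS, huwS⟩)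
    · rw [Finset.inter_comm]
      exact (h.genPullback_inter_eq_of_not_edge hf hT hS huwT.1 huwT.2 huwS (hp T ⟨hT, huwT⟩)).symm
    · exact hf.2 _ (mem_edgeSubdivision.2 (Or.inl ⟨hS, huwS⟩))
        _ (mem_edgeSubdivision.2 (Or.inl ⟨hT, huwT⟩))
  · simpa only [if_pos hS, if_pos huw] using hp S ⟨hS, huw⟩
  · simp only [if_pos hS, if_neg huw]

lemma isMergedFamily_unique (h : IsEdgeSplitting K u w r α β) {g' : Finset (ι → ℝ) → _}
    (hgK : g ∈ compatibleFamilies K) (hgK' : g' ∈ compatibleFamilies K)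
    (hg : IsMergedFamily K u w r α β f g) (hg' : IsMergedFamily K u w r α β f g') : g = g' := by
  refine compatibleFamilies_ext hgK hgK' fun S hS => ?_
  by_cases huw : u ∈ S ∧ w ∈ S
  · exact h.isEdgeMerge_unique hS huw.1 ((hg S hS).1 huw) ((hg' S hS).1 huw)
  · rw [(hg S hS).2 huw, (hg' S hS).2 huw]

/-- The retraction of the inclusion of the compatible families on `K` into those on an edge
subdivision of `K`. -/
noncomputable def merge (h : IsEdgeSplitting K u w r α β) :
    compatibleFamilies (edgeSubdivision K u w r) →ₗ[MvPolynomial ι ℝ] compatibleFamilies K where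
  toFun f := ⟨_, (h.exists_isMergedFamily f.2).choose_spec.1⟩
  map_add' f g := Subtype.ext <| h.isMergedFamily_unique (Subtype.prop _) (Subtype.prop _)
    (h.exists_isMergedFamily (f + g).2).choose_spec.2 fun S hS =>
      ⟨fun huw => (((h.exists_isMergedFamily f.2).choose_spec.2 S hS).1 huw).add
        (((h.exists_isMergedFamily g.2).choose_spec.2 S hS).1 huw),
      fun huw => congrArg₂ (· + ·) (((h.exists_isMergedFamily f.2).choose_spec.2 S hS).2 huw)
        (((h.exists_isMergedFamily g.2).choose_spec.2 S hS).2 huw)⟩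
  map_smul' a f := Subtype.ext <| h.isMergedFamily_unique (Subtype.prop _) (Subtype.prop _)
    (h.exists_isMergedFamily (a • f).2).choose_spec.2 fun S hS =>
      ⟨fun huw => (((h.exists_isMergedFamily f.2).choose_spec.2 S hS).1 huw).smul a,
      fun huw => congrArg (a • ·) (((h.exists_isMergedFamily f.2).choose_spec.2 S hS).2 huw)⟩

lemma isMergedFamily_merge (h : IsEdgeSplitting K u w r α β)
    (f : compatibleFamilies (edgeSubdivision K u w r)) :
    IsMergedFamily K u w r α β f (h.merge f) :=
  (h.exists_isMergedFamily f.2).choose_spec.2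

/-- Restriction of compatible families on `K` to an edge subdivision of `K`. -/
noncomputable def subdivide (h : IsEdgeSplitting K u w r α β) :
    compatibleFamilies K →ₗ[MvPolynomial ι ℝ] compatibleFamilies (edgeSubdivision K u w r) where
  toFun f := ⟨fun S' => if S' ∈ edgeSubdivision K u w r then f.1 (parentCone u w r S') else 0,
    fun S' hS' => if_neg hS', fun S' hS' T' hT' => by
      simpa only [if_pos hS', if_pos hT'] using
        genPullback_eq_of_subset_span (h.subset_span_parentCone_inter S' T')
          (f.2.2 _ (h.parentCone_mem hS') _ (h.parentCone_mem hT'))⟩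
  map_add' f g := Subtype.ext <| funext fun S' => by
    simp only [Submodule.coe_add, Pi.add_apply]
    split_ifs <;> simp
  map_smul' a f := Subtype.ext <| funext fun S' => by
    simp only [Submodule.coe_smul, Pi.smul_apply, RingHom.id_apply]
    split_ifs <;> simp

lemma subdivide_apply (h : IsEdgeSplitting K u w r α β) (f : compatibleFamilies K)
    {S' : Finset (ι → ℝ)} (hS' : S' ∈ edgeSubdivision K u w r) :
    (h.subdivide f).1 S' = f.1 (parentCone u w r S') := if_pos hS'

lemma merge_comp_subdivide (h : IsEdgeSplitting K u w r α β) :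
    h.merge ∘ₗ h.subdivide = LinearMap.id := by
  refine LinearMap.ext fun f => Subtype.ext <| h.isMergedFamily_unique (Subtype.prop _) f.2
    (h.isMergedFamily_merge (h.subdivide f))
    fun S hS => ⟨fun ⟨hu, hw⟩ => .of_eq ?_ ?_, fun huw => ?_⟩
  · rw [h.subdivide_apply f (insert_erase_right_mem_edgeSubdivision hS hu hw),
      parentCone_insert_erase_right hu hw (h.notMem S hS), LinearMap.id_apply]
  · rw [h.subdivide_apply f (insert_erase_left_mem_edgeSubdivision hS hu hw),
      parentCone_insert_erase_left hu hw (h.notMem S hS), LinearMap.id_apply]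
  · rw [h.subdivide_apply f (mem_edgeSubdivision.2 (Or.inl ⟨hS, huw⟩)),
      parentCone_of_notMem (h.notMem S hS), LinearMap.id_apply]

lemma projective_of_edgeSubdivision (h : IsEdgeSplitting K u w r α β)
    [Module.Projective (MvPolynomial ι ℝ) (compatibleFamilies (edgeSubdivision K u w r))] :
    Module.Projective (MvPolynomial ι ℝ) (compatibleFamilies K) :=
  Module.Projective.of_split h.subdivide h.merge h.merge_comp_subdivide

end IsEdgeSplitting

end EdgeMerge

section CompleteSimplicial

variable {V : Type*} [AddCommGroup V] [Module ℝ V] {K : Finset (Finset V)} {S S' T' : Finset V}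
  {u w r x z : V} {α β : ℝ}

/-- `K` is the collection of generator sets of the maximal cones of a complete simplicial fan: the
cones cover `V`, and a vector has the same coordinates in any two cones containing it. -/
structure IsCompleteSimplicial (K : Finset (Finset V)) : Prop where
  isBasis : ∀ S ∈ K, IsBasisFinset S
  exists_mem_coneHull : ∀ x, ∃ S ∈ K, x ∈ coneHull S
  coord_eq : ∀ S ∈ K, ∀ T ∈ K, ∀ x ∈ coneHull S, x ∈ coneHull T → ∀ z, coord S z x = coord T z x

lemma smul_mem_coneHull (hα : 0 ≤ α) (hw : w ∈ S) : α • w ∈ coneHull S :=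
  ⟨fun z => if z = w then α else 0, fun z => by dsimp only; split_ifs <;> simp [hα],
    by simp [ite_smul, hw]⟩

lemma mem_coneHull_of_mem (hw : w ∈ S) : w ∈ coneHull S := by
  simpa using smul_mem_coneHull zero_le_one hw

lemma coneHull_subset_coneHull {T : Finset V} (h : ∀ w ∈ S, w ∈ coneHull T) :
    coneHull S ⊆ coneHull T := by
  choose! c hc hwc using h
  rintro _ ⟨a, ha, rfl⟩
  refine ⟨fun t => ∑ w ∈ S, a w * c w t,
    fun t => Finset.sum_nonneg fun w hw => mul_nonneg (ha w) (hc w hw t), ?_⟩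
  simp only [Finset.sum_smul, mul_smul]
  rw [Finset.sum_comm]
  refine Finset.sum_congr rfl fun w hw => ?_
  rw [← Finset.smul_sum, ← hwc w hw]

lemma coneHull_mono {T : Finset V} (h : S ⊆ T) : coneHull S ⊆ coneHull T :=
  coneHull_subset_coneHull fun _ hw => mem_coneHull_of_mem (h hw)

lemma smul_add_smul_mem_coneHull (hα : 0 ≤ α) (hβ : 0 ≤ β) (hu : u ∈ S) (hw : w ∈ S) :
    α • u + β • w ∈ coneHull S := by
  obtain ⟨c, hc, hcu⟩ := mem_coneHull_of_mem hu
  obtain ⟨c', hc', hcw⟩ := mem_coneHull_of_mem hw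
  refine ⟨fun z => α * c z + β * c' z,
    fun z => add_nonneg (mul_nonneg hα (hc z)) (mul_nonneg hβ (hc' z)), ?_⟩
  simp only [add_smul, mul_smul, Finset.sum_add_distrib, ← Finset.smul_sum]
  rw [← hcu, ← hcw]

lemma IsBasisFinset.coord_nonneg (hS : IsBasisFinset S) (hx : x ∈ coneHull S) (w : V) :
    0 ≤ coord S w x := by
  by_cases hw : w ∈ S
  · exact hS.mem_coneHull_iff.1 hx w hw
  · rw [coord_of_notMem hw, LinearMap.zero_apply]

lemma IsCompleteSimplicial.isEdgeSplitting (hK : IsCompleteSimplicial K) (hα : 0 < α) (hβ : 0 < β)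
    (huw : u ≠ w) (hS : S ∈ K) (hu : u ∈ S) (hw : w ∈ S) :
    IsEdgeSplitting K u w (α • u + β • w) α β := by
  refine ⟨hα, hβ, rfl, huw, hK.isBasis, fun T hT hr => huw ?_, ⟨S, hS, hu, hw⟩⟩
  have hindep := (hK.isBasis S hS).indep
  have eq_of_coord_pos : ∀ z, 0 < coord S z (α • u + β • w) → α • u + β • w = z := by
    intro z hz
    by_contra hne
    rw [hK.coord_eq S hS T hT _ (smul_add_smul_mem_coneHull hα.le hβ.le hu hw)
      (mem_coneHull_of_mem hr)] at hz
    by_cases hzT : z ∈ T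
    · rw [coord_of_ne (hK.isBasis T hT).indep hr hne] at hz
      exact hz.false
    · rw [coord_of_notMem hzT] at hz
      exact hz.false
  rw [← eq_of_coord_pos u (by simp [coord_self, coord_of_ne, *, huw.symm]),
    eq_of_coord_pos w (by simp [coord_self, coord_of_ne, *])]

-- Both sides of the conclusion are the minimum of `(a + α * c) / α` and `(b + β * c) / β`.
lemma eq_of_add_mul_eq_add_mul {a b c a' b' c' : ℝ} (hα : 0 < α) (hβ : 0 < β) (ha : 0 ≤ a)
    (hb : 0 ≤ b) (ha' : 0 ≤ a') (hb' : 0 ≤ b') (hab : a = 0 ∨ b = 0) (hab' : a' = 0 ∨ b' = 0)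
    (h_left : a + α * c = a' + α * c') (h_right : b + β * c = b' + β * c') : c = c' := by
  rcases lt_trichotomy c c' with hlt | heq | hlt
  · have := mul_lt_mul_of_pos_left hlt hα
    have := mul_lt_mul_of_pos_left hlt hβ
    rcases hab with rfl | rfl <;> linarith
  · exact heq
  · have := mul_lt_mul_of_pos_left hlt hα
    have := mul_lt_mul_of_pos_left hlt hβ
    rcases hab' with rfl | rfl <;> linarith

namespace IsEdgeSplitting

variable [DecidableEq V]

lemma mem_coneHull_parentCone (h : IsEdgeSplitting K u w r α β)
    (hS' : S' ∈ edgeSubdivision K u w r) (hx : x ∈ coneHull S') :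
    x ∈ coneHull (parentCone u w r S') := by
  have hnonneg := (h.isBasis_of_mem_edgeSubdivision hS').coord_nonneg hx
  refine (h.isBasis _ (h.parentCone_mem hS')).mem_coneHull_iff.2 fun z hz => ?_
  by_cases hzr : z = r
  · exact absurd (hzr ▸ hz) (h.notMem _ (h.parentCone_mem hS'))
  by_cases hzu : z = u
  · rw [hzu, h.coord_parentCone_left hS']
    exact add_nonneg (hnonneg u) (mul_nonneg h.pos_left.le (hnonneg r))
  by_cases hzw : z = w
  · rw [hzw, h.coord_parentCone_right hS']
    exact add_nonneg (hnonneg w) (mul_nonneg h.pos_right.le (hnonneg r))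
  · rw [h.coord_parentCone_of_ne hS' hzu hzw hzr]
    exact hnonneg z

lemma mem_coneHull_insert_erase_left (h : IsEdgeSplitting K u w r α β) (hS : S ∈ K) (hu : u ∈ S)
    (hw : w ∈ S) (hx : x ∈ coneHull S) (hle : β * coord S u x ≤ α * coord S w x) :
    x ∈ coneHull (insert r (S.erase u)) := by
  have hS' := insert_erase_left_mem_edgeSubdivision (r := r) hS hu hw
  have hu' : u ∉ insert r (S.erase u) := by simp [h.ne_left.symm]
  have hcoord_u := LinearMap.congr_fun (h.coord_parentCone_left hS') x
  have hcoord_w := LinearMap.congr_fun (h.coord_parentCone_right hS') x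
  have hcoord := fun z hzu hzw hzr =>
    LinearMap.congr_fun (h.coord_parentCone_of_ne (z := z) hS' hzu hzw hzr) x
  rw [parentCone_insert_erase_left hu hw (h.notMem S hS)] at hcoord_u hcoord_w hcoord
  simp only [coord_of_notMem hu', zero_add, LinearMap.add_apply, LinearMap.smul_apply,
    smul_eq_mul] at hcoord_u hcoord_w
  have hnonneg := (h.isBasis S hS).coord_nonneg hx
  refine (h.isBasis_of_mem_edgeSubdivision hS').mem_coneHull_iff.2 fun z hz => ?_
  by_cases hzr : z = r
  · rw [hzr]
    exact nonneg_of_mul_nonneg_right (hcoord_u ▸ hnonneg u) h.pos_left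
  have hzu : z ≠ u := fun hzu => hu' (hzu ▸ hz)
  by_cases hzw : z = w
  · rw [hzw]
    rw [hcoord_u, hcoord_w] at hle
    exact nonneg_of_mul_nonneg_right (by linarith) h.pos_left
  · rw [← hcoord z hzu hzw hzr]
    exact hnonneg z

lemma exists_mem_coneHull_edgeSubdivision (h : IsEdgeSplitting K u w r α β) (hS : S ∈ K)
    (hx : x ∈ coneHull S) : ∃ S' ∈ edgeSubdivision K u w r, x ∈ coneHull S' := by
  by_cases huw : u ∈ S ∧ w ∈ S
  · obtain ⟨hu, hw⟩ := huw
    rcases le_total (β * coord S u x) (α * coord S w x) with hle | hle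
    · exact ⟨_, insert_erase_left_mem_edgeSubdivision hS hu hw,
        h.mem_coneHull_insert_erase_left hS hu hw hx hle⟩
    · exact ⟨_, insert_erase_right_mem_edgeSubdivision hS hu hw,
        h.symm.mem_coneHull_insert_erase_left hS hw hu hx hle⟩
  · exact ⟨S, mem_edgeSubdivision.2 (Or.inl ⟨hS, huw⟩), hx⟩

lemma coord_left_eq_zero_or (h : IsEdgeSplitting K u w r α β)
    (hS' : S' ∈ edgeSubdivision K u w r) (x : V) : coord S' u x = 0 ∨ coord S' w x = 0 := by
  rcases not_and_or.1 (h.not_left_and_right_mem hS') with hu | hw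
  · exact Or.inl (by rw [coord_of_notMem hu, LinearMap.zero_apply])
  · exact Or.inr (by rw [coord_of_notMem hw, LinearMap.zero_apply])

lemma coord_eq_of_mem_edgeSubdivision (h : IsEdgeSplitting K u w r α β)
    (hK : IsCompleteSimplicial K) (hS' : S' ∈ edgeSubdivision K u w r)
    (hT' : T' ∈ edgeSubdivision K u w r) (hxS : x ∈ coneHull S') (hxT : x ∈ coneHull T') (z : V) :
    coord S' z x = coord T' z x := by
  have hparent := hK.coord_eq _ (h.parentCone_mem hS') _ (h.parentCone_mem hT') x
    (h.mem_coneHull_parentCone hS' hxS) (h.mem_coneHull_parentCone hT' hxT)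
  have hleft := hparent u
  have hright := hparent w
  rw [h.coord_parentCone_left hS', h.coord_parentCone_left hT'] at hleft
  rw [h.coord_parentCone_right hS', h.coord_parentCone_right hT'] at hright
  simp only [LinearMap.add_apply, LinearMap.smul_apply, smul_eq_mul] at hleft hright
  have hnonnegS := (h.isBasis_of_mem_edgeSubdivision hS').coord_nonneg hxS
  have hnonnegT := (h.isBasis_of_mem_edgeSubdivision hT').coord_nonneg hxT
  have hr : coord S' r x = coord T' r x :=
    eq_of_add_mul_eq_add_mul h.pos_left h.pos_right (hnonnegS u) (hnonnegS w) (hnonnegT u)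
      (hnonnegT w) (h.coord_left_eq_zero_or hS' x) (h.coord_left_eq_zero_or hT' x) hleft hright
  by_cases hzr : z = r
  · rw [hzr, hr]
  by_cases hzu : z = u
  · rw [hr] at hleft
    rw [hzu, add_right_cancel hleft]
  by_cases hzw : z = w
  · rw [hr] at hright
    rw [hzw, add_right_cancel hright]
  · rw [← h.coord_parentCone_of_ne hS' hzu hzw hzr, ← h.coord_parentCone_of_ne hT' hzu hzw hzr,
      hparent z]

lemma isCompleteSimplicial_edgeSubdivision (h : IsEdgeSplitting K u w r α β)
    (hK : IsCompleteSimplicial K) : IsCompleteSimplicial (edgeSubdivision K u w r) where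
  isBasis _ := h.isBasis_of_mem_edgeSubdivision
  exists_mem_coneHull x :=
    let ⟨_, hS, hx⟩ := hK.exists_mem_coneHull x
    h.exists_mem_coneHull_edgeSubdivision hS hx
  coord_eq _ hS' _ hT' _ := h.coord_eq_of_mem_edgeSubdivision hK hS' hT'

end IsEdgeSplitting

section Limits

open Filter Topology

lemma exists_frequently_add_smul_mem {A : Type*} {s : Finset A} {C : A → Set V}
    (hC : ∀ x, ∃ i ∈ s, x ∈ C i) (y z : V) :
    ∃ i ∈ s, ∃ᶠ ε : ℝ in 𝓝[>] 0, y + ε • z ∈ C i := by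
  by_contra! hnot
  obtain ⟨ε, hε⟩ := ((eventually_all_finset s).2 hnot).exists
  obtain ⟨i, hi, hεi⟩ := hC (y + ε • z)
  exact hε i hi hεi

lemma IsBasisFinset.mem_coneHull_of_frequently {y : V} (hS : IsBasisFinset S)
    (h : ∃ᶠ ε : ℝ in 𝓝[>] 0, y + ε • z ∈ coneHull S) : y ∈ coneHull S := by
  refine hS.mem_coneHull_iff.2 fun w _ => ?_
  have hlim : Tendsto (fun ε : ℝ => coord S w y + ε * coord S w z) (𝓝[>] 0) (𝓝 (coord S w y)) := by
    have hcont : Continuous fun ε : ℝ => coord S w y + ε * coord S w z := by fun_prop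
    simpa using (hcont.tendsto 0).mono_left nhdsWithin_le_nhds
  refine ge_of_tendsto_of_frequently hlim (h.mono fun ε hε => ?_)
  simpa using hS.coord_nonneg hε w

lemma IsCompleteSimplicial.exists_mem_coneHull_and_add_smul_mem (hK : IsCompleteSimplicial K)
    (y z : V) : ∃ T ∈ K, y ∈ coneHull T ∧ ∃ ε : ℝ, 0 < ε ∧ y + ε • z ∈ coneHull T := by
  obtain ⟨T, hT, hyz⟩ := exists_frequently_add_smul_mem hK.exists_mem_coneHull y z
  obtain ⟨ε, hε, hεpos⟩ := (hyz.and_eventually self_mem_nhdsWithin).exists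
  exact ⟨T, hT, (hK.isBasis T hT).mem_coneHull_of_frequently hyz, ε, hεpos, hε⟩

end Limits

end CompleteSimplicial

section FacetForms

variable {V : Type*} [AddCommGroup V] [Module ℝ V] {K : Finset (Finset V)} {l : V →ₗ[ℝ] ℝ}

/-- The coordinate forms of the cones of `K`, whose zero sets are the hyperplanes spanned by the
facets. -/
noncomputable def facetForms (K : Finset (Finset V)) : Finset (V →ₗ[ℝ] ℝ) :=
  K.biUnion fun S => S.image (coord S)

lemma mem_facetForms : l ∈ facetForms K ↔ ∃ S ∈ K, ∃ w ∈ S, coord S w = l := by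
  simp [facetForms]

lemma ne_zero_of_mem_facetForms (hK : ∀ S ∈ K, IsBasisFinset S) (hl : l ∈ facetForms K) :
    l ≠ 0 := by
  obtain ⟨S, hS, w, hw, rfl⟩ := mem_facetForms.1 hl
  intro h0
  have := coord_self (hK S hS).indep hw
  simp [h0] at this

end FacetForms

section SweepKeys

variable {V : Type*} [AddCommGroup V] [Module ℝ V] [DecidableEq V] {K K' : Finset (Finset V)}
  {S T S' T' : Finset V} {u w r v ρ : V} {α β : ℝ} {l : V →ₗ[ℝ] ℝ} {H : Finset (V →ₗ[ℝ] ℝ)}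

/-- `T` contains a facet of `S` but not `S`, and passing from `S` to `T` through this facet goes
against the direction `v`. -/
def IsNeighborBelow (v : V) (T S : Finset V) : Prop :=
  ∃ ρ ∈ S, ρ ∉ T ∧ S.erase ρ ⊆ T ∧ 0 < coord S ρ v

/-- For every direction `v` there are natural number keys which decrease whenever one passes
against `v` through a wall that does not lie in any of the hyperplanes `l = 0`, `l ∈ H`. -/
def HasSweepKeysOff (H : Finset (V →ₗ[ℝ] ℝ)) (K : Finset (Finset V)) : Prop :=
  ∀ v, ∃ key : Finset V → ℕ, ∀ S ∈ K, ∀ T ∈ K, IsNeighborBelow v T S →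
    (∀ l ∈ H, ∃ z ∈ S ∩ T, l z ≠ 0) → key T < key S

lemma IsBasisFinset.notMem_of_erase_subset (hS : IsBasisFinset S) (hT : IsBasisFinset T)
    (hne : S ≠ T) (h : S.erase ρ ⊆ T) : ρ ∉ T :=
  fun hρ => hne (hS.eq_of_subset hT ((Finset.erase_subset_iff_of_mem hρ).1 h))

namespace IsEdgeSplitting

lemma eq_insert_erase_of_mem (h : IsEdgeSplitting K u w r α β)
    (hS' : S' ∈ edgeSubdivision K u w r) (hr : r ∈ S') :
    S' = insert r ((parentCone u w r S').erase w) ∨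
      S' = insert r ((parentCone u w r S').erase u) := by
  rcases mem_edgeSubdivision.1 hS' with ⟨hS, -⟩ | ⟨S, hS, ⟨hu, hw⟩, rfl⟩ | ⟨S, hS, ⟨hu, hw⟩, rfl⟩
  · exact absurd hr (h.notMem _ hS)
  · exact Or.inl (by rw [parentCone_insert_erase_right hu hw (h.notMem S hS)])
  · exact Or.inr (by rw [parentCone_insert_erase_left hu hw (h.notMem S hS)])

lemma isNeighborBelow_of_insert_erase_subset (h : IsEdgeSplitting K u w r α β) (hS : S ∈ K)
    (hT : T ∈ K) (hne : S ≠ T) (hu : u ∈ S) (hw : w ∈ S) (hsub : S.erase w ⊆ T)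
    (hpos : 0 < coord (insert r (S.erase w)) r v) : IsNeighborBelow v T S := by
  have hw' : w ∉ insert r (S.erase w) := by simp [h.ne_right.symm]
  have hcoord := h.coord_parentCone_right (insert_erase_right_mem_edgeSubdivision hS hu hw)
  rw [parentCone_insert_erase_right hu hw (h.notMem S hS), coord_of_notMem hw', zero_add] at hcoord
  refine ⟨w, hw, (h.isBasis S hS).notMem_of_erase_subset (h.isBasis T hT) hne hsub, hsub, ?_⟩
  rw [hcoord]
  exact mul_pos h.pos_right hpos

lemma isNeighborBelow_parentCone_of_mem (h : IsEdgeSplitting K u w r α β)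
    (hS' : S' ∈ edgeSubdivision K u w r) (hT' : T' ∈ edgeSubdivision K u w r)
    (hne : parentCone u w r S' ≠ parentCone u w r T') (hrT : r ∈ T')
    (hbelow : IsNeighborBelow v T' S') :
    IsNeighborBelow v (parentCone u w r T') (parentCone u w r S') := by
  obtain ⟨ρ, hρ, hρT, hsub, hpos⟩ := hbelow
  have hρr : ρ ≠ r := fun hρr => hρT (hρr ▸ hrT)
  have hsub' : (parentCone u w r S').erase ρ ⊆ parentCone u w r T' := fun z hz => by
    obtain ⟨hzρ, hzS⟩ := Finset.mem_erase.1 hz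
    by_cases hzu : z = u
    · exact hzu ▸ left_mem_parentCone hrT
    by_cases hzw : z = w
    · exact hzw ▸ right_mem_parentCone hrT
    have hzr : z ≠ r := fun hzr => h.notMem _ (h.parentCone_mem hS') (hzr ▸ hzS)
    refine mem_parentCone (hsub (Finset.mem_erase.2 ⟨hzρ, ?_⟩)) hzr
    rw [parentCone] at hzS
    split_ifs at hzS
    · simpa [hzu, hzw, hzr] using hzS
    · exact hzS
  have hρT' := (h.isBasis _ (h.parentCone_mem hS')).notMem_of_erase_subset
    (h.isBasis _ (h.parentCone_mem hT')) hne hsub'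
  refine ⟨ρ, mem_parentCone hρ hρr, hρT', hsub', ?_⟩
  rwa [h.coord_parentCone_of_ne hS' (fun hρu => hρT' (hρu ▸ left_mem_parentCone hrT))
    (fun hρw => hρT' (hρw ▸ right_mem_parentCone hrT)) hρr]

lemma isNeighborBelow_parentCone (h : IsEdgeSplitting K u w r α β)
    (hS' : S' ∈ edgeSubdivision K u w r) (hT' : T' ∈ edgeSubdivision K u w r)
    (hne : parentCone u w r S' ≠ parentCone u w r T') (hbelow : IsNeighborBelow v T' S') :
    IsNeighborBelow v (parentCone u w r T') (parentCone u w r S') := by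
  by_cases hrT : r ∈ T'
  · exact h.isNeighborBelow_parentCone_of_mem hS' hT' hne hrT hbelow
  have hSK := h.parentCone_mem hS'
  have hTK := h.parentCone_mem hT'
  rw [parentCone_of_notMem hrT] at hne hTK ⊢
  by_cases hrS : r ∈ S'
  · obtain ⟨ρ, -, -, hsub, hpos⟩ := hbelow
    obtain rfl : ρ = r := by
      by_contra hρr
      exact hrT (hsub (Finset.mem_erase.2 ⟨Ne.symm hρr, hrS⟩))
    have hu := left_mem_parentCone (u := u) (w := w) hrS
    have hw := right_mem_parentCone (u := u) (w := w) hrS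
    rcases h.eq_insert_erase_of_mem hS' hrS with heq | heq <;>
      rw [heq] at hsub hpos <;>
      rw [Finset.erase_insert fun hr => h.notMem _ hSK (Finset.mem_of_mem_erase hr)] at hsub
    · exact h.isNeighborBelow_of_insert_erase_subset hSK hTK hne hu hw hsub hpos
    · exact h.symm.isNeighborBelow_of_insert_erase_subset hSK hTK hne hw hu hsub hpos
  · rwa [parentCone_of_notMem hrS]

lemma coord_left_pos_and_coord_right_neg (h : IsEdgeSplitting K u w r α β) (hS : S ∈ K)
    (hu : u ∈ S) (hw : w ∈ S)
    (hbelow : IsNeighborBelow v (insert r (S.erase u)) (insert r (S.erase w))) :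
    0 < coord (insert r (S.erase w)) u v ∧ coord (insert r (S.erase u)) w v < 0 := by
  obtain ⟨ρ, hρ, hρT, -, hpos⟩ := hbelow
  obtain rfl : ρ = u := by
    simp only [Finset.mem_insert, Finset.mem_erase] at hρ hρT
    tauto
  refine ⟨hpos, ?_⟩
  have hright : splitForm ρ w α β S v = β * coord (insert r (S.erase w)) ρ v := by
    rw [h.splitForm_eq hS hu hw, LinearMap.smul_apply, smul_eq_mul]
  have hleft : splitForm w ρ β α S v = α * coord (insert r (S.erase ρ)) w v := by
    rw [h.symm.splitForm_eq hS hw hu, LinearMap.smul_apply, smul_eq_mul]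
  have hneg : splitForm w ρ β α S v = -splitForm ρ w α β S v := by simp [splitForm]
  have := mul_pos h.pos_right hpos
  exact neg_of_mul_neg_right (by linarith) h.pos_left.le

lemma coord_pos_of_parentCone_eq (h : IsEdgeSplitting K u w r α β)
    (hS' : S' ∈ edgeSubdivision K u w r) (hT' : T' ∈ edgeSubdivision K u w r)
    (heq : parentCone u w r S' = parentCone u w r T') (hbelow : IsNeighborBelow v T' S') :
    (0 < coord S' u v ∨ 0 < coord S' w v) ∧ ¬ (0 < coord T' u v ∨ 0 < coord T' w v) := by
  have hne : S' ≠ T' := by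
    obtain ⟨ρ, hρ, hρT, -⟩ := hbelow
    exact fun hST => hρT (hST ▸ hρ)
  by_cases hr : r ∈ S' ∧ r ∈ T'
  · have hSK := h.parentCone_mem hS'
    have hu := left_mem_parentCone (u := u) (w := w) hr.1
    have hw := right_mem_parentCone (u := u) (w := w) hr.1
    have hS := h.eq_insert_erase_of_mem hS' hr.1
    have hT := h.eq_insert_erase_of_mem hT' hr.2
    rw [← heq] at hT
    generalize parentCone u w r S' = P at hS hT hSK hu hw
    rcases hS with rfl | rfl <;> rcases hT with rfl | rfl
    · exact absurd rfl hne
    · obtain ⟨hpos, hneg⟩ := h.coord_left_pos_and_coord_right_neg hSK hu hw hbelow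
      simp [hpos, hneg.le, coord_of_notMem, h.ne_left.symm]
    · obtain ⟨hpos, hneg⟩ := h.symm.coord_left_pos_and_coord_right_neg hSK hw hu hbelow
      simp [hpos, hneg.le, coord_of_notMem, h.ne_right.symm]
    · exact absurd rfl hne
  · exfalso
    by_cases hrS : r ∈ S'
    · rw [parentCone_of_notMem fun hrT => hr ⟨hrS, hrT⟩] at heq
      exact h.not_left_and_right_mem hT'
        ⟨heq ▸ left_mem_parentCone hrS, heq ▸ right_mem_parentCone hrS⟩
    · rw [parentCone_of_notMem hrS] at heq
      by_cases hrT : r ∈ T'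
      · exact h.not_left_and_right_mem hS'
          ⟨heq ▸ left_mem_parentCone hrT, heq ▸ right_mem_parentCone hrT⟩
      · exact hne (heq.trans (parentCone_of_notMem hrT))

lemma exists_mem_parentCone_inter_ne_zero (h : IsEdgeSplitting K u w r α β)
    (hl : ∃ z ∈ S' ∩ T', l z ≠ 0) :
    ∃ z ∈ parentCone u w r S' ∩ parentCone u w r T', l z ≠ 0 := by
  by_contra! hzero
  obtain ⟨z, hz, hlz⟩ := hl
  have hle : Submodule.span ℝ
      ((parentCone u w r S' ∩ parentCone u w r T' : Finset V) : Set V) ≤ LinearMap.ker l :=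
    Submodule.span_le.2 hzero
  exact hlz (hle (h.subset_span_parentCone_inter S' T' hz))

lemma hasSweepKeysOff_edgeSubdivision (h : IsEdgeSplitting K u w r α β)
    (hK : HasSweepKeysOff H K) : HasSweepKeysOff H (edgeSubdivision K u w r) := by
  intro v
  obtain ⟨key, hkey⟩ := hK v
  -- Order the cones by their parents; of the two halves of a cone, the one on the `v`-side of the
  -- splitting wall is the larger.
  refine ⟨fun S' => 2 * key (parentCone u w r S') +
    if 0 < coord S' u v ∨ 0 < coord S' w v then 1 else 0, fun S' hS' T' hT' hbelow hH => ?_⟩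
  dsimp only
  by_cases hparent : parentCone u w r S' = parentCone u w r T'
  · obtain ⟨hpos, hnpos⟩ := h.coord_pos_of_parentCone_eq hS' hT' hparent hbelow
    rw [hparent, if_pos hpos, if_neg hnpos]
    omega
  · have := hkey _ (h.parentCone_mem hS') _ (h.parentCone_mem hT')
      (h.isNeighborBelow_parentCone hS' hT' hparent hbelow)
      fun l hl => h.exists_mem_parentCone_inter_ne_zero (hH l hl)
    split_ifs <;> omega

end IsEdgeSplitting

lemma hasSweepKeysOff_facetForms (hK : ∀ S ∈ K, IsBasisFinset S) :
    HasSweepKeysOff (facetForms K) K := by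
  refine fun v => ⟨fun _ => 0, fun S hS T _ ⟨ρ, hρ, hρT, _⟩ hH => ?_⟩
  obtain ⟨z, hz, hlz⟩ := hH _ (mem_facetForms.2 ⟨S, hS, ρ, hρ, rfl⟩)
  obtain ⟨hzS, hzT⟩ := Finset.mem_inter.1 hz
  exact absurd (coord_of_ne (hK S hS).indep hzS (ne_of_mem_of_not_mem hzT hρT)) hlz

end SweepKeys

section Uncrossing

variable {V : Type*} [AddCommGroup V] [Module ℝ V] {K K' : Finset (Finset V)} {u w r : V}
  {α β : ℝ} {l : V →ₗ[ℝ] ℝ} {H : Finset (V →ₗ[ℝ] ℝ)}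

/-- No cone of `K` meets both open half-spaces `0 < l` and `l < 0`. -/
def IsUncrossed (l : V →ₗ[ℝ] ℝ) (K : Finset (Finset V)) : Prop :=
  ∀ S ∈ K, (∀ z ∈ S, 0 ≤ l z) ∨ ∀ z ∈ S, l z ≤ 0

lemma IsUncrossed.neg (h : IsUncrossed l K) : IsUncrossed (-l) K := fun S hS => by
  simpa only [LinearMap.neg_apply, neg_nonneg, neg_nonpos] using (h S hS).symm

variable [DecidableEq V]

lemma IsEdgeSplitting.forall_nonneg_of_parentCone {S' : Finset V}
    (h : IsEdgeSplitting K u w r α β) (hl : ∀ z ∈ parentCone u w r S', 0 ≤ l z) :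
    ∀ z ∈ S', 0 ≤ l z := by
  intro z hz
  by_cases hzr : z = r
  · rw [hzr] at hz ⊢
    rw [h.eq_add, map_add, map_smul, map_smul]
    exact add_nonneg (mul_nonneg h.pos_left.le (hl u (left_mem_parentCone hz)))
      (mul_nonneg h.pos_right.le (hl w (right_mem_parentCone hz)))
  · exact hl z (mem_parentCone hz hzr)

lemma IsEdgeSplitting.isUncrossed_edgeSubdivision (h : IsEdgeSplitting K u w r α β)
    (hl : IsUncrossed l K) : IsUncrossed l (edgeSubdivision K u w r) := fun S' hS' =>
  (hl _ (h.parentCone_mem hS')).imp h.forall_nonneg_of_parentCone fun hneg z hz => by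
    simpa using h.forall_nonneg_of_parentCone (l := -l) (by simpa using hneg) z hz

/-- `K'` arises from `K` by finitely many edge subdivisions. -/
def IsEdgeRefinement (K K' : Finset (Finset V)) : Prop :=
  Relation.ReflTransGen (fun K₁ K₂ => ∃ u w r α β, IsEdgeSplitting K₁ u w r α β ∧
    K₂ = edgeSubdivision K₁ u w r) K K'

lemma IsEdgeRefinement.of_edgeSubdivision (h : IsEdgeSplitting K u w r α β)
    (hK' : IsEdgeRefinement (edgeSubdivision K u w r) K') : IsEdgeRefinement K K' :=
  Relation.ReflTransGen.head ⟨u, w, r, α, β, h, rfl⟩ hK'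

lemma IsEdgeRefinement.preserves {P : Finset (Finset V) → Prop}
    (hstep : ∀ {K u w r α β}, IsEdgeSplitting K u w r α β → P K → P (edgeSubdivision K u w r))
    (hK' : IsEdgeRefinement K K') (hK : P K) : P K' :=
  Relation.ReflTransGen.head_induction_on (motive := fun K _ => P K → P K') hK' id
    (fun ⟨_, _, _, _, _, h, heq⟩ _ ih hK => ih (heq ▸ hstep h hK)) hK

lemma IsEdgeRefinement.projective {ι : Type*} [Fintype ι] {K K' : Finset (Finset (ι → ℝ))}
    (h : IsEdgeRefinement K K')
    (hK' : Module.Projective (MvPolynomial ι ℝ) (compatibleFamilies K')) :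
    Module.Projective (MvPolynomial ι ℝ) (compatibleFamilies K) :=
  Relation.ReflTransGen.head_induction_on
    (motive := fun K _ => Module.Projective (MvPolynomial ι ℝ) (compatibleFamilies K)) h hK'
    fun ⟨_, _, _, _, _, h, heq⟩ _ ih => by subst heq; exact h.projective_of_edgeSubdivision

/-- The pairs of generators of a common cone of `K` which lie strictly on the positive,
respectively negative, side of `l`. -/
noncomputable def crossingPairs (l : V →ₗ[ℝ] ℝ) (K : Finset (Finset V)) : Finset (V × V) :=
  K.biUnion fun S => {z ∈ S | 0 < l z} ×ˢ {z ∈ S | l z < 0}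

lemma mem_crossingPairs : (u, w) ∈ crossingPairs l K ↔
    ∃ S ∈ K, (u ∈ S ∧ 0 < l u) ∧ w ∈ S ∧ l w < 0 := by
  simp [crossingPairs]

lemma IsEdgeSplitting.card_crossingPairs_lt (h : IsEdgeSplitting K u w r α β) (hu : 0 < l u)
    (hw : l w < 0) (hr : l r = 0) :
    (crossingPairs l (edgeSubdivision K u w r)).card < (crossingPairs l K).card := by
  refine Finset.card_lt_card ((Finset.ssubset_iff_of_subset ?_).2 ⟨(u, w), ?_, ?_⟩)
  · rintro ⟨y, z⟩ hyz
    obtain ⟨S', hS', ⟨hyS, hy⟩, hzS, hz⟩ := mem_crossingPairs.1 hyz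
    exact mem_crossingPairs.2 ⟨_, h.parentCone_mem hS',
      ⟨mem_parentCone hyS (by rintro rfl; exact hy.ne' hr), hy⟩,
      mem_parentCone hzS (by rintro rfl; exact hz.ne hr), hz⟩
  · obtain ⟨S, hS, huS, hwS⟩ := h.exists_mem
    exact mem_crossingPairs.2 ⟨S, hS, ⟨huS, hu⟩, hwS, hw⟩
  · rw [mem_crossingPairs]
    rintro ⟨S', hS', ⟨huS, -⟩, hwS, -⟩
    exact h.not_left_and_right_mem hS' ⟨huS, hwS⟩

namespace IsCompleteSimplicial

lemma exists_isUncrossed (hK : IsCompleteSimplicial K) (l : V →ₗ[ℝ] ℝ) :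
    ∃ K', IsEdgeRefinement K K' ∧ IsUncrossed l K' := by
  induction hn : (crossingPairs l K).card using Nat.strong_induction_on generalizing K with
  | _ n ih =>
  by_cases hl : IsUncrossed l K
  · exact ⟨K, Relation.ReflTransGen.refl, hl⟩
  simp only [IsUncrossed, not_forall, not_or, not_le] at hl
  obtain ⟨S, hS, ⟨w, hw, hlw⟩, u, hu, hlu⟩ := hl
  have huw : u ≠ w := by
    rintro rfl
    exact hlw.not_gt hlu
  have hedge := hK.isEdgeSplitting (neg_pos.2 hlw) hlu huw hS hu hw
  have hr : l (-l w • u + l u • w) = 0 := by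
    rw [map_add, map_smul, map_smul, smul_eq_mul, smul_eq_mul]
    ring
  obtain ⟨K', hK', hl'⟩ := ih _ (hn ▸ hedge.card_crossingPairs_lt hlu hlw hr)
    (hedge.isCompleteSimplicial_edgeSubdivision hK) rfl
  exact ⟨K', hK'.of_edgeSubdivision hedge, hl'⟩

lemma exists_forall_isUncrossed (hK : IsCompleteSimplicial K) (H : Finset (V →ₗ[ℝ] ℝ)) :
    ∃ K', IsEdgeRefinement K K' ∧ ∀ l ∈ H, IsUncrossed l K' := by
  induction H using Finset.induction_on with
  | empty => exact ⟨K, Relation.ReflTransGen.refl, by simp⟩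
  | insert l H _ ih =>
    obtain ⟨K₁, hK₁, hH⟩ := ih
    have hK₁' := hK₁.preserves IsEdgeSplitting.isCompleteSimplicial_edgeSubdivision hK
    obtain ⟨K₂, hK₂, hl⟩ := hK₁'.exists_isUncrossed l
    refine ⟨K₂, Relation.ReflTransGen.trans hK₁ hK₂, (Finset.forall_mem_insert ..).2 ⟨hl, ?_⟩⟩
    exact fun l' hl' => hK₂.preserves IsEdgeSplitting.isUncrossed_edgeSubdivision (hH l' hl')

lemma exists_edgeRefinement_hasSweepKeysOff (hK : IsCompleteSimplicial K) :
    ∃ (H : Finset (V →ₗ[ℝ] ℝ)) (K' : Finset (Finset V)), IsEdgeRefinement K K' ∧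
      IsCompleteSimplicial K' ∧ HasSweepKeysOff H K' ∧ ∀ l ∈ H, l ≠ 0 ∧ IsUncrossed l K' := by
  obtain ⟨K', hKK', hunc⟩ := hK.exists_forall_isUncrossed (facetForms K)
  exact ⟨facetForms K, K', hKK',
    hKK'.preserves IsEdgeSplitting.isCompleteSimplicial_edgeSubdivision hK,
    hKK'.preserves IsEdgeSplitting.hasSweepKeysOff_edgeSubdivision
      (hasSweepKeysOff_facetForms hK.isBasis),
    fun l hl => ⟨ne_zero_of_mem_facetForms hK.isBasis hl, hunc l hl⟩⟩

end IsCompleteSimplicial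

end Uncrossing

section PositiveGenerators

variable {V : Type*} [AddCommGroup V] [Module ℝ V] {K : Finset (Finset V)} {S T τ : Finset V}
  {v w ρ : V}

/-- `v` lies on none of the hyperplanes spanned by the facets of the cones of `K`. -/
def IsGeneric (K : Finset (Finset V)) (v : V) : Prop :=
  ∀ S ∈ K, ∀ ρ ∈ S, coord S ρ v ≠ 0

lemma IsGeneric.neg (hv : IsGeneric K v) : IsGeneric K (-v) := fun S hS ρ hρ => by
  rw [map_neg]
  exact neg_ne_zero.2 (hv S hS ρ hρ)

lemma exists_isGeneric (hK : ∀ S ∈ K, IsBasisFinset S) : ∃ v, IsGeneric K v := by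
  have hker : ⊤ ∉ (facetForms K).image LinearMap.ker := fun h => by
    obtain ⟨l, hl, hl'⟩ := Finset.mem_image.1 h
    exact ne_zero_of_mem_facetForms hK hl (LinearMap.ker_eq_top.1 hl')
  obtain ⟨v, hv⟩ := (Set.ne_univ_iff_exists_notMem _).1
    (Subspace.biUnion_ne_univ_of_top_notMem hker)
  refine ⟨v, fun S hS ρ hρ h0 => hv (Set.mem_biUnion (Finset.mem_coe.2 (Finset.mem_image_of_mem
    LinearMap.ker (mem_facetForms.2 ⟨S, hS, ρ, hρ, rfl⟩))) h0)⟩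

/-- The generators of the cone of `S` along which `v` has a positive coordinate. They span the
smallest face from whose relative interior the direction `-v` leads into the cone. -/
noncomputable def positiveGens (v : V) (S : Finset V) : Finset V := {ρ ∈ S | 0 < coord S ρ v}

lemma mem_positiveGens : ρ ∈ positiveGens v S ↔ ρ ∈ S ∧ 0 < coord S ρ v := Finset.mem_filter

lemma positiveGens_subset (v : V) (S : Finset V) : positiveGens v S ⊆ S := Finset.filter_subset _ _

lemma IsGeneric.coord_neg (hv : IsGeneric K v) (hS : S ∈ K) (hw : w ∈ S)
    (hw' : w ∉ positiveGens v S) : coord S w v < 0 :=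
  lt_of_le_of_ne (not_lt.1 fun h => hw' (mem_positiveGens.2 ⟨hw, h⟩)) (hv S hS w hw)

lemma IsGeneric.positiveGens_neg [DecidableEq V] (hv : IsGeneric K v) (hS : S ∈ K) :
    positiveGens (-v) S = S \ positiveGens v S := by
  ext ρ
  rw [Finset.mem_sdiff, mem_positiveGens, map_neg, neg_pos]
  refine and_congr_right fun hρ => ⟨fun h h' => ?_, hv.coord_neg hS hρ⟩
  exact h.not_gt (mem_positiveGens.1 h').2

lemma coord_sum [DecidableEq V] (hS : LinearIndepOn ℝ id (S : Set V)) (hτ : τ ⊆ S) (w : V) :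
    coord S w (∑ z ∈ τ, z) = if w ∈ τ then 1 else 0 := by
  simpa using coord_sum_smul hS hτ (fun _ => 1) w

lemma sum_mem_coneHull (hτ : τ ⊆ S) : ∑ z ∈ τ, z ∈ coneHull S :=
  coneHull_mono hτ ⟨fun _ => 1, fun _ => zero_le_one, by simp⟩

namespace IsCompleteSimplicial

lemma subset_of_sum_mem_coneHull (hK : IsCompleteSimplicial K) (hS : S ∈ K) (hT : T ∈ K)
    (hτ : τ ⊆ S) (h : ∑ z ∈ τ, z ∈ coneHull T) : τ ⊆ T := fun w hw => by
  by_contra hwT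
  have := hK.coord_eq S hS T hT _ (sum_mem_coneHull hτ) h w
  rw [coord_sum (hK.isBasis S hS).indep hτ, if_pos hw, coord_of_notMem hwT] at this
  exact one_ne_zero this

lemma exists_positiveGens_subset (hK : IsCompleteSimplicial K) (v : V) (hS : S ∈ K)
    (hτ : τ ⊆ S) : ∃ T ∈ K, positiveGens v T ⊆ τ ∧ τ ⊆ T := by
  obtain ⟨T, hT, hmem, ε, hε, hmem'⟩ := hK.exists_mem_coneHull_and_add_smul_mem (∑ z ∈ τ, z) (-v)
  have hτT := hK.subset_of_sum_mem_coneHull hS hT hτ hmem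
  refine ⟨T, hT, fun w hw => ?_, hτT⟩
  obtain ⟨hwT, hpos⟩ := mem_positiveGens.1 hw
  by_contra hwτ
  have := (hK.isBasis T hT).mem_coneHull_iff.1 hmem' w hwT
  rw [map_add, map_smul, map_neg, coord_sum (hK.isBasis T hT).indep hτT, if_neg hwτ,
    smul_eq_mul, zero_add, mul_neg] at this
  linarith [mul_pos hε hpos]

open Filter Topology in
lemma eventually_coord_sum_sub_smul_pos (hK : IsCompleteSimplicial K) (hv : IsGeneric K v)
    (hS : S ∈ K) (hpos : positiveGens v S ⊆ τ) (hτ : τ ⊆ S) :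
    ∀ᶠ ε : ℝ in 𝓝[>] 0, ∀ w ∈ S, 0 < coord S w (∑ z ∈ τ, z - ε • v) := by
  refine (eventually_all_finset S).2 fun w hw => ?_
  simp only [map_sub, map_smul, smul_eq_mul, coord_sum (hK.isBasis S hS).indep hτ]
  by_cases hwτ : w ∈ τ
  · have hlim : Tendsto (fun ε : ℝ => 1 - ε * coord S w v) (𝓝[>] 0) (𝓝 1) :=
      tendsto_nhdsWithin_of_tendsto_nhds (Continuous.tendsto' (by fun_prop) _ _ (by simp))
    simpa only [if_pos hwτ] using hlim.eventually_const_lt one_pos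
  · have hneg := hv.coord_neg hS hw fun h => hwτ (hpos h)
    filter_upwards [self_mem_nhdsWithin] with ε hε
    rw [if_neg hwτ, zero_sub, neg_pos]
    exact mul_neg_of_pos_of_neg hε hneg

lemma eq_of_positiveGens_subset (hK : IsCompleteSimplicial K) (hv : IsGeneric K v) (hS : S ∈ K)
    (hT : T ∈ K) (hSτ : positiveGens v S ⊆ τ) (hτS : τ ⊆ S) (hTτ : positiveGens v T ⊆ τ)
    (hτT : τ ⊆ T) : S = T := by
  obtain ⟨ε, hposS, hposT⟩ := ((hK.eventually_coord_sum_sub_smul_pos hv hS hSτ hτS).and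
    (hK.eventually_coord_sum_sub_smul_pos hv hT hTτ hτT)).exists
  refine (hK.isBasis S hS).eq_of_subset (hK.isBasis T hT) fun w hw => ?_
  by_contra hwT
  have := hK.coord_eq S hS T hT _
    ((hK.isBasis S hS).mem_coneHull_iff.2 fun z hz => (hposS z hz).le)
    ((hK.isBasis T hT).mem_coneHull_iff.2 fun z hz => (hposT z hz).le) w
  rw [coord_of_notMem hwT] at this
  exact (hposS w hw).ne' this

end IsCompleteSimplicial

end PositiveGenerators

section SweepOrder

variable {V : Type*} [AddCommGroup V] [Module ℝ V] {K : Finset (Finset V)} {S T : Finset V}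
  {v w ρ x : V} {l : V →ₗ[ℝ] ℝ} {H : Finset (V →ₗ[ℝ] ℝ)}

lemma exists_mem_pos_of_mem_coneHull (hx : x ∈ coneHull S) (hlx : 0 < l x) :
    ∃ w ∈ S, 0 < l w := by
  obtain ⟨c, hc, rfl⟩ := hx
  by_contra! hneg
  refine hlx.not_ge ?_
  rw [map_sum]
  exact Finset.sum_nonpos fun w hw => by
    rw [map_smul]
    exact mul_nonpos_of_nonneg_of_nonpos (hc w) (hneg w hw)

lemma IsUncrossed.sum_pos (h : IsUncrossed l K) (hS : S ∈ K) (hx : x ∈ coneHull S)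
    (hlx : 0 < l x) : 0 < l (∑ z ∈ S, z) := by
  obtain ⟨w, hw, hlw⟩ := exists_mem_pos_of_mem_coneHull hx hlx
  have hnonneg := (h S hS).resolve_right fun hneg => (hneg w hw).not_gt hlw
  rw [map_sum]
  exact Finset.sum_pos' hnonneg ⟨w, hw, hlw⟩

lemma IsUncrossed.sign_sum (h : IsUncrossed l K) (hS : S ∈ K) (hx : x ∈ coneHull S)
    (hlx : l x ≠ 0) : SignType.sign (l (∑ z ∈ S, z)) = SignType.sign (l x) := by
  rcases lt_or_gt_of_ne hlx with hneg | hpos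
  · have := h.neg.sum_pos hS hx (by simpa using hneg)
    rw [sign_neg hneg, sign_neg (by simpa using this)]
  · rw [sign_pos hpos, sign_pos (h.sum_pos hS hx hpos)]

variable [DecidableEq V]

/-- Moving from any cone of `K` against the direction `v` across a facet, one finds a cone of `K`
containing this facet with a smaller value of `key`. -/
def IsSweepOrder {L : Type*} [LT L] (K : Finset (Finset V)) (v : V) (key : Finset V → L) : Prop :=
  ∀ S ∈ K, ∀ ρ ∈ positiveGens v S, ∃ T ∈ K, S.erase ρ ⊆ T ∧ key T < key S

lemma IsCompleteSimplicial.exists_adjacent (hK : IsCompleteSimplicial K) (hS : S ∈ K)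
    (hρ : ρ ∈ S) : ∃ T ∈ K, S.erase ρ ⊆ T ∧ ρ ∉ T ∧
      ∃ ε : ℝ, 0 < ε ∧ ∑ z ∈ S.erase ρ, z - ε • ρ ∈ coneHull T := by
  have hbS := hK.isBasis S hS
  obtain ⟨T, hT, hmem, ε, hε, hmem'⟩ :=
    hK.exists_mem_coneHull_and_add_smul_mem (∑ z ∈ S.erase ρ, z) (-ρ)
  rw [smul_neg, ← sub_eq_add_neg] at hmem'
  have hsub := hK.subset_of_sum_mem_coneHull hS hT (S.erase_subset ρ) hmem
  refine ⟨T, hT, hsub, hbS.notMem_of_erase_subset (hK.isBasis T hT) ?_ hsub, ε, hε, hmem'⟩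
  rintro rfl
  have := hbS.mem_coneHull_iff.1 hmem' ρ hρ
  rw [map_sub, map_smul, coord_sum hbS.indep (S.erase_subset ρ), coord_self hbS.indep hρ,
    if_neg (S.notMem_erase ρ), smul_eq_mul] at this
  linarith

lemma IsBasisFinset.apply_eq_coord_mul (hS : IsBasisFinset S) (hρ : ρ ∈ S)
    (hl : ∀ z ∈ S.erase ρ, l z = 0) (x : V) : l x = coord S ρ x * l ρ := by
  have : l = l ρ • coord S ρ := hS.linearMap_ext fun z hz => by
    by_cases hzρ : z = ρ
    · simp [hzρ, coord_self hS.indep hρ]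
    · simp [hl z (Finset.mem_erase.2 ⟨hzρ, hz⟩), coord_of_ne hS.indep hz hzρ]
  conv_lhs => rw [this]
  simp [mul_comm]

/-- Crossing a wall inside an uncrossed hyperplane against `v` changes to the side away from `v`. -/
lemma IsUncrossed.sign_mul_lt (h : IsUncrossed l K) (hl : l ≠ 0) (hS : S ∈ K)
    (hbS : IsBasisFinset S) (hT : T ∈ K) (hρ : ρ ∈ S) (hpos : 0 < coord S ρ v) {ε : ℝ} (hε : 0 < ε)
    (hmem : ∑ z ∈ S.erase ρ, z - ε • ρ ∈ coneHull T) (hzero : ∀ z ∈ S.erase ρ, l z = 0) :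
    (SignType.sign (l (∑ z ∈ T, z)) : ℝ) * l v < SignType.sign (l (∑ z ∈ S, z)) * l v := by
  have hlρ : l ρ ≠ 0 := fun h0 => hl <| LinearMap.ext fun x => by
    simp [hbS.apply_eq_coord_mul hρ hzero x, h0]
  have hside : l (∑ z ∈ S.erase ρ, z - ε • ρ) = -(ε * l ρ) := by
    rw [map_sub, map_sum, Finset.sum_eq_zero hzero, map_smul, smul_eq_mul, zero_sub]
  have hsignS := h.sign_sum hS (mem_coneHull_of_mem hρ) hlρ
  have hsignT := h.sign_sum hT hmem (by rw [hside]; exact neg_ne_zero.2 (mul_ne_zero hε.ne' hlρ))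
  rw [hside, Left.sign_neg, sign_mul, sign_pos hε, one_mul] at hsignT
  have habs : 0 < (SignType.sign (l (∑ z ∈ S, z)) : ℝ) * l v := by
    rw [hsignS, hbS.apply_eq_coord_mul hρ hzero v, mul_left_comm, sign_mul_self]
    exact mul_pos hpos (abs_pos.2 hlρ)
  have hopp : (SignType.sign (l (∑ z ∈ T, z)) : ℝ) = -SignType.sign (l (∑ z ∈ S, z)) := by
    rw [hsignT, hsignS]
    simp
  rw [hopp]
  linarith

lemma IsCompleteSimplicial.exists_isSweepOrder (hK : IsCompleteSimplicial K)
    (hkeys : HasSweepKeysOff H K) (hH : ∀ l ∈ H, l ≠ 0 ∧ IsUncrossed l K) (v : V) :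
    ∃ key : Finset V → ℝ ×ₗ ℕ, IsSweepOrder K v key := by
  obtain ⟨key, hkey⟩ := hkeys v
  refine ⟨fun S => toLex (∑ l ∈ H, SignType.sign (l (∑ z ∈ S, z)) * l v, key S),
    fun S hS ρ hρ => ?_⟩
  obtain ⟨hρS, hpos⟩ := mem_positiveGens.1 hρ
  obtain ⟨T, hT, hsub, hρT, ε, hε, hmem⟩ := hK.exists_adjacent hS hρS
  refine ⟨T, hT, hsub, Prod.Lex.toLex_lt_toLex.2 ?_⟩
  have heq : ∀ l ∈ H, (∃ z ∈ S ∩ T, l z ≠ 0) →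
      (SignType.sign (l (∑ z ∈ T, z)) : ℝ) * l v = SignType.sign (l (∑ z ∈ S, z)) * l v := by
    rintro l hl ⟨z, hz, hlz⟩
    obtain ⟨hzS, hzT⟩ := Finset.mem_inter.1 hz
    rw [(hH l hl).2.sign_sum hS (mem_coneHull_of_mem hzS) hlz,
      (hH l hl).2.sign_sum hT (mem_coneHull_of_mem hzT) hlz]
  have hlt : ∀ l ∈ H, (∀ z ∈ S ∩ T, l z = 0) →
      (SignType.sign (l (∑ z ∈ T, z)) : ℝ) * l v < SignType.sign (l (∑ z ∈ S, z)) * l v :=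
    fun l hl hzero => (hH l hl).2.sign_mul_lt (hH l hl).1 hS (hK.isBasis S hS) hT hρS hpos hε hmem
      fun z hz => hzero z (Finset.mem_inter.2 ⟨Finset.mem_of_mem_erase hz, hsub hz⟩)
  by_cases hwall : ∀ l ∈ H, ∃ z ∈ S ∩ T, l z ≠ 0
  · exact Or.inr ⟨Finset.sum_congr rfl fun l hl => heq l hl (hwall l hl),
      hkey S hS T hT ⟨ρ, hρS, hρT, hsub, hpos⟩ hwall⟩
  · push Not at hwall
    obtain ⟨l, hl, hzero⟩ := hwall
    refine Or.inl (Finset.sum_lt_sum (fun l hl => ?_) ⟨l, hl, hlt l hl hzero⟩)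
    by_cases hz : ∃ z ∈ S ∩ T, l z ≠ 0
    · exact (heq l hl hz).le
    · exact (hlt l hl (by push Not at hz; exact hz)).le

lemma IsSweepOrder.eq_of_isMinOn {L : Type*} [LinearOrder L] {key : Finset V → L}
    (h : IsSweepOrder K v key) (hK : IsCompleteSimplicial K) (hv : IsGeneric K v) (hS : S ∈ K)
    (hT : T ∈ K) (hsub : positiveGens v S ⊆ T)
    (hmin : ∀ T' ∈ K, positiveGens v S ⊆ T' → key T ≤ key T') : T = S := by
  refine hK.eq_of_positiveGens_subset hv hT hS (fun ρ hρ => ?_) hsub subset_rfl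
    (positiveGens_subset v S)
  by_contra hρS
  obtain ⟨T', hT', hsub', hlt⟩ := h T hT ρ hρ
  exact (hmin T' hT' fun z hz =>
    hsub' (Finset.mem_erase.2 ⟨fun hzρ => hρS (hzρ ▸ hz), hsub hz⟩)).not_gt hlt

lemma IsSweepOrder.lt_of_positiveGens_subset {L : Type*} [LinearOrder L] {key : Finset V → L}
    (h : IsSweepOrder K v key) (hK : IsCompleteSimplicial K) (hv : IsGeneric K v) (hS : S ∈ K)
    (hT : T ∈ K) (hsub : positiveGens v S ⊆ T) (hne : T ≠ S) : key S < key T := by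
  obtain ⟨T₀, hT₀, hmin⟩ := ({T ∈ K | positiveGens v S ⊆ T} : Finset _).exists_min_image key
    ⟨S, Finset.mem_filter.2 ⟨hS, positiveGens_subset v S⟩⟩
  obtain ⟨hT₀K, hT₀sub⟩ := Finset.mem_filter.1 hT₀
  have hmin' : ∀ T' ∈ K, positiveGens v S ⊆ T' → key T₀ ≤ key T' :=
    fun T' hT' hsub' => hmin T' (Finset.mem_filter.2 ⟨hT', hsub'⟩)
  obtain rfl := h.eq_of_isMinOn hK hv hS hT₀K hT₀sub hmin'
  refine lt_of_le_of_ne (hmin' T hT hsub) fun heq => hne ?_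
  exact h.eq_of_isMinOn hK hv hS hT hsub fun T' hT' hsub' => heq ▸ hmin' T' hT' hsub'

end SweepOrder

section Triangular

variable {R X L : Type*} [CommRing R] [LinearOrder L] {K : Finset X} {key : X → L} {b : X → X → R}

lemma linearIndepOn_of_triangular [NoZeroDivisors R] (hself : ∀ S ∈ K, b S S ≠ 0)
    (hlt : ∀ S ∈ K, ∀ T, b S T ≠ 0 → T ≠ S → key S < key T) : LinearIndepOn R b K := by
  rw [linearIndepOn_finset_iff]
  intro g hg
  by_contra! hne
  obtain ⟨S₀, hS₀, hgS₀⟩ := hne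
  obtain ⟨S, hS, hmin⟩ := ({S ∈ K | g S ≠ 0} : Finset X).exists_min_image key
    ⟨S₀, Finset.mem_filter.2 ⟨hS₀, hgS₀⟩⟩
  obtain ⟨hSK, hgS⟩ := Finset.mem_filter.1 hS
  have hval : (∑ T ∈ K, g T • b T) S = g S * b S S := by
    rw [Finset.sum_apply]
    refine Finset.sum_eq_single_of_mem S hSK fun T hT hTS => ?_
    by_contra hne
    exact (hmin T (Finset.mem_filter.2 ⟨hT, left_ne_zero_of_mul hne⟩)).not_gt
      (hlt T hT S (right_ne_zero_of_mul hne) hTS.symm)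
  rw [hg] at hval
  exact mul_ne_zero hgS (hself S hSK) hval.symm

/-- Elimination of the values of `f` in the order of increasing keys. -/
lemma mem_span_of_triangular {N : Submodule R (X → R)} (hb : ∀ S ∈ K, b S ∈ N)
    (hN : ∀ f ∈ N, ∀ T ∉ K, f T = 0)
    (hlt : ∀ S ∈ K, ∀ T, b S T ≠ 0 → T ≠ S → key S < key T)
    (hdvd : ∀ S ∈ K, ∀ f ∈ N, (∀ T, key T < key S → f T = 0) → b S S ∣ f S)
    {f : X → R} (hf : f ∈ N) : f ∈ Submodule.span R (b '' K) := by
  suffices h : ∀ U : Finset X, U ⊆ K → (∀ S ∈ U, ∀ T ∈ K, key S < key T → T ∈ U) →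
      ∀ f ∈ N, (∀ T ∉ U, f T = 0) → f ∈ Submodule.span R (b '' K) from
    h K subset_rfl (fun _ _ _ hT _ => hT) f hf (hN f hf)
  intro U
  induction U using Finset.induction_on_min_value key with
  | empty =>
    intro _ _ f _ hf
    obtain rfl : f = 0 := funext fun T => hf T (Finset.notMem_empty T)
    exact zero_mem _
  | insert S U _ hmin ih =>
    intro hUK hup f hf hfU
    have hS := hUK (Finset.mem_insert_self S U)
    obtain ⟨a, ha⟩ := hdvd S hS f hf fun T hTS => hfU T fun hT => by
      rcases Finset.mem_insert.1 hT with rfl | hT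
      exacts [hTS.false, (hmin T hT).not_gt hTS]
    have hrest := ih ((Finset.subset_insert S U).trans hUK)
      (fun S' hS' T hT hlt' => Finset.mem_of_mem_insert_of_ne
        (hup S' (Finset.mem_insert_of_mem hS') T hT hlt')
        (by rintro rfl; exact (hmin S' hS').not_gt hlt'))
      (f - a • b S) (sub_mem hf (N.smul_mem a (hb S hS))) fun T hT => by
        rw [Pi.sub_apply, Pi.smul_apply, smul_eq_mul]
        by_cases hTS : T = S
        · rw [hTS, ha, mul_comm, sub_self]
        have hTU : T ∉ insert S U := by simp [hTS, hT]
        rw [hfU T hTU, zero_sub, neg_eq_zero]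
        by_contra hne
        have hbT := right_ne_zero_of_mul hne
        have hTK : T ∈ K := by
          by_contra hTK
          exact hbT (hN _ (hb S hS) T hTK)
        exact hTU (hup S (Finset.mem_insert_self S U) T hTK (hlt S hS T hbT hTS))
    rw [← sub_add_cancel f (a • b S)]
    exact add_mem hrest (Submodule.smul_mem _ a (Submodule.subset_span ⟨S, hS, rfl⟩))

lemma free_of_triangular [NoZeroDivisors R] {N : Submodule R (X → R)} (hb : ∀ S ∈ K, b S ∈ N)
    (hN : ∀ f ∈ N, ∀ T ∉ K, f T = 0) (hself : ∀ S ∈ K, b S S ≠ 0)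
    (hlt : ∀ S ∈ K, ∀ T, b S T ≠ 0 → T ≠ S → key S < key T)
    (hdvd : ∀ S ∈ K, ∀ f ∈ N, (∀ T, key T < key S → f T = 0) → b S S ∣ f S) :
    Module.Free R N := by
  have hspan : N = Submodule.span R (b '' K) :=
    le_antisymm (fun f hf => mem_span_of_triangular hb hN hlt hdvd hf)
      (Submodule.span_le.2 (Set.image_subset_iff.2 hb))
  rw [hspan, Set.image_eq_range]
  exact Module.Free.of_basis (Module.Basis.span (linearIndepOn_of_triangular hself hlt))

end Triangular

section MonomialFamily

variable {ι : Type*} [Fintype ι] {K : Finset (Finset (ι → ℝ))} {S G : Finset (ι → ℝ)}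
  {m : (ι → ℝ) →₀ ℕ}

/-- The family of a monomial in the generators: on the cones containing all its generators it is
the product of the corresponding coordinate forms, on the others it is `0`. -/
noncomputable def monomialFamily (K : Finset (Finset (ι → ℝ))) (m : (ι → ℝ) →₀ ℕ)
    (S : Finset (ι → ℝ)) : MvPolynomial ι ℝ :=
  if S ∈ K ∧ m.support ⊆ S then coordMonomial S m else 0

lemma monomialFamily_of_subset (hS : S ∈ K) (hm : m.support ⊆ S) :
    monomialFamily K m S = coordMonomial S m :=
  if_pos ⟨hS, hm⟩

lemma genPullback_monomialFamily (hK : ∀ S ∈ K, IsBasisFinset S) (m : (ι → ℝ) →₀ ℕ) (hS : S ∈ K)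
    (hG : G ⊆ S) : genPullback G (monomialFamily K m S) =
      if m.support ⊆ G then MvPolynomial.monomial m 1 else 0 := by
  by_cases hm : m.support ⊆ S
  · rw [monomialFamily_of_subset hS hm, genPullback_coordMonomial (hK S hS).indep hG]
  · rw [monomialFamily, if_neg (fun h => hm h.2), map_zero, if_neg fun h => hm (h.trans hG)]

lemma monomialFamily_mem (hK : ∀ S ∈ K, IsBasisFinset S) (m : (ι → ℝ) →₀ ℕ) :
    monomialFamily K m ∈ compatibleFamilies K := by
  refine ⟨fun S hS => if_neg fun h => hS h.1, fun S hS T hT => ?_⟩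
  rw [genPullback_monomialFamily hK m hS Finset.inter_subset_left,
    genPullback_monomialFamily hK m hT Finset.inter_subset_right]

lemma IsSweepOrder.free_compatibleFamilies {L : Type*} [LinearOrder L] {v : ι → ℝ}
    {key : Finset (ι → ℝ) → L} (h : IsSweepOrder K v key) (hK : IsCompleteSimplicial K)
    (hv : IsGeneric K v) : Module.Free (MvPolynomial ι ℝ) (compatibleFamilies K) := by
  have hself : ∀ S ∈ K, monomialFamily K (squarefreeExp (positiveGens v S)) S =
      coordMonomial S (squarefreeExp (positiveGens v S)) := fun S hS =>
    monomialFamily_of_subset hS ((support_squarefreeExp _).trans_subset (positiveGens_subset v S))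
  refine free_of_triangular (key := key)
    (b := fun S => monomialFamily K (squarefreeExp (positiveGens v S)))
    (fun S _ => monomialFamily_mem hK.isBasis _) (fun f hf => hf.1) (fun S hS => ?_)
    (fun S hS T hne => ?_) (fun S hS f hf hzero => ?_)
  · rw [hself S hS]
    exact coordMonomial_ne_zero (hK.isBasis S hS).indep
      ((support_squarefreeExp _).trans_subset (positiveGens_subset v S))
  · obtain ⟨hT, hsub⟩ := (ite_ne_right_iff.1 hne).1
    rw [support_squarefreeExp] at hsub
    exact h.lt_of_positiveGens_subset hK hv hS hT hsub
  · rw [hself S hS]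
    refine coordMonomial_squarefreeExp_dvd (hK.isBasis S hS) fun ρ hρ => ?_
    obtain ⟨T, hT, hsub, hlt⟩ := h S hS ρ hρ
    rw [genPullback_eq_of_subset (Finset.subset_inter (S.erase_subset ρ) hsub) (hf.2 S hS T hT),
      hzero T hlt, map_zero]

lemma IsCompleteSimplicial.projective_compatibleFamilies (hK : IsCompleteSimplicial K) :
    Module.Projective (MvPolynomial ι ℝ) (compatibleFamilies K) := by
  obtain ⟨H, K', hKK', hK', hkeys, hH⟩ := hK.exists_edgeRefinement_hasSweepKeysOff
  obtain ⟨v, hv⟩ := exists_isGeneric hK'.isBasis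
  obtain ⟨key, hkey⟩ := hK'.exists_isSweepOrder hkeys hH v
  have := hkey.free_compatibleFamilies hK' hv
  exact hKK'.projective Module.Projective.of_free

end MonomialFamily

section ProjectiveNakayama

variable {R M I : Type*} [CommRing R] [AddCommGroup M] [Module R M]

-- The projection of the free module onto the relations is a matrix over `J` fixing each relation,
-- so a relation has its coordinates in every power of `J`.
lemma injective_of_ker_coord_mem {J : Ideal R} (hJ : ⨅ n : ℕ, J ^ n = ⊥) [Module.Projective R M]
    {P : (I →₀ R) →ₗ[R] M} (hP : Function.Surjective P) (hker : ∀ x, P x = 0 → ∀ i, x i ∈ J) :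
    Function.Injective P := by
  obtain ⟨s, hs⟩ := Module.projective_lifting_property P LinearMap.id hP
  let π : (I →₀ R) →ₗ[R] (I →₀ R) := LinearMap.id - s ∘ₗ P
  have hPπ (x) : P (π x) = 0 := by
    have hsx := LinearMap.congr_fun hs (P x)
    simp only [LinearMap.comp_apply, LinearMap.id_apply] at hsx
    simp [π, hsx]
  have hpow (n : ℕ) : ∀ x, P x = 0 → ∀ i, x i ∈ J ^ n := by
    induction n with
    | zero => simp
    | succ n ih =>
      intro x hx i
      have hπx : x = x.sum fun j a => a • π (Finsupp.single j 1) :=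
        calc x = π x := by simp [π, hx]
          _ = π (x.sum fun j a => a • Finsupp.single j 1) := by simp
          _ = _ := by simp only [map_finsuppSum, map_smul]
      rw [hπx, Finsupp.sum, Finsupp.finsetSum_apply]
      refine Ideal.sum_mem _ fun j _ => ?_
      rw [Finsupp.smul_apply, smul_eq_mul, pow_succ]
      exact Ideal.mul_mem_mul (ih x hx j) (hker _ (hPπ _) i)
  refine (injective_iff_map_eq_zero P).2 fun x hx => Finsupp.ext fun i => ?_
  have hi : x i ∈ ⨅ n : ℕ, J ^ n := Submodule.mem_iInf _ |>.2 fun n => hpow n x hx i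
  simpa [hJ] using hi

end ProjectiveNakayama

section GradedParts

variable {σ k X : Type*} [CommRing k] {s t : ℕ} {f : X → MvPolynomial σ k}
  {M : Submodule (MvPolynomial σ k) (X → MvPolynomial σ k)}

/-- The degree `t` part of a module `M` of tuples of polynomials. -/
noncomputable def homogeneousPart (M : Submodule (MvPolynomial σ k) (X → MvPolynomial σ k))
    (t : ℕ) : Submodule k (X → MvPolynomial σ k) :=
  M.restrictScalars k ⊓ Submodule.pi Set.univ fun _ => MvPolynomial.homogeneousSubmodule σ k t

lemma mem_homogeneousPart :
    f ∈ homogeneousPart M t ↔ f ∈ M ∧ ∀ x, (f x).IsHomogeneous t := by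
  simp [homogeneousPart, Submodule.mem_pi]

/-- The degree `t` part of `𝔪 M`, where `𝔪` is the ideal generated by the variables. -/
noncomputable def irrelevantPart (M : Submodule (MvPolynomial σ k) (X → MvPolynomial σ k))
    (t : ℕ) : Submodule k (X → MvPolynomial σ k) :=
  Submodule.span k {h | ∃ (i : σ) (s : ℕ), s + 1 = t ∧
    ∃ f ∈ homogeneousPart M s, h = (MvPolynomial.X i : MvPolynomial σ k) • f}

/-- The degree `t` part of the fiber `M / 𝔪 M`. -/
abbrev FiberPart (M : Submodule (MvPolynomial σ k) (X → MvPolynomial σ k)) (t : ℕ) : Type _ :=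
  homogeneousPart M t ⧸ (irrelevantPart M t).comap (homogeneousPart M t).subtype

/-- Componentwise homogeneous component of degree `t` of a tuple of polynomials. -/
noncomputable def tupleComponent (t : ℕ) :
    (X → MvPolynomial σ k) →ₗ[k] (X → MvPolynomial σ k) :=
  (MvPolynomial.homogeneousComponent t).compLeft X

lemma tupleComponent_apply (t : ℕ) (f : X → MvPolynomial σ k) (x : X) :
    tupleComponent t f x = MvPolynomial.homogeneousComponent t (f x) := rfl

/-- A module of tuples of polynomials is graded if it is closed under homogeneous components and
the degrees of the entries of each tuple are bounded. -/
structure IsGradedModule (M : Submodule (MvPolynomial σ k) (X → MvPolynomial σ k)) : Prop where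
  component_mem : ∀ f ∈ M, ∀ t, tupleComponent t f ∈ M
  exists_totalDegree_lt : ∀ f ∈ M, ∃ N, ∀ x, (f x).totalDegree < N

lemma homogeneousComponent_mul_of_isHomogeneous {g : MvPolynomial σ k} (p : MvPolynomial σ k)
    (hg : g.IsHomogeneous s) (t : ℕ) :
    MvPolynomial.homogeneousComponent t (p * g) =
      if s ≤ t then MvPolynomial.homogeneousComponent (t - s) p * g else 0 := by
  let _ := MvPolynomial.gradedAlgebra (σ := σ) (R := k)
  have h_mul := DirectSum.coe_decompose_mul_of_right_mem
    (MvPolynomial.homogeneousSubmodule σ k) (a := p) t hg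
  simp only [← MvPolynomial.decomposition.decompose'_apply]
  exact h_mul

lemma tupleComponent_smul (hf : ∀ x, (f x).IsHomogeneous s) (t : ℕ) (p : MvPolynomial σ k) :
    tupleComponent t (p • f) =
      if s ≤ t then MvPolynomial.homogeneousComponent (t - s) p • f else 0 := by
  funext x
  rw [tupleComponent_apply, Pi.smul_apply, smul_eq_mul,
    homogeneousComponent_mul_of_isHomogeneous p (hf x)]
  split_ifs <;> rfl

lemma sum_tupleComponent {N : ℕ} (h : ∀ x, (f x).totalDegree < N) :
    ∑ t ∈ Finset.range N, tupleComponent t f = f := by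
  funext x
  simp only [Finset.sum_apply, tupleComponent_apply]
  conv_rhs => rw [← MvPolynomial.sum_homogeneousComponent (f x)]
  refine (Finset.sum_subset (Finset.range_subset_range.2 (h x)) fun t _ ht => ?_).symm
  exact MvPolynomial.homogeneousComponent_eq_zero _ _ (by simpa using ht)

lemma tupleComponent_eq_self (hf : f ∈ homogeneousPart M t) : tupleComponent t f = f :=
  funext fun x => by
    rw [tupleComponent_apply,
      MvPolynomial.homogeneousComponent_of_mem ((mem_homogeneousPart.1 hf).2 x), if_pos rfl]

lemma IsGradedModule.tupleComponent_mem (hM : IsGradedModule M) (hf : f ∈ M) (t : ℕ) :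
    tupleComponent t f ∈ homogeneousPart M t :=
  mem_homogeneousPart.2 ⟨hM.component_mem f hf t,
    fun _ => MvPolynomial.homogeneousComponent_isHomogeneous _ _⟩

lemma smul_mem_homogeneousPart {p : MvPolynomial σ k} (hp : p.IsHomogeneous s)
    (hf : f ∈ homogeneousPart M t) : p • f ∈ homogeneousPart M (s + t) := by
  rw [mem_homogeneousPart] at hf ⊢
  exact ⟨M.smul_mem p hf.1, fun x => hp.mul (hf.2 x)⟩

lemma smul_mem_irrelevantPart {p : MvPolynomial σ k} (hp : p.IsHomogeneous (s + 1))
    (hf : f ∈ homogeneousPart M t) : p • f ∈ irrelevantPart M (s + 1 + t) := by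
  rw [p.as_sum, Finset.sum_smul]
  refine Submodule.sum_mem _ fun m hm => ?_
  have hm_degree : m.degree = s + 1 := by
    by_contra h
    exact MvPolynomial.mem_support_iff.1 hm (hp.coeff_eq_zero h)
  obtain ⟨i, hi⟩ : ∃ i, m i ≠ 0 := by
    by_contra! h
    simp [Finsupp.ext (g := 0) h] at hm_degree
  obtain ⟨n, rfl⟩ : ∃ n, m = Finsupp.single i 1 + n :=
    exists_add_of_le (Finsupp.single_le_iff.2 (Nat.one_le_iff_ne_zero.2 hi))
  have hn_degree : n.degree = s := by
    rw [map_add, Finsupp.degree_single] at hm_degree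
    omega
  rw [← one_mul (p.coeff _), ← MvPolynomial.monomial_mul, mul_smul]
  exact Submodule.subset_span ⟨i, s + t, by omega, _, smul_mem_homogeneousPart
    (MvPolynomial.isHomogeneous_monomial _ hn_degree) hf, rfl⟩

lemma tupleComponent_smul_sub_mem_irrelevantPart (hf : f ∈ homogeneousPart M s) (t : ℕ)
    (p : MvPolynomial σ k) :
    tupleComponent t (p • f) - (if s = t then MvPolynomial.constantCoeff p • f else 0) ∈
      irrelevantPart M t := by
  rw [tupleComponent_smul (mem_homogeneousPart.1 hf).2]
  rcases lt_trichotomy s t with h | rfl | h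
  · obtain ⟨r, rfl⟩ := Nat.exists_eq_add_of_lt h
    have h_sub : s + r + 1 - s = r + 1 := by omega
    have h_add : s + r + 1 = r + 1 + s := by omega
    rw [if_pos h.le, if_neg h.ne, sub_zero, h_sub, h_add]
    exact smul_mem_irrelevantPart (MvPolynomial.homogeneousComponent_isHomogeneous (r + 1) p) hf
  · rw [if_pos le_rfl, if_pos rfl, Nat.sub_self, MvPolynomial.homogeneousComponent_zero,
      ← MvPolynomial.algebraMap_eq, algebraMap_smul, MvPolynomial.constantCoeff_eq, sub_self]
    exact zero_mem _
  · simp [h.not_ge, h.ne']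

end GradedParts

section MinimalGenerators

variable {σ k X : Type*} [Field k] {t : ℕ} {f : X → MvPolynomial σ k}
  {M : Submodule (MvPolynomial σ k) (X → MvPolynomial σ k)}

/-- Indices of a homogeneous basis of the fiber `M / 𝔪 M`, sorted by degree. -/
abbrev FiberIndex (M : Submodule (MvPolynomial σ k) (X → MvPolynomial σ k)) : Type _ :=
  Σ t : ℕ, Module.Basis.ofVectorSpaceIndex k (FiberPart M t)

/-- Homogeneous lifts to `M` of a homogeneous basis of the fiber `M / 𝔪 M`. -/
noncomputable def minimalGen (M : Submodule (MvPolynomial σ k) (X → MvPolynomial σ k))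
    (i : FiberIndex M) : homogeneousPart M i.1 :=
  (Module.Basis.ofVectorSpace k (FiberPart M i.1) i.2).out

lemma mk_minimalGen (j : Module.Basis.ofVectorSpaceIndex k (FiberPart M t)) :
    (Submodule.Quotient.mk (minimalGen M ⟨t, j⟩) : FiberPart M t) =
      Module.Basis.ofVectorSpace k (FiberPart M t) j :=
  Submodule.Quotient.mk_out _

lemma minimalGen_mem (i : FiberIndex M) : (minimalGen M i : X → MvPolynomial σ k) ∈ M :=
  (mem_homogeneousPart.1 (minimalGen M i).2).1

lemma sub_linearCombination_mem_irrelevantPart_iff (f : homogeneousPart M t)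
    (c : Module.Basis.ofVectorSpaceIndex k (FiberPart M t) →₀ k) :
    (f : X → MvPolynomial σ k) -
        Finsupp.linearCombination k (fun j => (minimalGen M ⟨t, j⟩ : X → MvPolynomial σ k)) c ∈
      irrelevantPart M t ↔
        c = (Module.Basis.ofVectorSpace k (FiberPart M t)).repr (Submodule.Quotient.mk f) := by
  let gens (j : Module.Basis.ofVectorSpaceIndex k (FiberPart M t)) : homogeneousPart M t :=
    minimalGen M ⟨t, j⟩
  have h_mk : (Submodule.Quotient.mk (Finsupp.linearCombination k gens c) : FiberPart M t) =
      (Module.Basis.ofVectorSpace k (FiberPart M t)).repr.symm c := by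
    rw [← Submodule.mkQ_apply, Finsupp.apply_linearCombination, Module.Basis.repr_symm_apply]
    exact congrArg (Finsupp.linearCombination k · c) (funext mk_minimalGen)
  have h_coe : ((Finsupp.linearCombination k gens c : homogeneousPart M t) : X → _) =
      Finsupp.linearCombination k (fun j => (minimalGen M ⟨t, j⟩ : X → MvPolynomial σ k)) c :=
    Finsupp.apply_linearCombination k (homogeneousPart M t).subtype gens c
  rw [← h_coe, ← LinearEquiv.symm_apply_eq, ← h_mk, eq_comm, Submodule.Quotient.eq]
  rfl

lemma span_minimalGen (hM : IsGradedModule M) :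
    Submodule.span (MvPolynomial σ k)
      (Set.range fun i => (minimalGen M i : X → MvPolynomial σ k)) = M := by
  set N := Submodule.span (MvPolynomial σ k)
    (Set.range fun i => (minimalGen M i : X → MvPolynomial σ k))
  refine le_antisymm (Submodule.span_le.2 <| Set.range_subset_iff.2 minimalGen_mem) fun f hf => ?_
  have h_homogeneous (t : ℕ) : homogeneousPart M t ≤ N.restrictScalars k := by
    induction t using Nat.strong_induction_on with | _ t ih =>
    have h_irrelevant : irrelevantPart M t ≤ N.restrictScalars k := by
      refine Submodule.span_le.2 ?_
      rintro _ ⟨i, s, rfl, g, hg, rfl⟩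
      exact N.smul_mem _ (ih s (Nat.lt_succ_self s) hg)
    intro g hg
    have h_sub := h_irrelevant ((sub_linearCombination_mem_irrelevantPart_iff ⟨g, hg⟩ _).2 rfl)
    refine (Submodule.sub_mem_iff_left _ ?_).1 h_sub
    exact Submodule.sum_mem _ fun j _ =>
      Submodule.smul_mem _ _ (Submodule.subset_span ⟨⟨t, j⟩, rfl⟩ : _ ∈ N)
  obtain ⟨d, hd⟩ := hM.exists_totalDegree_lt f hf
  rw [← sum_tupleComponent hd]
  exact Submodule.sum_mem _ fun t _ => h_homogeneous t (hM.tupleComponent_mem hf t)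

lemma tupleComponent_linearCombination_sub_mem (a : FiberIndex M →₀ MvPolynomial σ k) (t : ℕ) :
    tupleComponent t (Finsupp.linearCombination (MvPolynomial σ k)
        (fun i => (minimalGen M i : X → MvPolynomial σ k)) a) -
      Finsupp.linearCombination k (fun j => (minimalGen M ⟨t, j⟩ : X → MvPolynomial σ k))
        ((a.mapRange MvPolynomial.constantCoeff (map_zero _)).split t) ∈ irrelevantPart M t := by
  induction a using Finsupp.induction_linear with
  | zero =>
    have h_split : (0 : FiberIndex M →₀ k).split t = 0 :=
      Finsupp.ext fun _ => Finsupp.split_apply 0 t _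
    simp [h_split]
  | add a b ha hb =>
    have h_split (x y : FiberIndex M →₀ k) : (x + y).split t = x.split t + y.split t :=
      Finsupp.ext fun j => by simp only [Finsupp.add_apply, Finsupp.split_apply]
    rw [Finsupp.mapRange_add (map_add _), h_split]
    simp only [map_add, add_sub_add_comm]
    exact add_mem ha hb
  | single i p =>
    have h_mem := tupleComponent_smul_sub_mem_irrelevantPart (minimalGen M i).2 t p
    rw [Finsupp.mapRange_single, Finsupp.linearCombination_single]
    obtain ⟨s, j⟩ := i
    by_cases hst : s = t
    · subst hst
      have h_split (c : k) : (Finsupp.single (⟨s, j⟩ : FiberIndex M) c).split s =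
          Finsupp.single j c := Finsupp.comapDomain_single _ _ _ _
      simpa [h_split] using h_mem
    · have h_split (c : k) : (Finsupp.single (⟨s, j⟩ : FiberIndex M) c).split t = 0 :=
        Finsupp.comapDomain_single_of_not_mem_range (by simpa using hst) _ _
      simpa [h_split, hst] using h_mem

lemma constantCoeff_eq_zero_of_linearCombination_minimalGen_eq_zero
    {a : FiberIndex M →₀ MvPolynomial σ k}
    (ha : Finsupp.linearCombination (MvPolynomial σ k)
      (fun i => (minimalGen M i : X → MvPolynomial σ k)) a = 0) (i : FiberIndex M) :
    MvPolynomial.constantCoeff (a i) = 0 := by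
  have h_mem := tupleComponent_linearCombination_sub_mem a i.1
  rw [ha, map_zero] at h_mem
  have h_split := (sub_linearCombination_mem_irrelevantPart_iff 0 _).1 h_mem
  simpa [Finsupp.split_apply] using DFunLike.congr_fun h_split i.2

lemma IsGradedModule.span_minimalGen_eq_top (hM : IsGradedModule M) :
    Submodule.span (MvPolynomial σ k)
      (Set.range fun i => (⟨minimalGen M i, minimalGen_mem i⟩ : M)) = ⊤ := by
  apply Submodule.map_injective_of_injective M.injective_subtype
  rw [Submodule.map_span, ← Set.range_comp, Submodule.map_top, Submodule.range_subtype]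
  exact span_minimalGen hM

lemma IsGradedModule.linearIndependent_minimalGen [Finite σ] (hM : IsGradedModule M)
    [Module.Projective (MvPolynomial σ k) M] :
    LinearIndependent (MvPolynomial σ k)
      (fun i => (⟨minimalGen M i, minimalGen_mem i⟩ : M)) := by
  have h_ne_top : RingHom.ker (MvPolynomial.constantCoeff (R := k) (σ := σ)) ≠ ⊤ :=
    RingHom.ker_ne_top _
  refine injective_of_ker_coord_mem (Ideal.iInf_pow_eq_bot_of_isDomain _ h_ne_top) ?_ fun a ha => ?_
  · rw [← LinearMap.range_eq_top, Finsupp.range_linearCombination, hM.span_minimalGen_eq_top]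
  · have h_coe := congrArg M.subtype ha
    rw [Finsupp.apply_linearCombination] at h_coe
    exact constantCoeff_eq_zero_of_linearCombination_minimalGen_eq_zero h_coe

/-- The minimal generators form a basis of a projective graded module. -/
noncomputable def IsGradedModule.minimalBasis [Finite σ] (hM : IsGradedModule M)
    [Module.Projective (MvPolynomial σ k) M] :
    Module.Basis (FiberIndex M) (MvPolynomial σ k) M :=
  Module.Basis.mk hM.linearIndependent_minimalGen hM.span_minimalGen_eq_top.ge

lemma IsGradedModule.minimalBasis_mem [Finite σ] (hM : IsGradedModule M)
    [Module.Projective (MvPolynomial σ k) M] (i : FiberIndex M) :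
    (hM.minimalBasis i : X → MvPolynomial σ k) ∈ homogeneousPart M i.1 := by
  rw [minimalBasis, Module.Basis.mk_apply]
  exact (minimalGen M i).2

end MinimalGenerators

section HilbertFunction

variable {σ k X I : Type*} [Field k] {t : ℕ}
  {M : Submodule (MvPolynomial σ k) (X → MvPolynomial σ k)}

variable (σ k) in
/-- The degree `t` part of the polynomial ring with its grading shifted by `s`. -/
noncomputable def shiftedPart (s t : ℕ) : Submodule k (MvPolynomial σ k) :=
  if s ≤ t then MvPolynomial.homogeneousSubmodule σ k (t - s) else ⊥

lemma finite_shiftedPart [Finite σ] (s t : ℕ) : Module.Finite k (shiftedPart σ k s t) := by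
  by_cases h : s ≤ t
  · rw [shiftedPart, if_pos h]
    exact Module.Finite.iff_fg.2 (MvPolynomial.homogeneousSubmodule_fg _ _ _)
  · rw [shiftedPart, if_neg h]
    infer_instance

lemma finrank_shiftedPart (s t : ℕ) :
    Module.finrank k (shiftedPart σ k s t) =
      if s ≤ t then Module.finrank k (MvPolynomial.homogeneousSubmodule σ k (t - s)) else 0 := by
  by_cases h : s ≤ t
  · rw [shiftedPart, if_pos h, if_pos h]
  · rw [shiftedPart, if_neg h, if_neg h, finrank_bot]

lemma mem_homogeneousPart_iff_repr_mem_shiftedPart [Finite I]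
    {B : Module.Basis I (MvPolynomial σ k) M} {deg : I → ℕ}
    (hB : ∀ i, (B i : X → MvPolynomial σ k) ∈ homogeneousPart M (deg i)) (f : M) :
    (f : X → MvPolynomial σ k) ∈ homogeneousPart M t ↔
      ∀ i, B.repr f i ∈ shiftedPart σ k (deg i) t := by
  have := Fintype.ofFinite I
  have h_sum : ∑ i, B.repr f i • (B i : X → MvPolynomial σ k) = f := by
    have h_coe := congrArg M.subtype (B.sum_repr f)
    simpa only [map_sum, map_smul, Submodule.subtype_apply] using h_coe
  constructor
  · intro hf i
    let c (i : I) : MvPolynomial σ k :=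
      if deg i ≤ t then MvPolynomial.homogeneousComponent (t - deg i) (B.repr f i) else 0
    have hfc : f = ∑ i, c i • B i := by
      apply Subtype.ext
      rw [← tupleComponent_eq_self hf]
      nth_rw 1 [← h_sum]
      rw [map_sum, AddSubmonoidClass.coe_finsetSum]
      refine Finset.sum_congr rfl fun i _ => ?_
      rw [tupleComponent_smul (mem_homogeneousPart.1 (hB i)).2]
      simp only [c]
      split_ifs <;> simp
    rw [hfc, B.repr_sum_self]
    simp only [c, shiftedPart]
    split_ifs
    · exact MvPolynomial.homogeneousComponent_isHomogeneous _ _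
    · exact zero_mem _
  · intro hf
    rw [← h_sum]
    refine sum_mem fun i _ => ?_
    have hfi := hf i
    rw [shiftedPart] at hfi
    split_ifs at hfi with hi
    · simpa [Nat.sub_add_cancel hi] using smul_mem_homogeneousPart hfi (hB i)
    · simp [(Submodule.mem_bot k).1 hfi]

lemma finrank_homogeneousPart_of_basis [Finite σ] [Fintype I]
    (B : Module.Basis I (MvPolynomial σ k) M) {deg : I → ℕ}
    (hB : ∀ i, (B i : X → MvPolynomial σ k) ∈ homogeneousPart M (deg i)) (t : ℕ) :
    Module.finrank k (homogeneousPart M t) =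
      ∑ i, Module.finrank k (shiftedPart σ k (deg i) t) := by
  let Φ : (∀ i, shiftedPart σ k (deg i) t) →ₗ[k] X → MvPolynomial σ k :=
    (M.subtype.restrictScalars k) ∘ₗ (B.equivFun.symm.toLinearMap.restrictScalars k) ∘ₗ
      LinearMap.piMap fun i => (shiftedPart σ k (deg i) t).subtype
  have hΦ_inj : Function.Injective Φ :=
    Subtype.val_injective.comp (B.equivFun.symm.injective.comp
      (Function.Injective.piMap fun _ => Subtype.val_injective))
  have hΦ_range : LinearMap.range Φ = homogeneousPart M t := by
    ext f
    constructor
    · rintro ⟨a, rfl⟩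
      refine (mem_homogeneousPart_iff_repr_mem_shiftedPart hB _).2 fun i => ?_
      rw [← B.equivFun_apply]
      exact (congrFun (B.equivFun.apply_symm_apply _) i).symm ▸ (a i).2
    · intro hf
      have h_repr := (mem_homogeneousPart_iff_repr_mem_shiftedPart hB ⟨f, hf.1⟩).1 hf
      exact ⟨fun i => ⟨_, h_repr i⟩,
        congrArg M.subtype (B.equivFun.symm_apply_apply ⟨f, hf.1⟩)⟩
  have := finite_shiftedPart (σ := σ) (k := k)
  rw [← hΦ_range, LinearMap.finrank_range_of_inj hΦ_inj, Module.finrank_pi_fintype]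

theorem IsGradedModule.finrank_homogeneousPart [Finite σ] (hM : IsGradedModule M)
    [Module.Projective (MvPolynomial σ k) M] [Module.Finite (MvPolynomial σ k) M] (t : ℕ) :
    Module.finrank k (homogeneousPart M t) =
      ∑ p ∈ Finset.HasAntidiagonal.antidiagonal t, Module.finrank k (FiberPart M p.1) *
        Module.finrank k (MvPolynomial.homogeneousSubmodule σ k p.2) := by
  have : Fintype (FiberIndex M) := @Fintype.ofFinite _ (Module.Finite.finite_basis hM.minimalBasis)
  have (s : ℕ) : Fintype (Module.Basis.ofVectorSpaceIndex k (FiberPart M s)) :=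
    Fintype.ofInjective (fun j => (⟨s, j⟩ : FiberIndex M)) fun _ _ h => by simpa using h
  have h_card (s : ℕ) : Module.finrank k (FiberPart M s) =
      Fintype.card (Module.Basis.ofVectorSpaceIndex k (FiberPart M s)) :=
    Module.finrank_eq_card_basis (Module.Basis.ofVectorSpace k _)
  rw [finrank_homogeneousPart_of_basis hM.minimalBasis hM.minimalBasis_mem]
  calc ∑ i : FiberIndex M, Module.finrank k (shiftedPart σ k i.1 t)
      = ∑ i : FiberIndex M with i.1 ∈ Finset.range (t + 1),
          Module.finrank k (MvPolynomial.homogeneousSubmodule σ k (t - i.1)) := by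
        rw [Finset.sum_filter]
        simp only [finrank_shiftedPart, Finset.mem_range, Nat.lt_succ_iff]
    _ = ∑ s ∈ Finset.range (t + 1), ∑ _j : Module.Basis.ofVectorSpaceIndex k (FiberPart M s),
          Module.finrank k (MvPolynomial.homogeneousSubmodule σ k (t - s)) := by
        rw [Finset.sum_sigma']
        exact Finset.sum_congr (by ext; simp) fun _ _ => rfl
    _ = ∑ s ∈ Finset.range (t + 1), Module.finrank k (FiberPart M s) *
          Module.finrank k (MvPolynomial.homogeneousSubmodule σ k (t - s)) := by
        simp only [h_card, Finset.sum_const, Finset.card_univ, smul_eq_mul]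
    _ = _ := by rw [Finset.Nat.sum_antidiagonal_eq_sum_range_succ_mk]

theorem IsGradedModule.free [Finite σ] (hM : IsGradedModule M)
    [Module.Projective (MvPolynomial σ k) M] :
    Module.Free (MvPolynomial σ k) M :=
  Module.Free.of_basis hM.minimalBasis

end HilbertFunction

section MonomialCounts

lemma finrank_homogeneousSubmodule (σ k : Type*) [Fintype σ] [Field k] (n : ℕ) :
    Module.finrank k (MvPolynomial.homogeneousSubmodule σ k n) =
      (Fintype.card σ + n - 1).choose n := by
  have h_span : MvPolynomial.homogeneousSubmodule σ k n = Submodule.span k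
      (Set.range fun m : (Finset.univ : Finset σ).finsuppAntidiag n =>
        MvPolynomial.basisMonomials σ k m) := by
    rw [MvPolynomial.homogeneousSubmodule_eq_finsupp_supported,
      AddMonoidAlgebra.supported_eq_span_single]
    congr 1
    ext p
    simp [Finsupp.degree_eq_sum, MvPolynomial.single_eq_monomial]
  have h_indep : LinearIndependent k
      fun m : (Finset.univ : Finset σ).finsuppAntidiag n => MvPolynomial.basisMonomials σ k m :=
    (MvPolynomial.basisMonomials σ k).linearIndependent.comp _ Subtype.val_injective
  rw [h_span, finrank_span_eq_card h_indep, Fintype.card_coe,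
    Finset.card_finsuppAntidiag_nat_eq_choose, Finset.card_univ]

variable {σ : Type*} [DecidableEq σ] {S R : Finset σ} {m : σ →₀ ℕ}

lemma mem_finsuppAntidiag_iff {n : ℕ} :
    m ∈ S.finsuppAntidiag n ↔ m.support ⊆ S ∧ m.degree = n := by
  rw [Finset.mem_finsuppAntidiag', and_comm, Finsupp.degree_apply, Finsupp.sum]

lemma card_filter_subset_support (hR : R ⊆ S) (n : ℕ) :
    ({m ∈ S.finsuppAntidiag n | R ⊆ m.support}).card =
      if R.card ≤ n then (S.finsuppAntidiag (n - R.card)).card else 0 := by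
  split_ifs with hn
  · refine Finset.card_nbij' (· - squarefreeExp R) (· + squarefreeExp R) ?_ ?_ ?_ ?_
    · intro m hm
      obtain ⟨hm, hRm⟩ := Finset.mem_filter.1 hm
      obtain ⟨hmS, rfl⟩ := mem_finsuppAntidiag_iff.1 hm
      refine mem_finsuppAntidiag_iff.2 ⟨Finsupp.support_tsub.trans hmS, ?_⟩
      have h_degree := congrArg Finsupp.degree (tsub_add_cancel_of_le (squarefreeExp_le_iff.2 hRm))
      rw [map_add, degree_squarefreeExp] at h_degree
      exact Nat.eq_sub_of_add_eq h_degree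
    · intro m hm
      obtain ⟨hmS, hm⟩ := mem_finsuppAntidiag_iff.1 hm
      refine Finset.mem_filter.2 ⟨mem_finsuppAntidiag_iff.2 ⟨Finsupp.support_add.trans
        (Finset.union_subset hmS ((support_squarefreeExp R).trans_subset hR)), ?_⟩,
        squarefreeExp_le_iff.1 le_add_self⟩
      rw [map_add, degree_squarefreeExp, hm, Nat.sub_add_cancel hn]
    · exact fun m hm => tsub_add_cancel_of_le (squarefreeExp_le_iff.2 (Finset.mem_filter.1 hm).2)
    · exact fun m _ => add_tsub_cancel_right m _
  · refine Finset.card_eq_zero.2 (Finset.filter_eq_empty_iff.2 fun m hm hRm => hn ?_)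
    rw [← (mem_finsuppAntidiag_iff.1 hm).2, ← degree_squarefreeExp]
    exact Finsupp.degree_mono (squarefreeExp_le_iff.2 hRm)

end MonomialCounts

section FaceMonomials

variable {ι : Type*} [Fintype ι] {K : Finset (Finset (ι → ℝ))} {S T : Finset (ι → ℝ)}
  {f g : Finset (ι → ℝ) → MvPolynomial ι ℝ} {m n : (ι → ℝ) →₀ ℕ} {k : ℕ}

/-- The exponents of degree `k` supported on a cone of `K`: they index the degree `k` part of the
Stanley–Reisner ring of `K`. -/
noncomputable def faceMonomials {V : Type*} [DecidableEq V] (K : Finset (Finset V)) (k : ℕ) :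
    Finset (V →₀ ℕ) :=
  K.biUnion (·.finsuppAntidiag k)

lemma isGradedModule_compatibleFamilies (K : Finset (Finset (ι → ℝ))) :
    IsGradedModule (compatibleFamilies K) where
  component_mem f hf k := by
    refine ⟨fun S hS => by rw [tupleComponent_apply, hf.1 S hS, map_zero], fun S hS T hT => ?_⟩
    rw [tupleComponent_apply, tupleComponent_apply, ← homogeneousComponent_genPullback,
      ← homogeneousComponent_genPullback, hf.2 S hS T hT]
  exists_totalDegree_lt f hf := by
    refine ⟨K.sup (fun S => (f S).totalDegree) + 1, fun S => Nat.lt_succ_of_le ?_⟩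
    by_cases hS : S ∈ K
    · exact Finset.le_sup (f := fun S => (f S).totalDegree) hS
    · simp [hf.1 S hS]

lemma finite_compatibleFamilies (K : Finset (Finset (ι → ℝ))) :
    Module.Finite (MvPolynomial ι ℝ) (compatibleFamilies K) := by
  let restrict : compatibleFamilies K →ₗ[MvPolynomial ι ℝ] K → MvPolynomial ι ℝ :=
    LinearMap.funLeft _ _ Subtype.val ∘ₗ (compatibleFamilies K).subtype
  exact Module.Finite.of_injective restrict fun f g hfg =>
    Subtype.ext (compatibleFamilies_ext f.2 g.2 fun S hS => congrFun hfg ⟨S, hS⟩)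

lemma coeff_genPullback_eq (hf : f ∈ compatibleFamilies K) (hS : S ∈ K) (hT : T ∈ K)
    (hmS : m.support ⊆ S) (hmT : m.support ⊆ T) :
    (genPullback S (f S)).coeff m = (genPullback T (f T)).coeff m := by
  have hm := Finset.subset_inter hmS hmT
  rw [← coeff_genPullback_of_subset (Finset.inter_subset_left (s₂ := T)) _ hm,
    ← coeff_genPullback_of_subset (Finset.inter_subset_right (s₁ := S)) _ hm, hf.2 S hS T hT]

lemma homogeneousPart_compatibleFamilies_ext (hK : ∀ S ∈ K, IsBasisFinset S)
    (hf : f ∈ homogeneousPart (compatibleFamilies K) k)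
    (hg : g ∈ homogeneousPart (compatibleFamilies K) k)
    (h : ∀ S ∈ K, ∀ m ∈ S.finsuppAntidiag k,
      (genPullback S (f S)).coeff m = (genPullback S (g S)).coeff m) : f = g := by
  obtain ⟨hf, hf_hom⟩ := mem_homogeneousPart.1 hf
  obtain ⟨hg, hg_hom⟩ := mem_homogeneousPart.1 hg
  refine compatibleFamilies_ext hf hg fun S hS => genPullback_injective (hK S hS) ?_
  ext m
  by_cases hmS : m.support ⊆ S
  · by_cases hm : m.degree = k
    · exact h S hS m (mem_finsuppAntidiag_iff.2 ⟨hmS, hm⟩)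
    · rw [(isHomogeneous_genPullback S (hf_hom S)).coeff_eq_zero hm,
        (isHomogeneous_genPullback S (hg_hom S)).coeff_eq_zero hm]
  · rw [coeff_genPullback_of_not_subset _ hmS, coeff_genPullback_of_not_subset _ hmS]

lemma monomialFamily_mem_homogeneousPart (hK : ∀ S ∈ K, IsBasisFinset S) (hm : m.degree = k) :
    monomialFamily K m ∈ homogeneousPart (compatibleFamilies K) k := by
  refine mem_homogeneousPart.2 ⟨monomialFamily_mem hK m, fun S => ?_⟩
  rw [monomialFamily]
  split_ifs
  · exact isHomogeneous_coordSubst S (MvPolynomial.isHomogeneous_monomial 1 hm)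
  · exact MvPolynomial.isHomogeneous_zero _ _ _

lemma coeff_genPullback_sum_monomialFamily (hK : ∀ S ∈ K, IsBasisFinset S) (hS : S ∈ K)
    (hn : n ∈ S.finsuppAntidiag k) (a : ((ι → ℝ) →₀ ℕ) → ℝ) :
    (genPullback S ((∑ m ∈ faceMonomials K k, a m • monomialFamily K m) S)).coeff n = a n := by
  have h_coeff (m : (ι → ℝ) →₀ ℕ) : a m • (genPullback S (monomialFamily K m S)).coeff n =
      if m = n then a m else 0 := by
    have hnS := (mem_finsuppAntidiag_iff.1 hn).1
    rw [genPullback_monomialFamily hK m hS subset_rfl]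
    by_cases h : m = n
    · simp [h, hnS]
    · split_ifs <;> simp [MvPolynomial.coeff_monomial, h]
  simp only [Finset.sum_apply, Pi.smul_apply, map_sum, map_smul, MvPolynomial.coeff_sum,
    MvPolynomial.coeff_smul, h_coeff]
  exact (Finset.sum_ite_eq' _ n a).trans (if_pos (Finset.mem_biUnion.2 ⟨S, hS, hn⟩))

lemma linearIndepOn_monomialFamily (hK : ∀ S ∈ K, IsBasisFinset S) (k : ℕ) :
    LinearIndepOn ℝ (monomialFamily K) (faceMonomials K k : Set ((ι → ℝ) →₀ ℕ)) := by
  refine linearIndepOn_finset_iff.2 fun a ha n hn => ?_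
  obtain ⟨S, hS, hnS⟩ := Finset.mem_biUnion.1 hn
  rw [← coeff_genPullback_sum_monomialFamily hK hS hnS a, ha]
  simp

lemma homogeneousPart_compatibleFamilies_eq_span (hK : ∀ S ∈ K, IsBasisFinset S) (k : ℕ) :
    homogeneousPart (compatibleFamilies K) k =
      Submodule.span ℝ (monomialFamily K '' (faceMonomials K k : Set ((ι → ℝ) →₀ ℕ))) := by
  have h_le : ∀ m ∈ faceMonomials K k,
      monomialFamily K m ∈ homogeneousPart (compatibleFamilies K) k := fun m hm =>
    have ⟨_, _, hmS⟩ := Finset.mem_biUnion.1 hm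
    monomialFamily_mem_homogeneousPart hK (mem_finsuppAntidiag_iff.1 hmS).2
  refine le_antisymm (fun f hf => ?_) (Submodule.span_le.2 (Set.image_subset_iff.2 h_le))
  choose! T hTK hT using fun m (hm : m ∈ faceMonomials K k) => Finset.mem_biUnion.1 hm
  have hf_sum : f = ∑ m ∈ faceMonomials K k,
      (genPullback (T m) (f (T m))).coeff m • monomialFamily K m := by
    refine homogeneousPart_compatibleFamilies_ext hK hf
      (Submodule.sum_mem _ fun m hm => Submodule.smul_mem _ _ (h_le m hm)) fun S hS m hm => ?_
    have hmK : m ∈ faceMonomials K k := Finset.mem_biUnion.2 ⟨S, hS, hm⟩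
    rw [coeff_genPullback_sum_monomialFamily hK hS hm
      fun m => (genPullback (T m) (f (T m))).coeff m]
    exact coeff_genPullback_eq (mem_homogeneousPart.1 hf).1 hS (hTK m hmK)
      (mem_finsuppAntidiag_iff.1 hm).1 (mem_finsuppAntidiag_iff.1 (hT m hmK)).1
  rw [hf_sum]
  exact Submodule.sum_mem _ fun m hm => Submodule.smul_mem _ _
    (Submodule.subset_span (Set.mem_image_of_mem _ hm))

lemma finrank_homogeneousPart_compatibleFamilies (hK : ∀ S ∈ K, IsBasisFinset S) (k : ℕ) :
    Module.finrank ℝ (homogeneousPart (compatibleFamilies K) k) = (faceMonomials K k).card := by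
  rw [homogeneousPart_compatibleFamilies_eq_span hK, Set.image_eq_range,
    finrank_span_eq_card (linearIndepOn_monomialFamily hK k)]
  simp

end FaceMonomials

section HVector

lemma eq_of_sum_antidiagonal_mul_eq {R : Type*} [CommRing R] [IsDomain R] {a b h : ℕ → R}
    (h0 : h 0 ≠ 0) (hab : ∀ t, ∑ p ∈ Finset.HasAntidiagonal.antidiagonal t, a p.1 * h p.2 =
      ∑ p ∈ Finset.HasAntidiagonal.antidiagonal t, b p.1 * h p.2) : a = b := by
  have hh : PowerSeries.mk h ≠ 0 := fun hh => h0 (by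
    simpa using congrArg (PowerSeries.coeff 0) hh)
  have hmul : PowerSeries.mk a * PowerSeries.mk h = PowerSeries.mk b * PowerSeries.mk h := by
    ext t
    simpa only [PowerSeries.coeff_mul, PowerSeries.coeff_mk] using hab t
  funext t
  simpa using congrArg (PowerSeries.coeff t) (mul_right_cancel₀ hh hmul)

lemma sum_Icc_sub_one_pow {α R : Type*} [DecidableEq α] [CommRing R] (y : R) {S T : Finset α}
    (hTS : T ⊆ S) : ∑ τ ∈ Finset.Icc T S, (y - 1) ^ (S.card - τ.card) = y ^ (S.card - T.card) := by
  have hdisj {U : Finset α} (hU : U ∈ (S \ T).powerset) : Disjoint T U :=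
    Finset.disjoint_sdiff.mono_right (Finset.mem_powerset.1 hU)
  calc ∑ τ ∈ Finset.Icc T S, (y - 1) ^ (S.card - τ.card)
      = ∑ U ∈ (S \ T).powerset, (y - 1) ^ (S.card - (T ∪ U).card) := by
        rw [Finset.Icc_eq_image_powerset hTS, Finset.sum_image fun U hU U' hU' h => ?_]
        rw [← (hdisj hU).sdiff_eq_of_sup_eq rfl, ← (hdisj hU').sdiff_eq_of_sup_eq rfl]
        exact congrArg (· \ T) h
    _ = ∑ U ∈ (S \ T).powerset, 1 ^ U.card * (y - 1) ^ ((S \ T).card - U.card) :=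
        Finset.sum_congr rfl fun U hU => by
          rw [Finset.card_union_of_disjoint (hdisj hU), Finset.card_sdiff_of_subset hTS, one_pow,
            one_mul, Nat.sub_sub]
    _ = y ^ (S.card - T.card) := by
        rw [Finset.sum_pow_mul_eq_add_pow, add_sub_cancel, Finset.card_sdiff_of_subset hTS]

-- Perturbing a point in the relative interior of a face by `-ε v` singles out one cone containing
-- the face, so the intervals `[positiveGens v S, S]` partition the faces.
lemma IsCompleteSimplicial.sum_biUnion_eq {V α N : Type*} [AddCommGroup V] [Module ℝ V]
    [DecidableEq V] [DecidableEq α] [AddCommMonoid N] {K : Finset (Finset V)} {v : V}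
    (hK : IsCompleteSimplicial K) (hv : IsGeneric K v) {face : α → Finset V} {P : α → Prop}
    {F : Finset V → Finset α} (hF : ∀ S a, a ∈ F S ↔ face a ⊆ S ∧ P a) (g : α → N) :
    ∑ a ∈ K.biUnion F, g a = ∑ S ∈ K, ∑ a ∈ F S with positiveGens v S ⊆ face a, g a := by
  have h_eq : K.biUnion F = K.biUnion fun S => {a ∈ F S | positiveGens v S ⊆ face a} := by
    ext a
    simp only [Finset.mem_biUnion, Finset.mem_filter, hF]
    constructor
    · rintro ⟨S, hS, haS, ha⟩
      obtain ⟨T, hT, hTa, haT⟩ := hK.exists_positiveGens_subset v hS haS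
      exact ⟨T, hT, ⟨haT, ha⟩, hTa⟩
    · exact fun ⟨S, hS, ha, _⟩ => ⟨S, hS, ha⟩
  rw [h_eq, Finset.sum_biUnion]
  refine fun S hS T hT hne => Finset.disjoint_left.2 fun a haS haT => hne ?_
  simp only [Finset.mem_filter, hF] at haS haT
  exact hK.eq_of_positiveGens_subset hv hS hT haS.2 haS.1.1 haT.2 haT.1.1

variable {ι : Type*} [Fintype ι] {K : Finset (Finset (ι → ℝ))} {v : ι → ℝ}

lemma IsCompleteSimplicial.card_faceMonomials (hK : IsCompleteSimplicial K) (hv : IsGeneric K v)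
    (t : ℕ) : (faceMonomials K t).card =
      ∑ p ∈ Finset.HasAntidiagonal.antidiagonal t, ({S ∈ K | (positiveGens v S).card = p.1}).card *
        Module.finrank ℝ (MvPolynomial.homogeneousSubmodule ι ℝ p.2) := by
  have h_count {S : Finset (ι → ℝ)} (hS : S ∈ K) (n : ℕ) : (S.finsuppAntidiag n).card =
      Module.finrank ℝ (MvPolynomial.homogeneousSubmodule ι ℝ n) := by
    rw [finrank_homogeneousSubmodule, Finset.card_finsuppAntidiag_nat_eq_choose,
      (hK.isBasis S hS).card_eq_finrank, Module.finrank_fintype_fun_eq_card]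
  calc (faceMonomials K t).card
      = ∑ S ∈ K, ∑ m ∈ S.finsuppAntidiag t with positiveGens v S ⊆ m.support, 1 := by
        rw [Finset.card_eq_sum_ones, faceMonomials]
        exact hK.sum_biUnion_eq hv (fun _ _ => mem_finsuppAntidiag_iff) _
    _ = ∑ S ∈ K, ∑ p ∈ Finset.HasAntidiagonal.antidiagonal t,
          if (positiveGens v S).card = p.1 then
            Module.finrank ℝ (MvPolynomial.homogeneousSubmodule ι ℝ p.2) else 0 := by
        refine Finset.sum_congr rfl fun S hS => ?_
        rw [← Finset.card_eq_sum_ones, card_filter_subset_support (positiveGens_subset v S),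
          h_count hS, Finset.Nat.sum_antidiagonal_eq_sum_range_succ_mk]
        simp
    _ = _ := by
        rw [Finset.sum_comm]
        refine Finset.sum_congr rfl fun p _ => ?_
        rw [← Finset.sum_filter, Finset.sum_const, smul_eq_mul]

lemma IsCompleteSimplicial.finrank_fiberPart_eq_card (hK : IsCompleteSimplicial K)
    (hv : IsGeneric K v) (k : ℕ) :
    Module.finrank ℝ (FiberPart (compatibleFamilies K) k) =
      ({S ∈ K | (positiveGens v S).card = k}).card := by
  have := hK.projective_compatibleFamilies
  have := finite_compatibleFamilies K
  refine Nat.cast_injective (R := ℤ) (congrFun (eq_of_sum_antidiagonal_mul_eq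
    (a := fun n => (Module.finrank ℝ (FiberPart (compatibleFamilies K) n) : ℤ))
    (b := fun n => (({S ∈ K | (positiveGens v S).card = n}).card : ℤ))
    (h := fun n => (Module.finrank ℝ (MvPolynomial.homogeneousSubmodule ι ℝ n) : ℤ))
    ?_ fun t => ?_) k)
  · simp [finrank_homogeneousSubmodule]
  · exact_mod_cast (isGradedModule_compatibleFamilies K).finrank_homogeneousPart t ▸
      finrank_homogeneousPart_compatibleFamilies hK.isBasis t ▸ hK.card_faceMonomials hv t

/-- The generating sets of all faces of the cones of `K`. -/
noncomputable def faces {V : Type*} [DecidableEq V] (K : Finset (Finset V)) : Finset (Finset V) :=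
  K.biUnion Finset.powerset

theorem IsCompleteSimplicial.finrank_fiberPart (hK : IsCompleteSimplicial K) (k : ℕ) :
    (Module.finrank ℝ (FiberPart (compatibleFamilies K) k) : ℚ) =
      (∑ τ ∈ faces K, (X - 1 : ℚ[X]) ^ (Fintype.card ι - τ.card)).coeff k := by
  obtain ⟨v, hv⟩ := exists_isGeneric hK.isBasis
  have h_card {S : Finset (ι → ℝ)} (hS : S ∈ K) : Fintype.card ι = S.card := by
    rw [(hK.isBasis S hS).card_eq_finrank, Module.finrank_fintype_fun_eq_card]
  have h_sum : ∑ τ ∈ faces K, (X - 1 : ℚ[X]) ^ (Fintype.card ι - τ.card) =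
      ∑ S ∈ K, X ^ (positiveGens (-v) S).card := by
    rw [faces, hK.sum_biUnion_eq hv (face := id) (P := fun _ => True)
      (F := Finset.powerset) (by simp)]
    refine Finset.sum_congr rfl fun S hS => ?_
    rw [hv.positiveGens_neg hS, Finset.card_sdiff_of_subset (positiveGens_subset v S), h_card hS,
      ← sum_Icc_sub_one_pow X (positiveGens_subset v S), Finset.Icc_eq_filter_powerset]
    rfl
  rw [h_sum, hK.finrank_fiberPart_eq_card hv.neg, Polynomial.finsetSum_coeff, Finset.card_filter]
  push_cast
  simp only [Polynomial.coeff_X_pow, eq_comm]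

end HVector

section Faces

variable {V : Type*} [AddCommGroup V] [Module ℝ V] {S T : Finset V} {σ : Set V}

lemma nonpos_of_mem_coneHull {l : V →ₗ[ℝ] ℝ} (hl : ∀ w ∈ S, l w ≤ 0) {x : V}
    (hx : x ∈ coneHull S) : l x ≤ 0 := by
  obtain ⟨c, hc, rfl⟩ := hx
  rw [map_sum]
  refine Finset.sum_nonpos fun w hw => ?_
  rw [map_smul, smul_eq_mul]
  exact mul_nonpos_of_nonneg_of_nonpos (hc w) (hl w hw)

lemma setOf_mem_coneHull_and_eq_zero {l : V →ₗ[ℝ] ℝ} (hl : ∀ w ∈ S, l w ≤ 0) :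
    {x | x ∈ coneHull S ∧ l x = 0} = coneHull {w ∈ S | l w = 0} := by
  ext x
  constructor
  · rintro ⟨⟨c, hc, rfl⟩, hzero⟩
    simp only [map_sum, map_smul, smul_eq_mul] at hzero
    have hterm := (Finset.sum_eq_zero_iff_of_nonpos fun w hw =>
      mul_nonpos_of_nonneg_of_nonpos (hc w) (hl w hw)).1 hzero
    refine ⟨c, hc, (Finset.sum_filter_of_ne fun w hw hne => ?_).symm⟩
    exact (mul_eq_zero.1 (hterm w hw)).resolve_left fun hcw => hne (by rw [hcw, zero_smul])
  · refine fun hx => ⟨coneHull_mono (Finset.filter_subset _ _) hx, ?_⟩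
    obtain ⟨c, -, rfl⟩ := hx
    rw [map_sum]
    exact Finset.sum_eq_zero fun w hw => by
      rw [map_smul, (Finset.mem_filter.1 hw).2, smul_zero]

lemma IsConeFace.exists_eq_coneHull (h : IsConeFace (coneHull S) σ) :
    ∃ T ⊆ S, σ = coneHull T := by
  rcases h with rfl | ⟨l, hl, rfl⟩
  · exact ⟨S, subset_rfl, rfl⟩
  · exact ⟨_, Finset.filter_subset _ _,
      setOf_mem_coneHull_and_eq_zero fun w hw => hl w (mem_coneHull_of_mem hw)⟩

lemma isConeFace_coneHull (hS : LinearIndepOn ℝ id (S : Set V)) (hT : T ⊆ S) :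
    IsConeFace (coneHull S) (coneHull T) := by
  let l : V →ₗ[ℝ] ℝ := -∑ z ∈ S \ T, coord S z
  have hl : ∀ w ∈ S, l w = if w ∈ T then 0 else -1 := by
    intro w hw
    split_ifs with hwT <;> simp [l, coord_apply hS hw, hw, hwT]
  have hl_nonpos : ∀ w ∈ S, l w ≤ 0 := fun w hw => by
    rw [hl w hw]
    split_ifs <;> norm_num
  refine Or.inr ⟨l, fun x => nonpos_of_mem_coneHull hl_nonpos, ?_⟩
  rw [setOf_mem_coneHull_and_eq_zero hl_nonpos]
  congr 1
  ext w
  rw [Finset.mem_filter]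
  exact ⟨fun hw => ⟨hT hw, by rw [hl w (hT hw), if_pos hw]⟩,
    fun hw => by_contra fun hwT => by simp [hl w hw.1, hwT] at hw⟩

lemma span_coneHull (S : Finset V) :
    Submodule.span ℝ (coneHull S) = Submodule.span ℝ (S : Set V) :=
  le_antisymm (Submodule.span_le.2 (coneHull_subset_span S))
    (Submodule.span_mono fun _ => mem_coneHull_of_mem)

lemma coneHull_image_smul [DecidableEq V] {a : V → ℝ} (ha : ∀ w ∈ S, 0 < a w) :
    coneHull (S.image fun w => a w • w) = coneHull S := by
  refine (coneHull_subset_coneHull fun z hz => ?_).antisymm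
    (coneHull_subset_coneHull fun w hw => ?_)
  · obtain ⟨w, hw, rfl⟩ := Finset.mem_image.1 hz
    exact smul_mem_coneHull (ha w hw).le hw
  · rw [← inv_smul_smul₀ (ha w hw).ne' w]
    exact smul_mem_coneHull (inv_nonneg.2 (ha w hw).le) (Finset.mem_image_of_mem _ hw)

end Faces

section UnitGenerators

variable {V : Type*} [NormedAddCommGroup V] [NormedSpace ℝ V] {S T : Finset V} {σ : Set V}

/-- A linearly independent set of unit vectors. A simplicial cone has exactly one such set of
generators, which makes the choice of generators compatible with passing to faces. -/
structure IsUnitIndep (S : Finset V) : Prop where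
  indep : LinearIndepOn ℝ id (S : Set V)
  norm_eq_one : ∀ w ∈ S, ‖w‖ = 1

namespace IsUnitIndep

lemma mono (hS : IsUnitIndep S) (hT : T ⊆ S) : IsUnitIndep T :=
  ⟨hS.indep.mono (Finset.coe_subset.2 hT), fun w hw => hS.norm_eq_one w (hT hw)⟩

lemma subset_of_coneHull_eq (hS : IsUnitIndep S) (hT : IsUnitIndep T)
    (h : coneHull S = coneHull T) : S ⊆ T := by
  intro w hw
  -- The ray through `w` is a face of the cone, so it is spanned by elements of `T`.
  obtain ⟨R, hR, hwR⟩ := (h ▸ isConeFace_coneHull hS.indep (Finset.singleton_subset_iff.2 hw) :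
    IsConeFace (coneHull T) (coneHull {w})).exists_eq_coneHull
  have hR_eq : ∀ t ∈ R, t = w := by
    intro t ht
    obtain ⟨c, hc, htc⟩ : t ∈ coneHull {w} := hwR ▸ mem_coneHull_of_mem ht
    rw [Finset.sum_singleton] at htc
    have hnorm := hT.norm_eq_one t (hR ht)
    rw [htc, norm_smul, hS.norm_eq_one w hw, mul_one, Real.norm_of_nonneg (hc w)] at hnorm
    rw [htc, hnorm, one_smul]
  obtain ⟨c, -, hwc⟩ : w ∈ coneHull R := hwR ▸ mem_coneHull_of_mem (Finset.mem_singleton_self w)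
  obtain ⟨t, ht⟩ : R.Nonempty := by
    by_contra hne
    rw [Finset.not_nonempty_iff_eq_empty.1 hne, Finset.sum_empty] at hwc
    simpa [hwc] using hS.norm_eq_one w hw
  exact hR_eq t ht ▸ hR ht

lemma eq_of_coneHull_eq (hS : IsUnitIndep S) (hT : IsUnitIndep T)
    (h : coneHull S = coneHull T) : S = T :=
  (hS.subset_of_coneHull_eq hT h).antisymm (hT.subset_of_coneHull_eq hS h.symm)

end IsUnitIndep

lemma exists_isUnitIndep (hS : LinearIndepOn ℝ id (S : Set V)) :
    ∃ T, IsUnitIndep T ∧ coneHull T = coneHull S := by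
  have hnorm : ∀ w ∈ S, 0 < ‖w‖ := fun w hw => norm_pos_iff.2 (hS.ne_zero hw)
  refine ⟨S.image fun w => ‖w‖⁻¹ • w, ⟨?_, ?_⟩,
    coneHull_image_smul fun w hw => inv_pos.2 (hnorm w hw)⟩
  · have := hS.units_smul fun w : (S : Set V) =>
      Units.mk0 ‖(w : V)‖⁻¹ (inv_ne_zero (hnorm w w.2).ne')
    rw [Finset.coe_image]
    exact LinearIndepOn.id_image (v := fun w => ‖w‖⁻¹ • w) this
  · simp only [Finset.mem_image, forall_exists_index, and_imp, forall_apply_eq_imp_iff₂]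
    exact fun w hw => norm_smul_inv_norm (norm_ne_zero_iff.1 (hnorm w hw).ne')

end UnitGenerators

section Fans

variable {V : Type*} [NormedAddCommGroup V] [NormedSpace ℝ V] {S T : Finset V} {σ : Set V}
  {Δ : Finset (Set V)}

/-- The unit generators of the cone `σ`; the junk value for a non-simplicial cone is `∅`. -/
noncomputable def unitGens (σ : Set V) : Finset V :=
  if h : ∃ S, IsUnitIndep S ∧ coneHull S = σ then h.choose else ∅

lemma unitGens_coneHull (hS : IsUnitIndep S) : unitGens (coneHull S) = S := by
  have h : ∃ T, IsUnitIndep T ∧ coneHull T = coneHull S := ⟨S, hS, rfl⟩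
  rw [unitGens, dif_pos h]
  exact h.choose_spec.1.eq_of_coneHull_eq hS h.choose_spec.2

/-- The sets of unit generators of the maximal cones of a complete simplicial fan, namely of those
which are bases of the ambient space. -/
noncomputable def maximalGens (Δ : Finset (Set V)) : Finset (Finset V) :=
  {S ∈ Δ.image unitGens | IsBasisFinset S}

lemma IsFan.exists_inter_eq_coneHull (hΔ : IsFan Δ) (hS : IsUnitIndep S) (hT : IsUnitIndep T)
    (hSΔ : coneHull S ∈ Δ) (hTΔ : coneHull T ∈ Δ) :
    ∃ R, R ⊆ S ∧ R ⊆ T ∧ coneHull S ∩ coneHull T = coneHull R := by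
  obtain ⟨hfaceS, hfaceT⟩ := hΔ.2.2 _ hSΔ _ hTΔ
  obtain ⟨R, hRS, hR⟩ := hfaceS.exists_eq_coneHull
  obtain ⟨R', hR'T, hR'⟩ := hfaceT.exists_eq_coneHull
  obtain rfl := (hS.mono hRS).eq_of_coneHull_eq (hT.mono hR'T) (hR.symm.trans hR')
  exact ⟨R, hRS, hR'T, hR⟩

lemma exists_forall_mem_span_imp_eq_top (Δ : Finset (Set V)) :
    ∃ z, ∀ σ ∈ Δ, z ∈ Submodule.span ℝ σ → Submodule.span ℝ σ = ⊤ := by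
  have hproper : ⊤ ∉ {W ∈ Δ.image (Submodule.span ℝ) | W ≠ ⊤} := by simp
  obtain ⟨z, hz⟩ := (Set.ne_univ_iff_exists_notMem _).1
    (Subspace.biUnion_ne_univ_of_top_notMem hproper)
  simp only [Set.mem_iUnion, exists_prop, not_exists, not_and, Finset.mem_filter] at hz
  exact ⟨z, fun σ hσ hzσ => by_contra fun htop =>
    hz _ ⟨Finset.mem_image_of_mem _ hσ, htop⟩ hzσ⟩

open Filter Topology in
lemma mem_span_of_frequently_add_smul_mem {y z : V} (h : ∃ᶠ ε : ℝ in 𝓝[>] 0, y + ε • z ∈ σ) :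
    z ∈ Submodule.span ℝ σ := by
  obtain ⟨ε, hε, hεpos⟩ := (h.and_eventually self_mem_nhdsWithin).exists
  obtain ⟨δ, hδ, -, hδε⟩ := (h.and_eventually (Ioo_mem_nhdsGT hεpos)).exists
  have hdiff : (ε - δ) • z = (y + ε • z) - (y + δ • z) := by module
  refine (Submodule.smul_mem_iff _ (sub_pos.2 hδε).ne').1 ?_
  rw [hdiff]
  exact Submodule.sub_mem _ (Submodule.subset_span hε) (Submodule.subset_span hδ)

namespace IsSimplicialFan

lemma isUnitIndep_unitGens_and_coneHull_unitGens (hΔ : IsSimplicialFan Δ) (hσ : σ ∈ Δ) :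
    IsUnitIndep (unitGens σ) ∧ coneHull (unitGens σ) = σ := by
  obtain ⟨S, hS, rfl⟩ := hΔ.2 σ hσ
  obtain ⟨T, hT, hTS⟩ := exists_isUnitIndep hS
  rw [← hTS, unitGens_coneHull hT]
  exact ⟨hT, rfl⟩

lemma isUnitIndep_unitGens (hΔ : IsSimplicialFan Δ) (hσ : σ ∈ Δ) : IsUnitIndep (unitGens σ) :=
  (hΔ.isUnitIndep_unitGens_and_coneHull_unitGens hσ).1

lemma coneHull_unitGens (hΔ : IsSimplicialFan Δ) (hσ : σ ∈ Δ) : coneHull (unitGens σ) = σ :=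
  (hΔ.isUnitIndep_unitGens_and_coneHull_unitGens hσ).2

lemma mem_maximalGens (hΔ : IsSimplicialFan Δ) :
    S ∈ maximalGens Δ ↔ IsUnitIndep S ∧ IsBasisFinset S ∧ coneHull S ∈ Δ := by
  rw [maximalGens, Finset.mem_filter, Finset.mem_image]
  constructor
  · rintro ⟨⟨σ, hσ, rfl⟩, hbasis⟩
    exact ⟨hΔ.isUnitIndep_unitGens hσ, hbasis, (hΔ.coneHull_unitGens hσ).symm ▸ hσ⟩
  · exact fun ⟨hS, hbasis, hSΔ⟩ => ⟨⟨_, hSΔ, unitGens_coneHull hS⟩, hbasis⟩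

lemma finrank_span (hΔ : IsSimplicialFan Δ) (hσ : σ ∈ Δ) :
    Module.finrank ℝ (Submodule.span ℝ σ) = (unitGens σ).card := by
  conv_lhs => rw [← hΔ.coneHull_unitGens hσ, span_coneHull]
  exact finrank_span_finset_eq_card (hΔ.isUnitIndep_unitGens hσ).indep

-- Approach `x` in a direction lying in no proper span of a cone: the cones met arbitrarily close
-- to `x` are full-dimensional, and they are closed.
lemma exists_mem_maximalGens (hΔ : IsSimplicialFan Δ) (hcomplete : IsCompleteFan Δ) (x : V) :
    ∃ S ∈ maximalGens Δ, x ∈ coneHull S := by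
  obtain ⟨z, hz⟩ := exists_forall_mem_span_imp_eq_top Δ
  have hcover : ∀ y, ∃ σ ∈ Δ, y ∈ σ := fun y => by
    have hy : y ∈ ⋃ σ ∈ Δ, σ := hcomplete.2 ▸ Set.mem_univ y
    simpa using hy
  obtain ⟨σ, hσ, hfreq⟩ := exists_frequently_add_smul_mem (C := id) hcover x z
  have hspan := hz σ hσ (mem_span_of_frequently_add_smul_mem hfreq)
  have hbasis : IsBasisFinset (unitGens σ) :=
    ⟨(hΔ.isUnitIndep_unitGens hσ).indep, by rw [← span_coneHull, hΔ.coneHull_unitGens hσ, hspan]⟩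
  refine ⟨unitGens σ, Finset.mem_filter.2 ⟨Finset.mem_image_of_mem _ hσ, hbasis⟩,
    hbasis.mem_coneHull_of_frequently (z := z) ?_⟩
  rwa [hΔ.coneHull_unitGens hσ]

theorem isCompleteSimplicial_maximalGens (hΔ : IsSimplicialFan Δ) (hcomplete : IsCompleteFan Δ) :
    IsCompleteSimplicial (maximalGens Δ) where
  isBasis S hS := (hΔ.mem_maximalGens.1 hS).2.1
  exists_mem_coneHull := hΔ.exists_mem_maximalGens hcomplete
  coord_eq S hS T hT x hxS hxT z := by
    obtain ⟨hS, -, hSΔ⟩ := hΔ.mem_maximalGens.1 hS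
    obtain ⟨hT, -, hTΔ⟩ := hΔ.mem_maximalGens.1 hT
    obtain ⟨R, hRS, hRT, hR⟩ := hΔ.1.exists_inter_eq_coneHull hS hT hSΔ hTΔ
    obtain ⟨c, -, rfl⟩ : x ∈ coneHull R := hR ▸ ⟨hxS, hxT⟩
    rw [coord_sum_smul hS.indep hRS, coord_sum_smul hT.indep hRT]

lemma exists_unitGens_subset (hΔ : IsSimplicialFan Δ) (hcomplete : IsCompleteFan Δ) (hσ : σ ∈ Δ) :
    ∃ S ∈ maximalGens Δ, unitGens σ ⊆ S := by
  obtain ⟨S, hS, hsum⟩ := hΔ.exists_mem_maximalGens hcomplete (∑ w ∈ unitGens σ, w)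
  obtain ⟨hSunit, -, hSΔ⟩ := hΔ.mem_maximalGens.1 hS
  have hσunit := hΔ.isUnitIndep_unitGens hσ
  obtain ⟨R, hRσ, hRS, hR⟩ := hΔ.1.exists_inter_eq_coneHull hσunit hSunit
    ((hΔ.coneHull_unitGens hσ).symm ▸ hσ) hSΔ
  obtain ⟨c, -, hc⟩ : ∑ w ∈ unitGens σ, w ∈ coneHull R :=
    hR ▸ ⟨sum_mem_coneHull subset_rfl, hsum⟩
  refine ⟨S, hS, fun w hw => hRS (by_contra fun hwR => ?_)⟩
  have := congrArg (coord (unitGens σ) w) hc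
  rw [coord_sum hσunit.indep subset_rfl, coord_sum_smul hσunit.indep hRσ, if_pos hw,
    if_neg hwR] at this
  exact one_ne_zero this

lemma faces_maximalGens [DecidableEq V] (hΔ : IsSimplicialFan Δ) (hcomplete : IsCompleteFan Δ) :
    faces (maximalGens Δ) = Δ.image unitGens := by
  ext τ
  rw [faces, Finset.mem_biUnion, Finset.mem_image]
  constructor
  · rintro ⟨S, hS, hτS⟩
    obtain ⟨hS, -, hSΔ⟩ := hΔ.mem_maximalGens.1 hS
    rw [Finset.mem_powerset] at hτS
    exact ⟨coneHull τ, hΔ.1.2.1 _ hSΔ _ (isConeFace_coneHull hS.indep hτS),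
      unitGens_coneHull (hS.mono hτS)⟩
  · rintro ⟨σ, hσ, rfl⟩
    obtain ⟨S, hS, hsub⟩ := hΔ.exists_unitGens_subset hcomplete hσ
    exact ⟨S, hS, Finset.mem_powerset.2 hsub⟩

lemma sum_finrank_span [DecidableEq V] {M : Type*} [AddCommMonoid M] (hΔ : IsSimplicialFan Δ)
    (hcomplete : IsCompleteFan Δ) (F : ℕ → M) :
    ∑ σ ∈ Δ, F (Module.finrank ℝ (Submodule.span ℝ σ)) =
      ∑ τ ∈ faces (maximalGens Δ), F τ.card := by
  rw [hΔ.faces_maximalGens hcomplete, Finset.sum_image fun σ hσ σ' hσ' h => ?_]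
  · exact Finset.sum_congr rfl fun σ hσ => by rw [hΔ.finrank_span hσ]
  · rw [← hΔ.coneHull_unitGens hσ, h, hΔ.coneHull_unitGens hσ']

end IsSimplicialFan

end Fans

section QuotientRank

lemma finrank_quotient_map {k E F : Type*} [Ring k] [AddCommGroup E] [Module k E]
    [AddCommGroup F] [Module k F] (Θ : E →ₗ[k] F) {P Q : Submodule k E} (hQP : Q ≤ P)
    (hΘ : Set.InjOn Θ P) :
    Module.finrank k (P.map Θ ⧸ (Q.map Θ).comap (P.map Θ).subtype) =
      Module.finrank k (P ⧸ Q.comap P.subtype) := by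
  let e : P ≃ₗ[k] P.map Θ := LinearEquiv.ofBijective (Θ.submoduleMap P)
    ⟨fun x y hxy => Subtype.ext (hΘ x.2 y.2 (congrArg Subtype.val hxy)),
      Θ.submoduleMap_surjective P⟩
  refine (Submodule.Quotient.equiv _ _ e ?_).symm.finrank_eq
  ext ⟨y, hy⟩
  constructor
  · rintro ⟨x, hx, hxy⟩
    exact ⟨x, hx, congrArg Subtype.val hxy⟩
  · rintro ⟨x, hx, hxy⟩
    exact ⟨⟨x, hQP hx⟩, hx, Subtype.ext hxy⟩

lemma irrelevantPart_le_homogeneousPart {σ X k : Type*} [CommRing k]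
    (M : Submodule (MvPolynomial σ k) (X → MvPolynomial σ k)) (t : ℕ) :
    irrelevantPart M t ≤ homogeneousPart M t := by
  refine Submodule.span_le.2 ?_
  rintro _ ⟨i, s, rfl, f, hf, rfl⟩
  exact add_comm 1 s ▸ smul_mem_homogeneousPart (MvPolynomial.isHomogeneous_X k i) hf

end QuotientRank

section FamilyFunction

lemma IsCompleteSimplicial.mem_span_inter {V : Type*} [AddCommGroup V] [Module ℝ V] [DecidableEq V]
    {K : Finset (Finset V)} (hK : IsCompleteSimplicial K) {S T : Finset V} {x : V} (hS : S ∈ K)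
    (hT : T ∈ K) (hxS : x ∈ coneHull S) (hxT : x ∈ coneHull T) :
    x ∈ Submodule.span ℝ (↑(S ∩ T) : Set V) := by
  rw [← (hK.isBasis S hS).sum_coord_smul x]
  refine Submodule.sum_mem _ fun z hzS => ?_
  by_cases hzT : z ∈ T
  · exact Submodule.smul_mem _ _ (Submodule.subset_span (by simp [hzS, hzT]))
  · simp [hK.coord_eq S hS T hT x hxS hxT z, coord_of_notMem hzT]

variable {ι : Type*} {K : Finset (Finset (ι → ℝ))} {S : Finset (ι → ℝ)} {x : ι → ℝ}
  {f g : Finset (ι → ℝ) → MvPolynomial ι ℝ}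

/-- A generator set of `K` whose cone contains `x`, chosen arbitrarily; it is a junk value when no
cone of `K` contains `x`. -/
noncomputable def coneAt (K : Finset (Finset (ι → ℝ))) (x : ι → ℝ) : Finset (ι → ℝ) :=
  Classical.epsilon fun S => S ∈ K ∧ x ∈ coneHull S

/-- The function glued from a family of polynomials indexed by generator sets: at `x` it takes the
value of the polynomial attached to the chosen cone around `x`. -/
noncomputable def familyFunction (K : Finset (Finset (ι → ℝ))) :
    (Finset (ι → ℝ) → MvPolynomial ι ℝ) →ₗ[ℝ] ((ι → ℝ) → ℝ) where
  toFun f x := MvPolynomial.eval x (f (coneAt K x))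
  map_add' f g := by ext x; simp
  map_smul' c f := by ext x; simp

lemma familyFunction_smul (p : MvPolynomial ι ℝ) (f : Finset (ι → ℝ) → MvPolynomial ι ℝ) :
    familyFunction K (p • f) = fun x => MvPolynomial.eval x p * familyFunction K f x := by
  ext x
  simp [familyFunction]

namespace IsCompleteSimplicial

lemma coneAt_spec (hK : IsCompleteSimplicial K) (x : ι → ℝ) :
    coneAt K x ∈ K ∧ x ∈ coneHull (coneAt K x) :=
  Classical.epsilon_spec (hK.exists_mem_coneHull x)

lemma familyFunction_apply [Fintype ι] (hK : IsCompleteSimplicial K)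
    (hf : f ∈ compatibleFamilies K) (hS : S ∈ K) (hx : x ∈ coneHull S) :
    familyFunction K f x = MvPolynomial.eval x (f S) := by
  obtain ⟨hT, hxT⟩ := hK.coneAt_spec x
  exact (eval_eq_of_genPullback_eq (hf.2 S hS _ hT) (hK.mem_span_inter hS hT hx hxT)).symm

lemma injOn_familyFunction [Fintype ι] (hK : IsCompleteSimplicial K) :
    Set.InjOn (familyFunction K) (compatibleFamilies K) := fun f hf g hg hfg =>
  compatibleFamilies_ext hf hg fun S hS => genPullback_injective (hK.isBasis S hS) <|
    genPullback_eq_of_eqOn_coneHull fun x hx => by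
      rw [← hK.familyFunction_apply hf hS hx, hfg, hK.familyFunction_apply hg hS hx]

end IsCompleteSimplicial

end FamilyFunction

section Conewise

variable {ι : Type*}

/-- The function `F` restricts on every cone of `Δ` to a polynomial belonging to `P`; the conewise
polynomial functions are the case `P = Set.univ`, their degree `k` part the case where `P` consists
of the homogeneous polynomials of degree `k`. -/
def IsConewise (Δ : Finset (Set (ι → ℝ))) (P : Set (MvPolynomial ι ℝ)) (F : (ι → ℝ) → ℝ) : Prop :=
  ∀ σ ∈ Δ, ∃ p ∈ P, ∀ x ∈ σ, F x = MvPolynomial.eval x p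

variable [Fintype ι] {Δ : Finset (Set (ι → ℝ))}

namespace IsSimplicialFan

lemma isConewise_familyFunction (hΔ : IsSimplicialFan Δ) (hcomplete : IsCompleteFan Δ)
    {P : Set (MvPolynomial ι ℝ)} {f : Finset (ι → ℝ) → MvPolynomial ι ℝ}
    (hf : f ∈ compatibleFamilies (maximalGens Δ)) (hfP : ∀ S, f S ∈ P) :
    IsConewise Δ P (familyFunction (maximalGens Δ) f) := fun σ hσ => by
  obtain ⟨S, hS, hσS⟩ := hΔ.exists_unitGens_subset hcomplete hσ
  refine ⟨f S, hfP S, fun x hx => ?_⟩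
  rw [← hΔ.coneHull_unitGens hσ] at hx
  exact (hΔ.isCompleteSimplicial_maximalGens hcomplete).familyFunction_apply hf hS
    (coneHull_mono hσS hx)

lemma exists_familyFunction_eq (hΔ : IsSimplicialFan Δ) (hcomplete : IsCompleteFan Δ)
    {P : Set (MvPolynomial ι ℝ)} (hP : 0 ∈ P) {F : (ι → ℝ) → ℝ} (hF : IsConewise Δ P F) :
    ∃ f ∈ compatibleFamilies (maximalGens Δ), (∀ S, f S ∈ P) ∧
      familyFunction (maximalGens Δ) f = F := by
  have h_piece (S : Finset (ι → ℝ)) : ∃ p ∈ P, (S ∉ maximalGens Δ → p = 0) ∧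
      (S ∈ maximalGens Δ → ∀ x ∈ coneHull S, F x = MvPolynomial.eval x p) := by
    by_cases hS : S ∈ maximalGens Δ
    · obtain ⟨p, hpP, hp⟩ := hF _ (hΔ.mem_maximalGens.1 hS).2.2
      exact ⟨p, hpP, fun h => absurd hS h, fun _ => hp⟩
    · exact ⟨0, hP, fun _ => rfl, fun h => absurd h hS⟩
  choose f hfP hf_zero hf using h_piece
  refine ⟨f, ⟨hf_zero, fun S hS T hT => genPullback_eq_of_eqOn_coneHull fun x hx => ?_⟩, hfP, ?_⟩
  · rw [← hf S hS x (coneHull_mono Finset.inter_subset_left hx),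
      ← hf T hT x (coneHull_mono Finset.inter_subset_right hx)]
  · ext x
    obtain ⟨hS, hx⟩ := (hΔ.isCompleteSimplicial_maximalGens hcomplete).coneAt_spec x
    exact (hf _ hS x hx).symm

theorem exists_conewise_basis (hΔ : IsSimplicialFan Δ) (hcomplete : IsCompleteFan Δ) :
    ∃ (m : ℕ) (e : Fin m → (ι → ℝ) → ℝ), (∀ i, IsConewise Δ Set.univ (e i)) ∧
      ∀ F, IsConewise Δ Set.univ F → ∃! c : Fin m → MvPolynomial ι ℝ,
        F = fun x => ∑ i, MvPolynomial.eval x (c i) * e i x := by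
  have hK := hΔ.isCompleteSimplicial_maximalGens hcomplete
  have := hK.projective_compatibleFamilies
  have := finite_compatibleFamilies (maximalGens Δ)
  have := (isGradedModule_compatibleFamilies (maximalGens Δ)).free
  let b := Module.finBasis (MvPolynomial ι ℝ) (compatibleFamilies (maximalGens Δ))
  refine ⟨_, fun i => familyFunction (maximalGens Δ) (b i),
    fun i => hΔ.isConewise_familyFunction hcomplete (b i).2 fun _ => trivial, fun F hF => ?_⟩
  obtain ⟨f, hf, -, rfl⟩ := hΔ.exists_familyFunction_eq hcomplete (Set.mem_univ _) hF
  have h_combination (c) : (familyFunction (maximalGens Δ) f = fun x =>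
      ∑ i, MvPolynomial.eval x (c i) * familyFunction (maximalGens Δ) (b i) x) ↔
        b.equivFun.symm c = ⟨f, hf⟩ := by
    have h_sum : familyFunction (maximalGens Δ) (b.equivFun.symm c).1 =
        fun x => ∑ i, MvPolynomial.eval x (c i) * familyFunction (maximalGens Δ) (b i) x := by
      ext x
      simp [Module.Basis.equivFun_symm_apply, familyFunction_smul]
    rw [← h_sum, hK.injOn_familyFunction.eq_iff hf (b.equivFun.symm c).2, Subtype.ext_iff, eq_comm]
  simp only [h_combination]
  exact b.equivFun.symm.bijective.existsUnique ⟨f, hf⟩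

end IsSimplicialFan

end Conewise

section EuclideanFan

variable {d : ℕ} {Δ : Finset (Set (Fin d → ℝ))}

namespace IsSimplicialFan

lemma map_homogeneousPart (hΔ : IsSimplicialFan Δ) (hcomplete : IsCompleteFan Δ) (k : ℕ) :
    (homogeneousPart (compatibleFamilies (maximalGens Δ)) k).map
      (familyFunction (maximalGens Δ)) = conewisePoly d Δ k := by
  ext F
  constructor
  · rintro ⟨f, hf, rfl⟩
    obtain ⟨hf, hfk⟩ := mem_homogeneousPart.1 hf
    exact hΔ.isConewise_familyFunction (P := {p | p.IsHomogeneous k}) hcomplete hf hfk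
  · intro hF
    obtain ⟨f, hf, hfk, rfl⟩ := hΔ.exists_familyFunction_eq (P := {p | p.IsHomogeneous k})
      hcomplete (MvPolynomial.isHomogeneous_zero _ _ _) hF
    exact ⟨f, mem_homogeneousPart.2 ⟨hf, hfk⟩, rfl⟩

lemma map_irrelevantPart (hΔ : IsSimplicialFan Δ) (hcomplete : IsCompleteFan Δ) (k : ℕ) :
    (irrelevantPart (compatibleFamilies (maximalGens Δ)) k).map
      (familyFunction (maximalGens Δ)) = mConewisePoly d Δ k := by
  cases k with
  | zero => simp [irrelevantPart, mConewisePoly]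
  | succ k =>
    apply le_antisymm
    · rw [irrelevantPart, Submodule.map_span, Submodule.span_le]
      rintro _ ⟨_, ⟨i, s, hs, f, hf, rfl⟩, rfl⟩
      obtain rfl : s = k := by omega
      refine Submodule.subset_span ⟨LinearMap.proj i, familyFunction (maximalGens Δ) f, ?_, ?_⟩
      · exact hΔ.map_homogeneousPart hcomplete s ▸ Submodule.mem_map_of_mem hf
      · simp [familyFunction_smul]
    · refine Submodule.span_le.2 ?_
      rintro _ ⟨l, F, hF, rfl⟩
      rw [← hΔ.map_homogeneousPart hcomplete k] at hF
      obtain ⟨f, hf, rfl⟩ := hF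
      refine ⟨linearForm l • f, ?_, by simp only [familyFunction_smul, eval_linearForm]⟩
      have h_mem := smul_mem_irrelevantPart (s := 0) (isHomogeneous_linearForm l) hf
      rwa [zero_add, add_comm] at h_mem

theorem finrank_conewisePoly_quotient (hΔ : IsSimplicialFan Δ) (hcomplete : IsCompleteFan Δ)
    (k : ℕ) :
    Module.finrank ℝ
        (conewisePoly d Δ k ⧸ (mConewisePoly d Δ k).comap (conewisePoly d Δ k).subtype) =
      Module.finrank ℝ (FiberPart (compatibleFamilies (maximalGens Δ)) k) := by
  rw [← hΔ.map_homogeneousPart hcomplete, ← hΔ.map_irrelevantPart hcomplete]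
  exact finrank_quotient_map _ (irrelevantPart_le_homogeneousPart _ k)
    ((hΔ.isCompleteSimplicial_maximalGens hcomplete).injOn_familyFunction.mono
      fun f hf => (mem_homogeneousPart.1 hf).1)

end IsSimplicialFan

end EuclideanFan

/-- For a complete simplicial fan `Δ` in `ℝ^d`: the ring of conewise polynomial
functions `A(Δ)` is a free module over the polynomial ring `A` (stated as the
existence of finitely many conewise polynomial functions through which every
conewise polynomial function is uniquely expressed with polynomial
coefficients), and the Hilbert function of `Ā(Δ) = A(Δ)/m·A(Δ)` is given by
`∑_{σ ∈ Δ} (t-1)^{d - dim σ}`. -/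
theorem conewise_polynomials_free_hilbert (d : ℕ) (hd : 1 ≤ d)
    (Δ : Finset (Set (Fin d → ℝ))) (hΔ : IsCompleteFan Δ)
    (hsimp : IsSimplicialFan Δ) :
    (∃ (m : ℕ) (e : Fin m → ((Fin d → ℝ) → ℝ)),
      (∀ i : Fin m, ∀ σ ∈ Δ, ∃ p : MvPolynomial (Fin d) ℝ,
        ∀ x ∈ σ, e i x = MvPolynomial.eval x p) ∧
      (∀ f : (Fin d → ℝ) → ℝ,
        (∀ σ ∈ Δ, ∃ p : MvPolynomial (Fin d) ℝ, ∀ x ∈ σ, f x = MvPolynomial.eval x p) →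
        ∃! c : Fin m → MvPolynomial (Fin d) ℝ,
          f = fun x => ∑ i, MvPolynomial.eval x (c i) * e i x)) ∧
    (∀ k : ℕ,
      (Module.finrank ℝ
          (↥(conewisePoly d Δ k) ⧸
            (mConewisePoly d Δ k).comap (conewisePoly d Δ k).subtype) : ℚ) =
        (∑ σ ∈ Δ, ((Polynomial.X : Polynomial ℚ) - 1) ^
            (d - Module.finrank ℝ (Submodule.span ℝ σ))).coeff k) := by
  constructor
  · simpa only [IsConewise, Set.mem_univ, true_and] using hsimp.exists_conewise_basis hΔ
  · intro k
    rw [hsimp.finrank_conewisePoly_quotient hΔ,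
      (hsimp.isCompleteSimplicial_maximalGens hΔ).finrank_fiberPart, Fintype.card_fin,
      hsimp.sum_finrank_span hΔ fun n => (X - 1 : ℚ[X]) ^ (d - n)]
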